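/- Let Ω₁, Ω₂ ⊂ ℂⁿ (n ≥ 2) be bounded domains and let f : Ω₁ → Ω₂ be a rough isometric embedding with respect to the Kobayashi distances. Suppose there are open sets U₁, U₂ ⊆ ℂⁿ with Uᵢ ∩ ∂Ωᵢ ≠ ∅ (i = 1,2) such that Ω₁ ∩ U₁ is a log-type convex domain all of whose boundary points are Dini-smooth, and Ω₂ ∩ U₂ is a log-type ℂ-convex domain all of whose boundary points are Dini-smooth. If ξ ∈ ∂Ω₁ ∩ U₁, ζ ∈ ∂Ω₂ ∩ U₂ and ζ belongs to the cluster set C(f,ξ), then f extends continuously to ξ, i.e. f(z) → ζ as z → ξ in Ω₁. -/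

import Mathlib

open Metric Set MeasureTheory Filter Topology

noncomputable section

variable {E : Type*} [NormedAddCommGroup E] [NormedSpace ℂ E]

/-- Distance from `x` to the boundary of `D`. -/
def bdist (D : Set E) (x : E) : ℝ := Metric.infDist x (frontier D)

/-- Distance from `x` to the boundary of `D` along the complex line `x + ℂ v`. -/
def bdistDir (D : Set E) (x v : E) : ℝ :=
  Metric.infDist x (frontier D ∩ {w | ∃ c : ℂ, w = x + c • v})

/-- The infinitesimal Kobayashi (pseudo-)metric of `D ⊆ E`. -/
def kobMetric (D : Set E) (x v : E) : ℝ :=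
  sInf { r : ℝ | ∃ (f : ℂ → E) (ξ : ℂ),
    DifferentiableOn ℂ f (ball (0:ℂ) 1) ∧ MapsTo f (ball (0:ℂ) 1) D ∧
    f 0 = x ∧ ξ • derivWithin f (ball (0:ℂ) 1) 0 = v ∧ r = ‖ξ‖ }

/-- `σ` is absolutely continuous on `[a,b]`, with a.e. derivative `g`. -/
def IsACWithDeriv (σ g : ℝ → E) (a b : ℝ) : Prop :=
  IntervalIntegrable g volume a b ∧
  ∀ t ∈ Icc a b, σ t = σ a + ∫ s in a..t, g s

/-- The Kobayashi pseudo-distance of `D`, defined via lengths of absolutely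
continuous curves (Venturini's description). -/
def kobDist (D : Set E) (x y : E) : ℝ :=
  sInf { r : ℝ | ∃ (a b : ℝ) (σ g : ℝ → E), a ≤ b ∧
    IsACWithDeriv σ g a b ∧ MapsTo σ (Icc a b) D ∧ σ a = x ∧ σ b = y ∧
    r = ∫ t in a..b, kobMetric D (σ t) (g t) }

/-- Log-type convex domain, with explicit constants `C, ν > 0`. -/
def LogTypeConvexWith (D : Set E) (C ν : ℝ) : Prop :=
  IsOpen D ∧ D.Nonempty ∧ Bornology.IsBounded D ∧ Convex ℝ D ∧ 0 < C ∧ 0 < ν ∧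
  ∀ z ∈ D, ∀ v : E, v ≠ 0 →
    bdistDir D z v ≤ C / |Real.log (bdist D z)| ^ (1 + ν)

/-- Log-type convex domain. -/
def LogTypeConvex (D : Set E) : Prop := ∃ C ν : ℝ, LogTypeConvexWith D C ν

/-- A `ℂ`-convex set: every nonempty intersection with a complex affine line is
connected and simply connected. -/
def CConvex (D : Set E) : Prop :=
  ∀ z v : E, v ≠ 0 → (D ∩ {w | ∃ c : ℂ, w = z + c • v}).Nonempty →
    IsConnected (D ∩ {w | ∃ c : ℂ, w = z + c • v}) ∧
    SimplyConnectedSpace ↥(D ∩ {w | ∃ c : ℂ, w = z + c • v})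

/-- Log-type `ℂ`-convex domain. -/
def LogTypeCConvex (D : Set E) : Prop :=
  IsOpen D ∧ D.Nonempty ∧ Bornology.IsBounded D ∧ CConvex D ∧
  ∃ C ν : ℝ, 0 < C ∧ 0 < ν ∧
    ∀ z ∈ D, ∀ v : E, v ≠ 0 →
      bdistDir D z v ≤ C / |Real.log (bdist D z)| ^ (1 + ν)

/-- `σ : [a,b] → D` (with a.e. derivative `g`) is a `(λ,κ)`-almost geodesic for the
Kobayashi distance of `D`. -/
def AlmostGeodesicOn (D : Set E) (lam kap : ℝ) (σ g : ℝ → E) (a b : ℝ) : Prop :=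
  MapsTo σ (Icc a b) D ∧ IsACWithDeriv σ g a b ∧
  (∀ s ∈ Icc a b, ∀ t ∈ Icc a b,
    (1 / lam) * |t - s| - kap ≤ kobDist D (σ s) (σ t) ∧
    kobDist D (σ s) (σ t) ≤ lam * |t - s| + kap) ∧
  (∀ᵐ t ∂volume, t ∈ Icc a b → kobMetric D (σ t) (g t) ≤ lam)

/-- `σ : [a,b] → D` is a `C`-rough geodesic for the Kobayashi distance of `D`. -/
def RoughGeodesicOn (D : Set E) (C : ℝ) (σ : ℝ → E) (a b : ℝ) : Prop :=
  MapsTo σ (Icc a b) D ∧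
  ∀ s ∈ Icc a b, ∀ t ∈ Icc a b,
    |t - s| - C ≤ kobDist D (σ s) (σ t) ∧ kobDist D (σ s) (σ t) ≤ |t - s| + C

/-- `ρ` is a `C¹` local defining function for `D` near `ξ` on the open set `W`. -/
def IsLocalDefiningFn (D : Set E) (ξ : E) (W : Set E) (ρ : E → ℝ) : Prop :=
  IsOpen W ∧ ξ ∈ W ∧ ContDiffOn ℝ 1 ρ W ∧ (∀ x ∈ W, fderiv ℝ ρ x ≠ 0) ∧
  D ∩ W = {x ∈ W | ρ x < 0} ∧ frontier D ∩ W = {x ∈ W | ρ x = 0}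

/-- `ξ` is a Dini-smooth boundary point of `D`: the boundary is `C¹` near `ξ` and the
unit normal admits a modulus of continuity `ω` satisfying the Dini condition. -/
def DiniSmoothBoundaryPoint (D : Set E) (ξ : E) : Prop :=
  ∃ (W : Set E) (ρ : E → ℝ) (ω : ℝ → ℝ),
    IsLocalDefiningFn D ξ W ρ ∧
    (∀ t ∈ Icc (0:ℝ) 1, 0 ≤ ω t) ∧ MonotoneOn ω (Icc (0:ℝ) 1) ∧
    IntegrableOn (fun t => ω t / t) (Ioc (0:ℝ) 1) ∧
    ∀ x ∈ frontier D ∩ W, ∀ y ∈ frontier D ∩ W, ‖x - y‖ ≤ 1 →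
      ‖(‖fderiv ℝ ρ x‖)⁻¹ • fderiv ℝ ρ x - (‖fderiv ℝ ρ y‖)⁻¹ • fderiv ℝ ρ y‖ ≤ ω ‖x - y‖

/-- `D` has `C^{1,ε}` boundary: near every boundary point there is a `C¹` defining
function whose differential is `ε`-Hölder. -/
def HolderC1Boundary (D : Set E) (ε : ℝ) : Prop :=
  ∀ ξ ∈ frontier D, ∃ (W : Set E) (ρ : E → ℝ) (M : ℝ), 0 < M ∧
    IsLocalDefiningFn D ξ W ρ ∧
    ∀ x ∈ W, ∀ y ∈ W, ‖fderiv ℝ ρ x - fderiv ℝ ρ y‖ ≤ M * ‖x - y‖ ^ ε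

/-- The complex affine tangent hyperplane of `∂D` at `x`, computed from a local
defining function `ρ`. -/
def complexTangentHyperplane (ρ : E → ℝ) (x : E) : Set E :=
  {w : E | fderiv ℝ ρ x (w - x) = 0 ∧ fderiv ℝ ρ x ((Complex.I : ℂ) • (w - x)) = 0}

/-- The Gromov product of `x` and `y` with respect to the base point `o`, for the
Kobayashi distance of `D`. -/
def gromovProd (D : Set E) (o x y : E) : ℝ :=
  (kobDist D x o + kobDist D o y - kobDist D x y) / 2

end

/-!
The Gromov product of two points of `Ω₂` is bounded as long as one of them stays near `ζ` and the
other away from it: a nearly length-minimizing curve between them has to cross the region near the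
boundary where the log-type condition makes the Kobayashi metric so large that the curve must dip
back to a fixed compact set (visibility).

At `ξ`, on the contrary, Gromov products of pairs of points tending to `ξ` blow up. Convexity gives
`K(z, o) ≥ ½ log (1 / δ(z)) - H`. Dini smoothness lets one place, inside `Ω₁` and along the inner
normal at the foot point of `z`, discs tangent to the boundary up to an integrable error, so that
moving inward from height `δ` to height `s` costs only `½ log (s / δ) + O(1)`, and hence
`K(z, w) ≤ log s - ½ log δ(z) - ½ log δ(w) + O(1)` when `z` and `w` lie within `s` of `ξ`.

A rough isometric embedding changes Gromov products by a bounded amount. If `f(z)` is near `ζ` for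
some `z` close to `ξ`, then `f(w)` cannot be away from `ζ` for `w` close to `ξ`.
-/

section NormedSpace

variable {E : Type*} [NormedAddCommGroup E] [NormedSpace ℂ E]

/-! ### The Kobayashi metric -/

/-- An analytic disc `f : 𝔻 → D` centred at `x` with `df₀(ξ) = v`, i.e. a competitor in the
definition of `kobMetric D x v`. -/
structure IsKobayashiDisc (D : Set E) (x v : E) (f : ℂ → E) (ξ : ℂ) : Prop where
  differentiableOn : DifferentiableOn ℂ f (ball 0 1)
  mapsTo : MapsTo f (ball 0 1) D
  map_zero : f 0 = x
  smul_deriv : ξ • deriv f 0 = v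

theorem IsKobayashiDisc.hasDerivAt {D : Set E} {x v : E} {f : ℂ → E} {ξ : ℂ}
    (h : IsKobayashiDisc D x v f ξ) : HasDerivAt f (deriv f 0) 0 :=
  (h.differentiableOn.differentiableAt (isOpen_ball.mem_nhds (mem_ball_self one_pos))).hasDerivAt

theorem kobMetric_eq_sInf (D : Set E) (x v : E) :
    kobMetric D x v = sInf {r | ∃ f ξ, IsKobayashiDisc D x v f ξ ∧ r = ‖ξ‖} := by
  have hderiv (f : ℂ → E) : derivWithin f (ball (0 : ℂ) 1) 0 = deriv f 0 :=
    derivWithin_of_isOpen isOpen_ball (mem_ball_self one_pos)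
  simp only [kobMetric, hderiv]
  congr 1
  ext r
  exact ⟨fun ⟨f, ξ, hf, hD, h0, hv, hr⟩ => ⟨f, ξ, ⟨hf, hD, h0, hv⟩, hr⟩,
    fun ⟨f, ξ, ⟨hf, hD, h0, hv⟩, hr⟩ => ⟨f, ξ, hf, hD, h0, hv, hr⟩⟩

theorem kobMetric_nonneg (D : Set E) (x v : E) : 0 ≤ kobMetric D x v := by
  rw [kobMetric_eq_sInf]
  apply Real.sInf_nonneg
  rintro _ ⟨f, ξ, -, rfl⟩
  exact norm_nonneg ξ

theorem IsKobayashiDisc.kobMetric_le {D : Set E} {x v : E} {f : ℂ → E} {ξ : ℂ}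
    (h : IsKobayashiDisc D x v f ξ) : kobMetric D x v ≤ ‖ξ‖ := by
  rw [kobMetric_eq_sInf]
  refine csInf_le ⟨0, ?_⟩ ⟨f, ξ, h, rfl⟩
  rintro _ ⟨f, ξ, -, rfl⟩
  exact norm_nonneg ξ

theorem isKobayashiDisc_comp_mul {D : Set E} {f : ℂ → E} {τ : ℝ} (hτ : 0 < τ)
    (hf : DifferentiableOn ℂ f (ball 0 τ)) (hfD : MapsTo f (ball 0 τ) D) (ξ : ℂ) :
    IsKobayashiDisc D (f 0) (ξ • deriv f 0) (fun z => f (τ * z)) (ξ / τ) := by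
  have hscale : MapsTo (fun z : ℂ => (τ : ℂ) * z) (ball 0 1) (ball 0 τ) := by
    intro z hz
    rw [mem_ball_zero_iff] at hz ⊢
    rw [norm_mul, Complex.norm_real, Real.norm_of_nonneg hτ.le]
    exact mul_lt_of_lt_one_right hτ hz
  refine ⟨hf.comp (by fun_prop) hscale, hfD.comp hscale, by simp, ?_⟩
  rw [deriv_comp_mul_left, mul_zero, smul_smul, div_mul_cancel₀]
  exact_mod_cast hτ.ne'

theorem kobMetric_le_div_of_mapsTo_ball {D : Set E} {f : ℂ → E} {τ : ℝ} (hτ : 0 < τ)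
    (hf : DifferentiableOn ℂ f (ball 0 τ)) (hfD : MapsTo f (ball 0 τ) D) (ξ : ℂ) :
    kobMetric D (f 0) (ξ • deriv f 0) ≤ ‖ξ‖ / τ := by
  simpa [abs_of_pos hτ] using (isKobayashiDisc_comp_mul hτ hf hfD ξ).kobMetric_le

theorem hasDerivAt_add_smul (x v : E) (z : ℂ) : HasDerivAt (fun z : ℂ => x + z • v) v z := by
  simpa using ((hasDerivAt_id z).smul_const v).const_add x

theorem exists_isKobayashiDisc_of_ball_subset {D : Set E} {x : E} {r : ℝ} (hr : 0 < r)
    (hball : ball x r ⊆ D) (v : E) : ∃ f ξ, IsKobayashiDisc D x v f ξ ∧ ‖ξ‖ = ‖v‖ / r := by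
  rcases eq_or_ne v 0 with rfl | hv
  · exact ⟨fun _ => x, 0, ⟨by fun_prop, fun _ _ => hball (mem_ball_self hr), rfl, by simp⟩, by simp⟩
  have hv' : 0 < ‖v‖ := norm_pos_iff.mpr hv
  have hmaps : MapsTo (fun z : ℂ => x + z • v) (ball 0 (r / ‖v‖)) D := by
    refine fun z hz => hball ?_
    rw [mem_ball_zero_iff, lt_div_iff₀ hv'] at hz
    rwa [mem_ball_iff_norm, add_sub_cancel_left, norm_smul]
  have hdisc := isKobayashiDisc_comp_mul (div_pos hr hv') (by fun_prop) hmaps 1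
  rw [(hasDerivAt_add_smul x v 0).deriv, zero_smul, add_zero, one_smul] at hdisc
  exact ⟨_, _, hdisc, by simp [abs_of_pos hr]⟩

theorem kobMetric_le_norm_div {D : Set E} {x : E} {r : ℝ} (hr : 0 < r) (hball : ball x r ⊆ D)
    (v : E) : kobMetric D x v ≤ ‖v‖ / r := by
  obtain ⟨f, ξ, hf, hξ⟩ := exists_isKobayashiDisc_of_ball_subset hr hball v
  exact hξ ▸ hf.kobMetric_le

theorem exists_isKobayashiDisc_norm_lt {D : Set E} (hD : IsOpen D) {x v : E} (hx : x ∈ D) {r : ℝ}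
    (hr : kobMetric D x v < r) : ∃ f ξ, IsKobayashiDisc D x v f ξ ∧ ‖ξ‖ < r := by
  obtain ⟨ε, hε, hball⟩ := Metric.isOpen_iff.mp hD x hx
  obtain ⟨f₀, ξ₀, h₀, -⟩ := exists_isKobayashiDisc_of_ball_subset hε hball v
  rw [kobMetric_eq_sInf] at hr
  obtain ⟨_, ⟨f, ξ, hf, rfl⟩, hlt⟩ := exists_lt_of_csInf_lt (by exact ⟨_, f₀, ξ₀, h₀, rfl⟩) hr
  exact ⟨f, ξ, hf, hlt⟩

theorem le_kobMetric {D : Set E} (hD : IsOpen D) {x v : E} (hx : x ∈ D) {c : ℝ}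
    (h : ∀ f ξ, IsKobayashiDisc D x v f ξ → c ≤ ‖ξ‖) : c ≤ kobMetric D x v := by
  by_contra! hlt
  obtain ⟨f, ξ, hf, hξ⟩ := exists_isKobayashiDisc_norm_lt hD hx hlt
  exact (h f ξ hf).not_gt hξ

theorem kobMetric_anti {D D' : Set E} (hD : IsOpen D) (hDD' : D ⊆ D') {x : E} (hx : x ∈ D)
    (v : E) : kobMetric D' x v ≤ kobMetric D x v :=
  le_kobMetric hD hx fun _ ξ hf =>
    (show IsKobayashiDisc D' x v _ ξ from
      { hf with mapsTo := hf.mapsTo.mono_right hDD' }).kobMetric_le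

theorem kobMetric_neg {D : Set E} (hD : IsOpen D) {x : E} (hx : x ∈ D) (v : E) :
    kobMetric D x (-v) = kobMetric D x v := by
  have hle (v : E) : kobMetric D x (-v) ≤ kobMetric D x v := by
    refine le_kobMetric hD hx fun f ξ hf => ?_
    have hneg : IsKobayashiDisc D x (-v) f (-ξ) :=
      { hf with smul_deriv := by rw [neg_smul, hf.smul_deriv] }
    exact norm_neg ξ ▸ hneg.kobMetric_le
  exact le_antisymm (hle v) (by simpa only [neg_neg] using hle (-v))

theorem exists_isKobayashiDisc_norm_lt_ne_zero {D : Set E} (hD : IsOpen D) {x v : E} (hx : x ∈ D)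
    {r : ℝ} (hr : kobMetric D x v < r) :
    ∃ f ξ, IsKobayashiDisc D x v f ξ ∧ ‖ξ‖ < r ∧ ξ ≠ 0 := by
  obtain ⟨f, ξ, hf, hξ⟩ := exists_isKobayashiDisc_norm_lt hD hx hr
  rcases eq_or_ne ξ 0 with rfl | hne
  · have hrpos : 0 < r := (kobMetric_nonneg D x v).trans_lt hr
    have hv : v = 0 := by rw [← hf.smul_deriv, zero_smul]
    refine ⟨fun _ => x, ((r / 2 : ℝ) : ℂ), ⟨by fun_prop, fun _ _ => hx, rfl, by simp [hv]⟩, ?_, ?_⟩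
    · rw [Complex.norm_real, Real.norm_of_nonneg (half_pos hrpos).le]
      exact half_lt_self hrpos
    · exact_mod_cast (half_pos hrpos).ne'
  · exact ⟨f, ξ, hf, hξ, hne⟩

theorem kobMetric_perturb_le {D : Set E} {x v : E} {f : ℂ → E} {ξ : ℂ}
    (hf : IsKobayashiDisc D x v f ξ) (hξ : ξ ≠ 0) {τ δ : ℝ} (hτ : 0 < τ) (hτ1 : τ ≤ 1)
    (hthick : thickening δ (f '' closedBall 0 τ) ⊆ D) {x' v' : E}
    (hclose : ‖x' - x‖ + ‖ξ⁻¹ • (v' - v)‖ < δ) : kobMetric D x' v' ≤ ‖ξ‖ / τ := by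
  set w := ξ⁻¹ • (v' - v) with hw
  set F : ℂ → E := fun z => f z + ((x' - x) + z • w) with hF
  have hderiv : deriv F 0 = deriv f 0 + w :=
    (hf.hasDerivAt.fun_add (hasDerivAt_add_smul (x' - x) w 0)).deriv
  have hmaps : MapsTo F (ball 0 τ) D := by
    refine fun z hz => hthick (mem_thickening_iff.mpr
      ⟨f z, mem_image_of_mem _ (ball_subset_closedBall hz), ?_⟩)
    have hz1 : ‖z‖ ≤ 1 := (mem_ball_zero_iff.mp hz).le.trans hτ1
    rw [dist_eq_norm, hF, add_sub_cancel_left]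
    calc ‖x' - x + z • w‖ ≤ ‖x' - x‖ + ‖z‖ * ‖w‖ := norm_smul z w ▸ norm_add_le _ _
      _ ≤ ‖x' - x‖ + ‖w‖ := by gcongr; exact mul_le_of_le_one_left (norm_nonneg _) hz1
      _ < δ := hclose
  have hdiff : DifferentiableOn ℂ F (ball 0 τ) :=
    (hf.differentiableOn.mono (ball_subset_ball hτ1)).add (by fun_prop)
  have hv' : ξ • deriv F 0 = v' := by
    rw [hderiv, smul_add, hf.smul_deriv, hw, smul_inv_smul₀ hξ, add_sub_cancel]
  have hF0 : F 0 = x' := by simp [hF, hf.map_zero]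
  exact hF0 ▸ hv' ▸ kobMetric_le_div_of_mapsTo_ball hτ hdiff hmaps ξ

theorem eventually_kobMetric_lt {D : Set E} (hD : IsOpen D) {x v : E} (hx : x ∈ D) {r : ℝ}
    (hr : kobMetric D x v < r) : ∀ᶠ p : E × E in 𝓝 (x, v), kobMetric D p.1 p.2 < r := by
  have hrpos : 0 < r := (kobMetric_nonneg D x v).trans_lt hr
  obtain ⟨f, ξ, hf, hξr, hξ⟩ := exists_isKobayashiDisc_norm_lt_ne_zero hD hx hr
  obtain ⟨τ, hτr, hτ1⟩ := exists_between ((div_lt_one hrpos).mpr hξr)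
  have hτ : 0 < τ := (div_nonneg (norm_nonneg ξ) hrpos.le).trans_lt hτr
  have hsub : closedBall (0 : ℂ) τ ⊆ ball 0 1 := closedBall_subset_ball hτ1
  have hcompact : IsCompact (f '' closedBall 0 τ) :=
    (isCompact_closedBall 0 τ).image_of_continuousOn (hf.differentiableOn.continuousOn.mono hsub)
  obtain ⟨δ, hδ, hthick⟩ := hcompact.exists_thickening_subset_open hD
    (hf.mapsTo.mono_left hsub).image_subset
  have hlim : Tendsto (fun p : E × E => ‖p.1 - x‖ + ‖ξ⁻¹ • (p.2 - v)‖) (𝓝 (x, v)) (𝓝 0) := by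
    have hcont : Continuous fun p : E × E => ‖p.1 - x‖ + ‖ξ⁻¹ • (p.2 - v)‖ := by fun_prop
    simpa using hcont.tendsto (x, v)
  filter_upwards [hlim.eventually (gt_mem_nhds hδ)] with p hp
  exact (kobMetric_perturb_le hf hξ hτ hτ1.le hthick hp).trans_lt ((div_lt_comm₀ hrpos hτ).mp hτr)

/-! ### Curves and the Kobayashi distance -/

theorem IsACWithDeriv.continuousOn {σ g : ℝ → E} {a b : ℝ} (hab : a ≤ b)
    (h : IsACWithDeriv σ g a b) : ContinuousOn σ (Icc a b) := by
  have hprim : ContinuousOn (fun t => ∫ s in a..t, g s) (Icc a b) :=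
    uIcc_of_le hab ▸ intervalIntegral.continuousOn_primitive_interval' h.1 left_mem_uIcc
  exact (continuousOn_const.add hprim).congr h.2

theorem intervalIntegrable_of_le_of_le {F : Type*} [NormedAddCommGroup F] {k : ℝ → F}
    {a b s t : ℝ} (h : IntervalIntegrable k volume a b) (has : a ≤ s) (hst : s ≤ t) (htb : t ≤ b) :
    IntervalIntegrable k volume s t := by
  refine h.mono_set ?_
  rw [uIcc_of_le hst, uIcc_of_le (has.trans (hst.trans htb))]
  exact Icc_subset_Icc has htb

theorem IsACWithDeriv.eq_add_integral {σ g : ℝ → E} {a b s t : ℝ} (h : IsACWithDeriv σ g a b)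
    (hs : s ∈ Icc a b) (ht : t ∈ Icc a b) : σ t = σ s + ∫ u in s..t, g u := by
  have hint {u : ℝ} (hu : u ∈ Icc a b) : IntervalIntegrable g volume a u :=
    intervalIntegrable_of_le_of_le h.1 le_rfl hu.1 hu.2
  rw [h.2 t ht, h.2 s hs, add_assoc, intervalIntegral.integral_add_adjacent_intervals (hint hs)
    ((hint hs).symm.trans (hint ht))]

theorem IsACWithDeriv.mono {σ g : ℝ → E} {a b s t : ℝ} (h : IsACWithDeriv σ g a b)
    (has : a ≤ s) (hst : s ≤ t) (htb : t ≤ b) : IsACWithDeriv σ g s t :=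
  ⟨intervalIntegrable_of_le_of_le h.1 has hst htb, fun _ hu =>
    h.eq_add_integral ⟨has, hst.trans htb⟩ ⟨has.trans hu.1, hu.2.trans htb⟩⟩

theorem IsACWithDeriv.congr {σ g σ' g' : ℝ → E} {a b : ℝ} (hab : a ≤ b)
    (h : IsACWithDeriv σ g a b) (hσ : EqOn σ σ' (Icc a b)) (hg : EqOn g g' (Ioc a b)) :
    IsACWithDeriv σ' g' a b := by
  refine ⟨h.1.congr (by rwa [uIoc_of_le hab]), fun t ht => ?_⟩
  rw [← hσ ht, ← hσ (left_mem_Icc.mpr hab), h.2 t ht]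
  congr 1
  refine intervalIntegral.integral_congr_ae (.of_forall fun u hu => hg ?_)
  rw [uIoc_of_le ht.1] at hu
  exact ⟨hu.1, hu.2.trans ht.2⟩

theorem IsACWithDeriv.trans {σ g : ℝ → E} {a b c : ℝ} (hab : a ≤ b)
    (h : IsACWithDeriv σ g a b) (h' : IsACWithDeriv σ g b c) : IsACWithDeriv σ g a c := by
  refine ⟨h.1.trans h'.1, fun t ht => ?_⟩
  rcases le_total t b with htb | hbt
  · exact h.2 t ⟨ht.1, htb⟩
  · rw [h'.2 t ⟨hbt, ht.2⟩, h.2 b ⟨hab, le_rfl⟩, add_assoc,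
      intervalIntegral.integral_add_adjacent_intervals h.1
        (intervalIntegrable_of_le_of_le h'.1 le_rfl hbt ht.2)]

/-- An absolutely continuous curve `σ : [a, b] → D` with a.e. derivative `g`: one of the curves
over which `kobDist` is an infimum. -/
structure IsACCurveIn (D : Set E) (σ g : ℝ → E) (a b : ℝ) : Prop where
  le : a ≤ b
  ac : IsACWithDeriv σ g a b
  mapsTo : MapsTo σ (Icc a b) D

/-- The Kobayashi length over `[a, b]` of a curve `σ` with derivative `g`. -/
noncomputable def kobLength (D : Set E) (σ g : ℝ → E) (a b : ℝ) : ℝ :=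
  ∫ t in a..b, kobMetric D (σ t) (g t)

theorem kobLength_nonneg (D : Set E) (σ g : ℝ → E) {a b : ℝ} (hab : a ≤ b) :
    0 ≤ kobLength D σ g a b :=
  intervalIntegral.integral_nonneg hab fun _ _ => kobMetric_nonneg _ _ _

theorem kobLength_congr {D : Set E} {σ g σ' g' : ℝ → E} {a b : ℝ} (hab : a ≤ b)
    (hσ : EqOn σ σ' (Ioc a b)) (hg : EqOn g g' (Ioc a b)) :
    kobLength D σ g a b = kobLength D σ' g' a b := by
  refine intervalIntegral.integral_congr_ae (.of_forall fun t ht => ?_)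
  rw [uIoc_of_le hab] at ht
  rw [hσ ht, hg ht]

theorem kobLength_comp_sub_right (D : Set E) (σ g : ℝ → E) (a b c : ℝ) :
    kobLength D (fun t => σ (t - c)) (fun t => g (t - c)) (a + c) (b + c) =
      kobLength D σ g a b := by
  rw [kobLength, intervalIntegral.integral_comp_sub_right (fun t => kobMetric D (σ t) (g t)),
    add_sub_cancel_right, add_sub_cancel_right, kobLength]

namespace IsACCurveIn

variable {D : Set E} {σ g : ℝ → E} {a b : ℝ}

theorem continuousOn (h : IsACCurveIn D σ g a b) : ContinuousOn σ (Icc a b) :=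
  h.ac.continuousOn h.le

theorem mono (h : IsACCurveIn D σ g a b) {s t : ℝ} (has : a ≤ s) (hst : s ≤ t) (htb : t ≤ b) :
    IsACCurveIn D σ g s t :=
  ⟨hst, h.ac.mono has hst htb, h.mapsTo.mono_left (Icc_subset_Icc has htb)⟩

theorem kobDist_le (h : IsACCurveIn D σ g a b) :
    kobDist D (σ a) (σ b) ≤ kobLength D σ g a b := by
  refine csInf_le ⟨0, ?_⟩ ⟨a, b, σ, g, h.le, h.ac, h.mapsTo, rfl, rfl, rfl⟩
  rintro _ ⟨a, b, σ, g, hab, -, -, -, -, rfl⟩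
  exact kobLength_nonneg D σ g hab

theorem comp_neg (h : IsACCurveIn D σ g a b) :
    IsACCurveIn D (fun t => σ (-t)) (fun t => -g (-t)) (-b) (-a) := by
  have hmem {t : ℝ} (ht : t ∈ Icc (-b) (-a)) : -t ∈ Icc a b :=
    ⟨le_neg_of_le_neg ht.2, neg_le_of_neg_le ht.1⟩
  refine ⟨neg_le_neg h.le, ⟨?_, fun t ht => ?_⟩, fun t ht => h.mapsTo (hmem ht)⟩
  · have hint := (h.ac.1.symm.comp_sub_left 0).neg
    simp only [zero_sub] at hint
    exact hint
  · beta_reduce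
    rw [neg_neg, intervalIntegral.integral_neg, intervalIntegral.integral_comp_neg fun s => g s,
      neg_neg, intervalIntegral.integral_symm, neg_neg]
    exact h.ac.eq_add_integral (right_mem_Icc.mpr h.le) (hmem ht)

theorem kobLength_comp_neg (hD : IsOpen D) (h : IsACCurveIn D σ g a b) :
    kobLength D (fun t => σ (-t)) (fun t => -g (-t)) (-b) (-a) = kobLength D σ g a b := by
  have hneg : EqOn (fun t => kobMetric D (σ (-t)) (-g (-t)))
      (fun t => kobMetric D (σ (-t)) (g (-t))) (uIcc (-b) (-a)) := by
    intro t ht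
    rw [uIcc_of_le (neg_le_neg h.le)] at ht
    exact kobMetric_neg hD (h.mapsTo ⟨le_neg_of_le_neg ht.2, neg_le_of_neg_le ht.1⟩) _
  rw [kobLength, intervalIntegral.integral_congr hneg,
    intervalIntegral.integral_comp_neg fun t => kobMetric D (σ t) (g t), neg_neg, neg_neg,
    kobLength]

theorem comp_sub_right (h : IsACCurveIn D σ g a b) (c : ℝ) :
    IsACCurveIn D (fun t => σ (t - c)) (fun t => g (t - c)) (a + c) (b + c) := by
  have hmem {t : ℝ} (ht : t ∈ Icc (a + c) (b + c)) : t - c ∈ Icc a b :=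
    ⟨le_sub_right_of_add_le ht.1, sub_le_iff_le_add.mpr ht.2⟩
  refine ⟨by gcongr; exact h.le, ⟨h.ac.1.comp_sub_right c, fun t ht => ?_⟩,
    fun t ht => h.mapsTo (hmem ht)⟩
  beta_reduce
  rw [intervalIntegral.integral_comp_sub_right (fun s => g s), add_sub_cancel_right]
  exact h.ac.2 _ (hmem ht)

end IsACCurveIn

section FiniteDimensional

variable [FiniteDimensional ℂ E]

theorem measurable_indicator_kobMetric [MeasurableSpace E] [BorelSpace E] {D : Set E}
    (hD : IsOpen D) :
    Measurable ((Prod.fst ⁻¹' D).indicator fun p : E × E => kobMetric D p.1 p.2) := by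
  have : ProperSpace E := FiniteDimensional.proper ℂ E
  refine measurable_of_Iio fun r => ?_
  have hopen : IsOpen {p : E × E | p.1 ∈ D ∧ kobMetric D p.1 p.2 < r} := by
    refine isOpen_iff_mem_nhds.mpr fun ⟨x, v⟩ ⟨hx, hlt⟩ => ?_
    filter_upwards [eventually_kobMetric_lt hD hx hlt,
      (continuous_fst.tendsto (x, v)).eventually (hD.mem_nhds hx)] with p hlt' hp using ⟨hp, hlt'⟩
  have hsplit : (Prod.fst ⁻¹' D).indicator (fun p : E × E => kobMetric D p.1 p.2) ⁻¹' Iio r =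
      {p | p.1 ∈ D ∧ kobMetric D p.1 p.2 < r} ∪ ((Prod.fst ⁻¹' D)ᶜ ∩ {_p | 0 < r}) := by
    ext p
    by_cases hp : p.1 ∈ D <;> simp [hp]
  rw [hsplit]
  exact hopen.measurableSet.union
    ((hD.measurableSet.preimage measurable_fst).compl.inter (.const _))

theorem IsACCurveIn.intervalIntegrable_kobMetric {D : Set E} (hD : IsOpen D) {σ g : ℝ → E}
    {a b : ℝ} (h : IsACCurveIn D σ g a b) :
    IntervalIntegrable (fun t => kobMetric D (σ t) (g t)) volume a b := by
  borelize E
  have : ProperSpace E := FiniteDimensional.proper ℂ E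
  obtain ⟨δ, hδ, hthick⟩ := (isCompact_Icc.image_of_continuousOn
    h.continuousOn).exists_thickening_subset_open hD h.mapsTo.image_subset
  have hle (t : ℝ) (ht : t ∈ Icc a b) : kobMetric D (σ t) (g t) ≤ ‖g t‖ / δ := by
    refine kobMetric_le_norm_div hδ (Subset.trans (fun y hy => ?_) hthick) _
    exact mem_thickening_iff.mpr ⟨σ t, mem_image_of_mem _ ht, hy⟩
  have hg := (intervalIntegrable_iff_integrableOn_Ioc_of_le h.le).mp h.ac.1
  have hσ : AEStronglyMeasurable σ (volume.restrict (Ioc a b)) :=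
    (h.continuousOn.mono Ioc_subset_Icc_self).aestronglyMeasurable measurableSet_Ioc
  have hmeas : AEMeasurable (fun t => kobMetric D (σ t) (g t)) (volume.restrict (Ioc a b)) := by
    refine ((measurable_indicator_kobMetric hD).comp_aemeasurable
      (hσ.aemeasurable.prodMk hg.aestronglyMeasurable.aemeasurable)).congr ?_
    filter_upwards [ae_restrict_mem measurableSet_Ioc] with t ht
    exact indicator_of_mem (a := (σ t, g t)) (s := Prod.fst ⁻¹' D)
      (h.mapsTo (Ioc_subset_Icc_self ht)) _
  rw [intervalIntegrable_iff_integrableOn_Ioc_of_le h.le]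
  refine Integrable.mono' (hg.norm.div_const δ) hmeas.aestronglyMeasurable ?_
  filter_upwards [ae_restrict_mem measurableSet_Ioc] with t ht
  rw [Real.norm_of_nonneg (kobMetric_nonneg _ _ _)]
  exact hle t (Ioc_subset_Icc_self ht)

theorem IsACCurveIn.kobLength_add {D : Set E} (hD : IsOpen D) {σ g : ℝ → E} {a b c : ℝ}
    (h : IsACCurveIn D σ g a b) (h' : IsACCurveIn D σ g b c) :
    kobLength D σ g a b + kobLength D σ g b c = kobLength D σ g a c :=
  intervalIntegral.integral_add_adjacent_intervals (h.intervalIntegrable_kobMetric hD)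
    (h'.intervalIntegrable_kobMetric hD)

theorem IsACCurveIn.exists_concat {D : Set E} (hD : IsOpen D) {σ g σ' g' : ℝ → E}
    {a b c d : ℝ} (h : IsACCurveIn D σ g a b) (h' : IsACCurveIn D σ' g' c d)
    (hbc : σ b = σ' c) : ∃ (e : ℝ) (τ k : ℝ → E), IsACCurveIn D τ k a e ∧ τ a = σ a ∧ τ e = σ' d ∧
      kobLength D τ k a e = kobLength D σ g a b + kobLength D σ' g' c d := by
  classical
  set e := d + (b - c) with he
  have hshift := h'.comp_sub_right (b - c)
  have hlen := kobLength_comp_sub_right D σ' g' c d (b - c)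
  rw [add_sub_cancel] at hshift hlen
  set τ := (Iic b).piecewise σ fun t => σ' (t - (b - c)) with hτ
  set k := (Iic b).piecewise g fun t => g' (t - (b - c))
  have hτl : EqOn σ τ (Icc a b) := fun t ht =>
    (piecewise_eq_of_mem (Iic b) _ _ (mem_Iic.mpr ht.2)).symm
  have hkl : EqOn g k (Ioc a b) := fun t ht =>
    (piecewise_eq_of_mem (Iic b) _ _ (mem_Iic.mpr ht.2)).symm
  have hkr : EqOn (fun t => g' (t - (b - c))) k (Ioc b e) := fun t ht =>
    (piecewise_eq_of_notMem (Iic b) g (fun t => g' (t - (b - c))) (notMem_Iic.mpr ht.1)).symm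
  have hτr : EqOn (fun t => σ' (t - (b - c))) τ (Icc b e) := by
    intro t ht
    rcases ht.1.eq_or_lt with rfl | hbt
    · beta_reduce
      rw [hτ, piecewise_eq_of_mem _ _ _ self_mem_Iic, hbc, sub_sub_cancel]
    · exact (piecewise_eq_of_notMem (Iic b) σ (fun t => σ' (t - (b - c))) (notMem_Iic.mpr hbt)).symm
  have hl : IsACCurveIn D τ k a b := ⟨h.le, h.ac.congr h.le hτl hkl, h.mapsTo.congr hτl⟩
  have hr : IsACCurveIn D τ k b e :=
    ⟨hshift.le, hshift.ac.congr hshift.le hτr hkr, hshift.mapsTo.congr hτr⟩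
  refine ⟨e, τ, k, ⟨hl.le.trans hr.le, hl.ac.trans hl.le hr.ac, ?_⟩,
    (hτl (left_mem_Icc.mpr hl.le)).symm, ?_, ?_⟩
  · rw [← Icc_union_Icc_eq_Icc hl.le hr.le]
    exact hl.mapsTo.union hr.mapsTo
  · rw [← hτr (right_mem_Icc.mpr hr.le)]
    simp only [he, add_sub_cancel_right]
  · rw [← hl.kobLength_add hD hr, ← hlen, kobLength_congr h.le (hτl.mono Ioc_subset_Icc_self) hkl,
      kobLength_congr hshift.le (hτr.mono Ioc_subset_Icc_self) hkr]

theorem isACWithDeriv_of_hasDerivAt {σ g : ℝ → E} {a b : ℝ}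
    (h : ∀ t ∈ uIcc a b, HasDerivAt σ (g t) t) (hg : ContinuousOn g (uIcc a b)) :
    IsACWithDeriv σ g a b := by
  have : CompleteSpace E := FiniteDimensional.complete ℂ E
  refine ⟨hg.intervalIntegrable, fun t ht => ?_⟩
  have hsub : uIcc a t ⊆ uIcc a b := uIcc_subset_uIcc left_mem_uIcc (Icc_subset_uIcc ht)
  rw [intervalIntegral.integral_eq_sub_of_hasDerivAt (fun s hs => h s (hsub hs))
    (hg.mono hsub).intervalIntegrable, add_sub_cancel]

theorem isACCurveIn_add_smul {D : Set E} {x v : E} {a b : ℝ} (hab : a ≤ b)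
    (hmem : ∀ t ∈ Icc a b, x + t • v ∈ D) :
    IsACCurveIn D (fun t => x + t • v) (fun _ => v) a b := by
  refine ⟨hab, isACWithDeriv_of_hasDerivAt (fun t _ => ?_) continuousOn_const, hmem⟩
  simpa using ((hasDerivAt_id t).smul_const v).const_add x

theorem exists_isACCurveIn {D : Set E} (hD : IsOpen D) (hc : IsPreconnected D) {x y : E}
    (hx : x ∈ D) (hy : y ∈ D) :
    ∃ (a b : ℝ) (σ g : ℝ → E), IsACCurveIn D σ g a b ∧ σ a = x ∧ σ b = y := by
  refine hc.induction₂' (fun x y => ∃ (a b : ℝ) (σ g : ℝ → E), IsACCurveIn D σ g a b ∧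
    σ a = x ∧ σ b = y) (fun x hx => ?_) (fun x y z _ _ _ hxy hyz => ?_) hx hy
  · obtain ⟨ε, hε, hball⟩ := Metric.isOpen_iff.mp hD x hx
    filter_upwards [mem_nhdsWithin_of_mem_nhds (ball_mem_nhds x hε)] with y hy
    have hsub {p q : E} (hp : p ∈ ball x ε) (hq : q ∈ ball x ε) :
        ∀ t ∈ Icc (0 : ℝ) 1, p + t • (q - p) ∈ D := fun t ht =>
      hball ((convex_ball x ε).add_smul_sub_mem hp hq ht)
    have hx := mem_ball_self (x := x) hε
    exact ⟨⟨_, _, _, _, isACCurveIn_add_smul zero_le_one (hsub hx hy), by simp, by simp⟩,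
      ⟨_, _, _, _, isACCurveIn_add_smul zero_le_one (hsub hy hx), by simp, by simp⟩⟩
  · obtain ⟨a, b, σ, g, h, rfl, rfl⟩ := hxy
    obtain ⟨c, d, σ', g', h', hbc, rfl⟩ := hyz
    obtain ⟨e, τ, k, hτ, hx, hz, -⟩ := h.exists_concat hD h' hbc.symm
    exact ⟨a, e, τ, k, hτ, hx, hz⟩

theorem exists_isACCurveIn_kobLength_lt {D : Set E} (hD : IsOpen D) (hc : IsPreconnected D)
    {x y : E} (hx : x ∈ D) (hy : y ∈ D) {r : ℝ} (hr : kobDist D x y < r) :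
    ∃ (a b : ℝ) (σ g : ℝ → E), IsACCurveIn D σ g a b ∧ σ a = x ∧ σ b = y ∧
      kobLength D σ g a b < r := by
  obtain ⟨a, b, σ, g, h, ha, hb⟩ := exists_isACCurveIn hD hc hx hy
  obtain ⟨_, ⟨a, b, σ, g, hab, hac, hm, ha, hb, rfl⟩, hlt⟩ := exists_lt_of_csInf_lt
    (by exact ⟨_, a, b, σ, g, h.le, h.ac, h.mapsTo, ha, hb, rfl⟩) hr
  exact ⟨a, b, σ, g, ⟨hab, hac, hm⟩, ha, hb, hlt⟩

end FiniteDimensional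

theorem kobDist_nonneg (D : Set E) (x y : E) : 0 ≤ kobDist D x y := by
  refine Real.sInf_nonneg ?_
  rintro _ ⟨a, b, σ, g, hab, -, -, -, -, rfl⟩
  exact kobLength_nonneg D σ g hab

theorem kobDist_comm {D : Set E} (hD : IsOpen D) (x y : E) : kobDist D x y = kobDist D y x := by
  have hsub (x y : E) {r : ℝ} : (∃ (a b : ℝ) (σ g : ℝ → E), a ≤ b ∧ IsACWithDeriv σ g a b ∧
      MapsTo σ (Icc a b) D ∧ σ a = x ∧ σ b = y ∧ r = ∫ t in a..b, kobMetric D (σ t) (g t)) →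
      ∃ (a b : ℝ) (σ g : ℝ → E), a ≤ b ∧ IsACWithDeriv σ g a b ∧
      MapsTo σ (Icc a b) D ∧ σ a = y ∧ σ b = x ∧ r = ∫ t in a..b, kobMetric D (σ t) (g t) := by
    rintro ⟨a, b, σ, g, hab, hac, hm, rfl, rfl, rfl⟩
    have h : IsACCurveIn D σ g a b := ⟨hab, hac, hm⟩
    exact ⟨_, _, _, _, h.comp_neg.le, h.comp_neg.ac, h.comp_neg.mapsTo, by simp, by simp,
      (h.kobLength_comp_neg hD).symm⟩
  exact congrArg sInf (Set.ext fun r => ⟨hsub x y, hsub y x⟩)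

/-- A curve whose Kobayashi length exceeds the distance of its endpoints by at most `κ`. Such
curves replace minimizing geodesics, which need not exist. -/
structure IsAlmostMinimizer (D : Set E) (κ : ℝ) (σ g : ℝ → E) (a b : ℝ) : Prop
    extends IsACCurveIn D σ g a b where
  length_le : kobLength D σ g a b ≤ kobDist D (σ a) (σ b) + κ

theorem IsAlmostMinimizer.comp_neg {D : Set E} (hD : IsOpen D) {κ : ℝ} {σ g : ℝ → E} {a b : ℝ}
    (h : IsAlmostMinimizer D κ σ g a b) :
    IsAlmostMinimizer D κ (fun t => σ (-t)) (fun t => -g (-t)) (-b) (-a) := by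
  refine ⟨h.toIsACCurveIn.comp_neg, ?_⟩
  rw [h.kobLength_comp_neg hD, neg_neg, neg_neg, kobDist_comm hD]
  exact h.length_le

section AlmostMinimizer

variable [FiniteDimensional ℂ E]

theorem kobDist_triangle {D : Set E} (hD : IsOpen D) (hc : IsPreconnected D) {x y z : E}
    (hx : x ∈ D) (hy : y ∈ D) (hz : z ∈ D) :
    kobDist D x z ≤ kobDist D x y + kobDist D y z := by
  refine le_of_forall_pos_le_add fun ε hε => ?_
  obtain ⟨a, b, σ, g, h, rfl, rfl, hlt⟩ := exists_isACCurveIn_kobLength_lt hD hc hx hy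
    (lt_add_of_pos_right _ (half_pos hε))
  obtain ⟨c, d, σ', g', h', hbc, rfl, hlt'⟩ := exists_isACCurveIn_kobLength_lt hD hc hy hz
    (lt_add_of_pos_right _ (half_pos hε))
  obtain ⟨e, τ, k, hτ, hτa, hτe, hlen⟩ := h.exists_concat hD h' hbc.symm
  have hle := hτ.kobDist_le
  rw [hτa, hτe, hlen] at hle
  linarith

theorem exists_isAlmostMinimizer {D : Set E} (hD : IsOpen D) (hc : IsPreconnected D) {κ : ℝ}
    (hκ : 0 < κ) {x y : E} (hx : x ∈ D) (hy : y ∈ D) :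
    ∃ (a b : ℝ) (σ g : ℝ → E), IsAlmostMinimizer D κ σ g a b ∧ σ a = x ∧ σ b = y := by
  obtain ⟨a, b, σ, g, h, rfl, rfl, hlt⟩ := exists_isACCurveIn_kobLength_lt hD hc hx hy
    (lt_add_of_pos_right _ hκ)
  exact ⟨a, b, σ, g, ⟨h, hlt.le⟩, rfl, rfl⟩

theorem IsAlmostMinimizer.mono {D : Set E} (hD : IsOpen D) (hc : IsPreconnected D) {κ : ℝ}
    {σ g : ℝ → E} {a b s t : ℝ} (h : IsAlmostMinimizer D κ σ g a b) (has : a ≤ s) (hst : s ≤ t)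
    (htb : t ≤ b) : IsAlmostMinimizer D κ σ g s t := by
  have hleft := h.toIsACCurveIn.mono le_rfl has (hst.trans htb)
  have hmid := h.toIsACCurveIn.mono has hst htb
  have hright := h.toIsACCurveIn.mono (has.trans hst) htb le_rfl
  refine ⟨hmid, ?_⟩
  have hsub : kobLength D σ g a b =
      kobLength D σ g a s + kobLength D σ g s t + kobLength D σ g t b := by
    rw [hleft.kobLength_add hD hmid,
      (h.toIsACCurveIn.mono le_rfl (has.trans hst) htb).kobLength_add hD hright]
  have ha := h.mapsTo (left_mem_Icc.mpr h.le)
  have hb := h.mapsTo (right_mem_Icc.mpr h.le)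
  have hs := hmid.mapsTo (left_mem_Icc.mpr hst)
  have ht := hmid.mapsTo (right_mem_Icc.mpr hst)
  linarith [h.length_le, hleft.kobDist_le, hright.kobDist_le, kobDist_triangle hD hc ha hs hb,
    kobDist_triangle hD hc hs ht hb]

end AlmostMinimizer

/-! ### Distances along curves and localization -/

theorem norm_add_lt_norm_one_add_conj_mul {a z : ℂ} (ha : ‖a‖ < 1) (hz : ‖z‖ < 1) :
    ‖z + a‖ < ‖1 + starRingEnd ℂ a * z‖ := by
  have hsq : ‖1 + starRingEnd ℂ a * z‖ ^ 2 - ‖z + a‖ ^ 2 = (1 - ‖a‖ ^ 2) * (1 - ‖z‖ ^ 2) := by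
    simp only [Complex.sq_norm, Complex.normSq_apply, Complex.add_re, Complex.add_im,
      Complex.mul_re, Complex.mul_im, Complex.one_re, Complex.one_im, Complex.conj_re,
      Complex.conj_im]
    ring
  have hpos : 0 < (1 - ‖a‖ ^ 2) * (1 - ‖z‖ ^ 2) :=
    mul_pos (sub_pos.mpr (pow_lt_one₀ (norm_nonneg a) ha two_ne_zero))
      (sub_pos.mpr (pow_lt_one₀ (norm_nonneg z) hz two_ne_zero))
  exact lt_of_pow_lt_pow_left₀ 2 (norm_nonneg _) (by linarith)

theorem kobMetric_le_div_one_sub_sq {D : Set E} {f : ℂ → E} {a : ℂ} (ha : ‖a‖ < 1)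
    (hf : DifferentiableOn ℂ f (ball 0 1)) (hfD : MapsTo f (ball 0 1) D) (ξ : ℂ) :
    kobMetric D (f a) (ξ • deriv f a) ≤ ‖ξ‖ / (1 - ‖a‖ ^ 2) := by
  set φ : ℂ → ℂ := fun z => (z + a) / (1 + starRingEnd ℂ a * z)
  have hlt (z : ℂ) (hz : z ∈ ball (0 : ℂ) 1) : ‖z + a‖ < ‖1 + starRingEnd ℂ a * z‖ :=
    norm_add_lt_norm_one_add_conj_mul ha (mem_ball_zero_iff.mp hz)
  have hden (z : ℂ) (hz : z ∈ ball (0 : ℂ) 1) : 1 + starRingEnd ℂ a * z ≠ 0 :=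
    norm_pos_iff.mp ((norm_nonneg _).trans_lt (hlt z hz))
  have hφ : DifferentiableOn ℂ φ (ball 0 1) := fun z hz => by
    have := hden z hz
    fun_prop (disch := assumption)
  have hmaps : MapsTo φ (ball 0 1) (ball 0 1) := fun z hz => by
    rw [mem_ball_zero_iff, norm_div, div_lt_one (norm_pos_iff.mpr (hden z hz))]
    exact hlt z hz
  have hφ0 : φ 0 = a := by simp [φ]
  have hderivφ : HasDerivAt φ ((1 - ‖a‖ ^ 2 : ℝ) : ℂ) 0 := by
    have hnum : HasDerivAt (fun z : ℂ => z + a) 1 0 := (hasDerivAt_id _).add_const _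
    have hdenom : HasDerivAt (fun z : ℂ => 1 + starRingEnd ℂ a * z) (starRingEnd ℂ a) 0 := by
      simpa using ((hasDerivAt_id (0 : ℂ)).const_mul (starRingEnd ℂ a)).const_add 1
    have hval : ((1 - ‖a‖ ^ 2 : ℝ) : ℂ)
        = (1 * (1 + starRingEnd ℂ a * 0) - (0 + a) * starRingEnd ℂ a)
          / (1 + starRingEnd ℂ a * 0) ^ 2 := by
      rw [mul_zero, add_zero, zero_add, one_mul, one_pow, div_one, Complex.mul_conj']
      push_cast
      rfl
    rw [hval]
    exact hnum.fun_div hdenom (by simp)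
  have hderivf : HasDerivAt f (deriv f a) (φ 0) := by
    rw [hφ0]
    exact (hf.differentiableAt (isOpen_ball.mem_nhds (mem_ball_zero_iff.mpr ha))).hasDerivAt
  have hpos : 0 < 1 - ‖a‖ ^ 2 := sub_pos.mpr (pow_lt_one₀ (norm_nonneg a) ha two_ne_zero)
  have h := kobMetric_le_div_of_mapsTo_ball one_pos (hf.comp hφ hmaps) (hfD.comp hmaps)
    (ξ / (1 - ‖a‖ ^ 2 : ℝ))
  rw [(hderivf.scomp 0 hderivφ).deriv, smul_smul,
    div_mul_cancel₀ _ (Complex.ofReal_ne_zero.mpr hpos.ne'), Function.comp_apply, hφ0, div_one,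
    norm_div, Complex.norm_real, Real.norm_of_nonneg hpos.le] at h
  exact h

section FiniteDimensional

variable [FiniteDimensional ℂ E]

theorem IsACCurveIn.kobLength_le_sub {D : Set E} (hD : IsOpen D) {σ g : ℝ → E} {a b : ℝ}
    (h : IsACCurveIn D σ g a b) {Φ φ : ℝ → ℝ} (hΦ : ∀ t ∈ Icc a b, HasDerivAt Φ (φ t) t)
    (hφ : ContinuousOn φ (Icc a b)) (hle : ∀ t ∈ Icc a b, kobMetric D (σ t) (g t) ≤ φ t) :
    kobLength D σ g a b ≤ Φ b - Φ a := by
  have hint : IntervalIntegrable φ volume a b := hφ.intervalIntegrable_of_Icc h.le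
  rw [← intervalIntegral.integral_eq_sub_of_hasDerivAt (uIcc_of_le h.le ▸ hΦ) hint]
  exact intervalIntegral.integral_mono_on h.le (h.intervalIntegrable_kobMetric hD) hint hle

theorem isACCurveIn_comp_ofReal_mul {D : Set E} {f : ℂ → E} (hf : DifferentiableOn ℂ f (ball 0 1))
    (hfD : MapsTo f (ball 0 1) D) {w : ℂ} (hw : ‖w‖ < 1) :
    IsACCurveIn D (fun t => f (t * w)) (fun t => w • deriv f (t * w)) 0 1 := by
  have hmem : MapsTo (fun t : ℝ => (t : ℂ) * w) (Icc 0 1) (ball 0 1) := fun t ht => by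
    rw [mem_ball_zero_iff, norm_mul, Complex.norm_real, Real.norm_of_nonneg ht.1]
    exact (mul_le_of_le_one_left (norm_nonneg w) ht.2).trans_lt hw
  refine ⟨zero_le_one, isACWithDeriv_of_hasDerivAt ?_ ?_, hfD.comp hmem⟩ <;>
    rw [uIcc_of_le zero_le_one]
  · intro t ht
    exact (hf.differentiableAt (isOpen_ball.mem_nhds (hmem ht))).hasDerivAt.scomp t
      (by simpa using (Complex.ofRealCLM.hasDerivAt (x := t)).mul_const w)
  · exact ((hf.deriv isOpen_ball).continuousOn.comp (by fun_prop) hmem).const_smul w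

theorem kobDist_le_neg_log {D : Set E} (hD : IsOpen D) {f : ℂ → E}
    (hf : DifferentiableOn ℂ f (ball 0 1)) (hfD : MapsTo f (ball 0 1) D) {w : ℂ} (hw : ‖w‖ < 1) :
    kobDist D (f 0) (f w) ≤ -Real.log (1 - ‖w‖) := by
  have hcurve := isACCurveIn_comp_ofReal_mul hf hfD hw
  have hpos (t : ℝ) (ht : t ∈ Icc (0 : ℝ) 1) : 0 < 1 - t * ‖w‖ :=
    sub_pos.mpr ((mul_le_of_le_one_left (norm_nonneg w) ht.2).trans_lt hw)
  have hderiv (t : ℝ) (ht : t ∈ Icc (0 : ℝ) 1) :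
      HasDerivAt (fun t => -Real.log (1 - t * ‖w‖)) (‖w‖ / (1 - t * ‖w‖)) t := by
    have hlin : HasDerivAt (fun t : ℝ => 1 - t * ‖w‖) (-‖w‖) t := by
      simpa using ((hasDerivAt_id t).mul_const ‖w‖).const_sub 1
    simpa [neg_div] using (hlin.log (hpos t ht).ne').fun_neg
  have hlen := hcurve.kobLength_le_sub hD hderiv
    (continuousOn_const.div (by fun_prop) fun t ht => (hpos t ht).ne') fun t ht => ?_
  · simpa using hcurve.kobDist_le.trans hlen
  · have hnorm : ‖(t : ℂ) * w‖ = t * ‖w‖ := by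
      rw [norm_mul, Complex.norm_real, Real.norm_of_nonneg ht.1]
    rw [← hnorm]
    have ht1 : ‖(t : ℂ) * w‖ < 1 := hnorm ▸ sub_pos.mp (hpos t ht)
    refine (kobMetric_le_div_one_sub_sq ht1 hf hfD w).trans ?_
    exact div_le_div_of_nonneg_left (norm_nonneg w) (sub_pos.mpr ht1)
      (sub_le_sub_left (pow_le_of_le_one (norm_nonneg _) ht1.le two_ne_zero) 1)

end FiniteDimensional

theorem kobMetric_le_div_of_forall_mapsTo {D D' : Set E} (hD : IsOpen D) {x : E} (hx : x ∈ D)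
    {τ : ℝ} (hτ : 0 < τ) (hτ1 : τ ≤ 1)
    (h : ∀ f : ℂ → E, DifferentiableOn ℂ f (ball 0 1) → MapsTo f (ball 0 1) D → f 0 = x →
      MapsTo f (ball 0 τ) D') (v : E) : kobMetric D' x v ≤ kobMetric D x v / τ := by
  rw [le_div_iff₀ hτ]
  refine le_kobMetric hD hx fun f ξ hf => ?_
  rw [← le_div_iff₀ hτ, ← hf.smul_deriv, ← hf.map_zero]
  exact kobMetric_le_div_of_mapsTo_ball hτ (hf.differentiableOn.mono (ball_subset_ball hτ1))
    (h f hf.differentiableOn hf.mapsTo hf.map_zero) ξ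

theorem kobMetric_inter_le_of_le_kobDist [FiniteDimensional ℂ E] {D U : Set E} (hD : IsOpen D)
    {x : E} {d : ℝ} (hd : 0 < d) (hx : x ∈ D) (h : ∀ y ∈ D \ U, d ≤ kobDist D x y) (v : E) :
    kobMetric (D ∩ U) x v ≤ kobMetric D x v / (1 - Real.exp (-d)) := by
  refine kobMetric_le_div_of_forall_mapsTo hD hx (by simpa using hd)
    (by simpa using (Real.exp_pos (-d)).le) (fun f hf hfD hfx w hw => ?_) v
  have hw' : ‖w‖ < 1 - Real.exp (-d) := mem_ball_zero_iff.mp hw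
  have hw1 : ‖w‖ < 1 := hw'.trans (by simpa using Real.exp_pos (-d))
  have hfw : f w ∈ D := hfD (mem_ball_zero_iff.mpr hw1)
  refine ⟨hfw, by_contra fun hU => ?_⟩
  have hfar : d ≤ -Real.log (1 - ‖w‖) :=
    (h _ ⟨hfw, hU⟩).trans (hfx ▸ kobDist_le_neg_log hD hf hfD hw1)
  have hnear : -d < Real.log (1 - ‖w‖) := by
    rw [Real.lt_log_iff_exp_lt (sub_pos.mpr hw1)]
    linarith
  linarith

theorem kobMetric_inter_le_of_ball_subset {D U : Set E} (hD : IsOpen D) {x : E} {M r : ℝ}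
    (hM : D ⊆ ball x M) (hr : 0 < r) (hrM : r ≤ M) (hx : x ∈ D) (hU : ball x r ⊆ U) (v : E) :
    kobMetric (D ∩ U) x v ≤ kobMetric D x v / (r / M) := by
  have hM0 : 0 < M := hr.trans_le hrM
  have hτ1 : r / M ≤ 1 := (div_le_one hM0).mpr hrM
  refine kobMetric_le_div_of_forall_mapsTo hD hx (div_pos hr hM0) hτ1
    (fun f hf hfD hfx w hw => ?_) v
  have hw1 : w ∈ ball (0 : ℂ) 1 := ball_subset_ball hτ1 hw
  refine ⟨hfD hw1, hU ?_⟩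
  have hschwarz := Complex.dist_le_div_mul_dist_of_mapsTo_ball hf
    (fun z hz => ball_subset_closedBall (hfx.symm ▸ hM (hfD hz))) hw1
  rw [hfx, div_one, dist_zero_right] at hschwarz
  calc dist (f w) x ≤ M * ‖w‖ := hschwarz
    _ < M * (r / M) := by gcongr; exact mem_ball_zero_iff.mp hw
    _ = r := mul_div_cancel₀ r hM0.ne'

/-! ### The chain rule along absolutely continuous functions -/

theorem absolutelyContinuousOnInterval_comp_of_lipschitzOnWith {f Ψ : ℝ → ℝ} {a b : ℝ} {S : Set ℝ}
    {K : NNReal} (hΨ : LipschitzOnWith K Ψ S) (hf : AbsolutelyContinuousOnInterval f a b)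
    (hfS : MapsTo f (uIcc a b) S) : AbsolutelyContinuousOnInterval (Ψ ∘ f) a b := by
  rw [absolutelyContinuousOnInterval_iff] at hf ⊢
  intro ε hε
  obtain ⟨δ, hδ, h⟩ := hf (ε / (K + 1)) (by positivity)
  refine ⟨δ, hδ, fun I hI hlt => ?_⟩
  calc ∑ i ∈ Finset.range I.1, dist (Ψ (f (I.2 i).1)) (Ψ (f (I.2 i).2))
      ≤ ∑ i ∈ Finset.range I.1, K * dist (f (I.2 i).1) (f (I.2 i).2) :=
        Finset.sum_le_sum fun i hi =>
          hΨ.dist_le_mul _ (hfS (hI.left i hi).left) _ (hfS (hI.left i hi).right)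
    _ = K * ∑ i ∈ Finset.range I.1, dist (f (I.2 i).1) (f (I.2 i).2) := (Finset.mul_sum _ _ _).symm
    _ ≤ K * (ε / (K + 1)) := by gcongr; exact (h I hI hlt).le
    _ < (K + 1) * (ε / (K + 1)) := by gcongr; linarith
    _ = ε := by field

section ChainRule

variable {k ℓ Ψ ψ : ℝ → ℝ} {a b : ℝ}

theorem continuousOn_of_eq_add_integral (hab : a ≤ b) (hk : IntervalIntegrable k volume a b)
    (hℓ : ∀ t ∈ Icc a b, ℓ t = ℓ a + ∫ s in a..t, k s) : ContinuousOn ℓ (Icc a b) :=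
  (continuousOn_const.add (uIcc_of_le hab ▸
    intervalIntegral.continuousOn_primitive_interval' hk left_mem_uIcc)).congr hℓ

theorem intervalIntegrable_mul_comp (hab : a ≤ b) (hk : IntervalIntegrable k volume a b)
    (hℓ : ∀ t ∈ Icc a b, ℓ t = ℓ a + ∫ s in a..t, k s) (hψ : ContinuousOn ψ (ℓ '' Icc a b)) :
    IntervalIntegrable (fun t => k t * ψ (ℓ t)) volume a b := by
  refine hk.mul_continuousOn ?_
  rw [uIcc_of_le hab]
  exact hψ.comp (continuousOn_of_eq_add_integral hab hk hℓ) (mapsTo_image ℓ _)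

theorem integral_mul_comp_eq_sub (hab : a ≤ b) (hk : IntervalIntegrable k volume a b)
    (hℓ : ∀ t ∈ Icc a b, ℓ t = ℓ a + ∫ s in a..t, k s)
    (hΨ : ∀ t ∈ Icc a b, HasDerivAt Ψ (ψ (ℓ t)) (ℓ t)) (hψ : ContinuousOn ψ (ℓ '' Icc a b)) :
    ∫ t in a..b, k t * ψ (ℓ t) = Ψ (ℓ b) - Ψ (ℓ a) := by
  have hℓc := continuousOn_of_eq_add_integral hab hk hℓ
  set L : ℝ → ℝ := fun t => ℓ a + ∫ s in a..t, k s
  have hLac : AbsolutelyContinuousOnInterval L a b :=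
    (LipschitzWith.const (ℓ a)).lipschitzOnWith.absolutelyContinuousOnInterval.add
      (hk.absolutelyContinuousOnInterval_intervalIntegral left_mem_uIcc)
  obtain ⟨B, hB⟩ := (isCompact_Icc.image_of_continuousOn hℓc).exists_bound_of_continuousOn hψ
  have hlip : LipschitzOnWith B.toNNReal Ψ (ℓ '' Icc a b) := by
    refine (isPreconnected_Icc.image ℓ hℓc).ordConnected.convex
      |>.lipschitzOnWith_of_nnnorm_hasDerivWithin_le (f' := ψ) ?_ fun x hx => ?_
    · rintro _ ⟨t, ht, rfl⟩
      exact (hΨ t ht).hasDerivWithinAt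
    · rw [← NNReal.coe_le_coe, coe_nnnorm]
      exact (hB x hx).trans (Real.le_coe_toNNReal B)
  have hftc := (absolutelyContinuousOnInterval_comp_of_lipschitzOnWith hlip hLac
    fun t ht => ?_).integral_deriv_eq_sub
  · have hLℓ (t : ℝ) (ht : t ∈ Icc a b) : L t = ℓ t := (hℓ t ht).symm
    rw [Function.comp_apply, Function.comp_apply, hLℓ b (right_mem_Icc.mpr hab),
      hLℓ a (left_mem_Icc.mpr hab)] at hftc
    refine Eq.trans (intervalIntegral.integral_congr_ae ?_) hftc
    filter_upwards [hk.ae_hasDerivAt_integral] with t ht htab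
    have htI : t ∈ uIcc a b := uIoc_subset_uIcc htab
    have hL : HasDerivAt L (k t) t := (ht htI a left_mem_uIcc).const_add _
    rw [uIcc_of_le hab] at htI
    have hΨt : HasDerivAt Ψ (ψ (ℓ t)) (L t) := (hLℓ t htI).symm ▸ hΨ t htI
    rw [(hΨt.comp t hL).deriv, mul_comm]
  · rw [uIcc_of_le hab] at ht
    exact ⟨t, ht, hℓ t ht⟩

end ChainRule

theorem le_mul_exp_integral_of_eq_add_integral {u v k : ℝ → ℝ} {a b : ℝ} (hab : a ≤ b)
    (hv : IntervalIntegrable v volume a b) (hu : ∀ t ∈ Icc a b, u t = u a + ∫ s in a..t, v s)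
    (hpos : ∀ t ∈ Icc a b, 0 < u t) (hk : IntervalIntegrable k volume a b)
    (hvk : ∀ t ∈ Icc a b, v t ≤ k t * u t) : u b ≤ u a * Real.exp (∫ t in a..b, k t) := by
  have hinv : ContinuousOn (fun x : ℝ => x⁻¹) (u '' Icc a b) := by
    refine continuousOn_id.inv₀ ?_
    rintro _ ⟨t, ht, rfl⟩
    exact (hpos t ht).ne'
  have hle : ∫ t in a..b, v t * (u t)⁻¹ ≤ ∫ t in a..b, k t := by
    refine intervalIntegral.integral_mono_on hab (intervalIntegrable_mul_comp hab hv hu hinv) hk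
      fun t ht => ?_
    rw [← div_eq_mul_inv, div_le_iff₀ (hpos t ht)]
    exact hvk t ht
  rw [integral_mul_comp_eq_sub hab hv hu (fun t ht => Real.hasDerivAt_log (hpos t ht).ne') hinv,
    sub_le_iff_le_add, Real.log_le_iff_le_exp (hpos b (right_mem_Icc.mpr hab)), Real.exp_add,
    Real.exp_log (hpos a (left_mem_Icc.mpr hab)), mul_comm] at hle
  exact hle

theorem IsACCurveIn.dist_le_sub [FiniteDimensional ℂ E] {D : Set E} (hD : IsOpen D)
    {σ g : ℝ → E} {a b : ℝ} (h : IsACCurveIn D σ g a b) {ℓ ψ Ψ : ℝ → ℝ}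
    (hℓ : ∀ t ∈ Icc a b, ℓ t = ℓ a + kobLength D σ g a t)
    (hΨ : ∀ t ∈ Icc a b, HasDerivAt Ψ (ψ (ℓ t)) (ℓ t)) (hψ : ContinuousOn ψ (ℓ '' Icc a b))
    (hg : ∀ t ∈ Icc a b, ‖g t‖ ≤ kobMetric D (σ t) (g t) * ψ (ℓ t)) :
    dist (σ a) (σ b) ≤ Ψ (ℓ b) - Ψ (ℓ a) := by
  have hint := h.intervalIntegrable_kobMetric hD
  calc dist (σ a) (σ b) = ‖∫ t in a..b, g t‖ := by
        rw [dist_comm, dist_eq_norm, h.ac.2 b (right_mem_Icc.mpr h.le), add_sub_cancel_left]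
    _ ≤ ∫ t in a..b, ‖g t‖ := intervalIntegral.norm_integral_le_integral_norm h.le
    _ ≤ ∫ t in a..b, kobMetric D (σ t) (g t) * ψ (ℓ t) :=
        intervalIntegral.integral_mono_on h.le h.ac.1.norm
          (intervalIntegrable_mul_comp h.le hint hℓ hψ) hg
    _ = Ψ (ℓ b) - Ψ (ℓ a) := integral_mul_comp_eq_sub h.le hint hℓ hΨ hψ

/-! ### Logarithms on slices of `ℂ`-convex sets -/

theorem eq_of_isPreconnected_of_exp_eq_one {X : Type*} [TopologicalSpace X] {S : Set X}
    (hS : IsPreconnected S) {H : X → ℂ} (hH : ContinuousOn H S)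
    (hexp : ∀ x ∈ S, Complex.exp (H x) = 1) {x y : X} (hx : x ∈ S) (hy : y ∈ S) : H x = H y := by
  have hcount : {z | Complex.exp z = 1}.Countable := by
    refine (countable_range fun n : ℤ => (n : ℂ) * (2 * Real.pi * Complex.I)).mono fun z hz => ?_
    obtain ⟨n, hn⟩ := Complex.exp_eq_one_iff.mp hz
    exact ⟨n, hn.symm⟩
  exact hcount.isTotallyDisconnected _ (image_subset_iff.mpr hexp) (hS.image H hH)
    (mem_image_of_mem H hx) (mem_image_of_mem H hy)

theorem sub_log_exp_eq_of_isPreconnected {X : Type*} [TopologicalSpace X] {S : Set X}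
    (hS : IsPreconnected S) {H : X → ℂ} (hH : ContinuousOn H S)
    (hslit : ∀ x ∈ S, Complex.exp (H x) ∈ Complex.slitPlane) {x y : X} (hx : x ∈ S) (hy : y ∈ S) :
    H x - Complex.log (Complex.exp (H x)) = H y - Complex.log (Complex.exp (H y)) :=
  eq_of_isPreconnected_of_exp_eq_one hS (H := fun x => H x - Complex.log (Complex.exp (H x)))
    (hH.sub ((Complex.continuous_exp.comp_continuousOn hH).clog hslit))
    (fun x _ => by rw [Complex.exp_sub, Complex.exp_log (Complex.exp_ne_zero _),
      div_self (Complex.exp_ne_zero _)]) hx hy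

theorem isEmbedding_add_smul (z : E) {v : E} (hv : v ≠ 0) :
    IsEmbedding fun c : ℂ => z + c • v :=
  (Homeomorph.addLeft z).isEmbedding.comp (isClosedEmbedding_smul_left hv).isEmbedding

theorem image_add_smul_preimage (D : Set E) (z v : E) :
    (fun c : ℂ => z + c • v) '' {c | z + c • v ∈ D} = D ∩ {w | ∃ c : ℂ, w = z + c • v} := by
  ext w
  constructor
  · rintro ⟨c, hc, rfl⟩
    exact ⟨hc, c, rfl⟩
  · rintro ⟨hw, c, rfl⟩
    exact ⟨c, hw, rfl⟩

theorem CConvex.isSimplyConnected_slice {D : Set E} (hD : CConvex D) {z v : E}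
    (hne : ∃ c : ℂ, z + c • v ∈ D) : IsSimplyConnected {c : ℂ | z + c • v ∈ D} := by
  obtain ⟨c, hc⟩ := hne
  rcases eq_or_ne v 0 with rfl | hv
  · have huniv : {c : ℂ | z + c • (0 : E) ∈ D} = univ := by
      simpa only [smul_zero, add_zero, eq_univ_iff_forall] using fun _ => by simpa using hc
    have : ContractibleSpace (univ : Set ℂ) := convex_univ.contractibleSpace univ_nonempty
    exact huniv ▸ SimplyConnectedSpace.ofContractible _
  · have hsimply := (hD z v hv ⟨_, hc, c, rfl⟩).2
    rw [← image_add_smul_preimage] at hsimply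
    exact ((isEmbedding_add_smul z hv).isSimplyConnected_image).mp hsimply

theorem cConvex_of_convex {D : Set E} (hD : Convex ℝ D) : CConvex D := by
  rintro z v - hne
  have hline : Convex ℝ {w : E | ∃ c : ℂ, w = z + c • v} := by
    convert ((LinearMap.toSpanSingleton ℂ E v).range.restrictScalars ℝ).convex.translate z using 1
    ext w
    simp [eq_neg_add_iff_add_eq, eq_comm]
  have hconv := hD.inter hline
  have := hconv.contractibleSpace hne
  exact ⟨(hconv.isPathConnected hne).isConnected, SimplyConnectedSpace.ofContractible _⟩

section SliceLog

variable {T : Type*} [TopologicalSpace T]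

theorem eventually_div_mem_slitPlane {F : T → Set ℂ} {u : T → ℂ → ℂ}
    (hF : IsOpen {p : T × ℂ | p.2 ∈ F p.1}) (hu : Continuous fun p : T × ℂ => u p.1 p.2)
    (hne : ∀ t, ∀ c ∈ F t, u t c ≠ 0) {t : T} {K : Set ℂ} (hK : IsCompact K) (hKF : K ⊆ F t) :
    ∀ᶠ t' in 𝓝 t, ∀ c ∈ K, c ∈ F t' ∧ u t' c / u t c ∈ Complex.slitPlane := by
  refine hK.eventually_forall_of_forall_eventually fun c hc => ?_
  have hmem : ∀ᶠ p : T × ℂ in 𝓝 (t, c), p.2 ∈ F p.1 := hF.mem_nhds (hKF hc)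
  have hdiv : ContinuousAt (fun p : T × ℂ => u p.1 p.2 / u t p.2) (t, c) := by
    refine hu.continuousAt.div ?_ (hne t c (hKF hc))
    exact (hu.comp (f := fun p : T × ℂ => (t, p.2)) (by fun_prop)).continuousAt
  refine hmem.and (hdiv.eventually (Complex.isOpen_slitPlane.mem_nhds ?_))
  simp only [div_self (hne t c (hKF hc))]
  exact Complex.one_mem_slitPlane

theorem exists_continuous_exp_mul_eq {F : T → Set ℂ} (hF : IsOpen {p : T × ℂ | p.2 ∈ F p.1})
    (hFs : ∀ t, IsSimplyConnected (F t)) {c₀ c₁ : ℂ} (h₀ : ∀ t, c₀ ∈ F t) (h₁ : ∀ t, c₁ ∈ F t)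
    {u : T → ℂ → ℂ} (hu : Continuous fun p : T × ℂ => u p.1 p.2)
    (hne : ∀ t, ∀ c ∈ F t, u t c ≠ 0) :
    ∃ l : T → ℂ, Continuous l ∧ ∀ t, Complex.exp (l t) * u t c₀ = u t c₁ := by
  have hut (t : T) : Continuous (u t) := hu.comp (f := fun c : ℂ => (t, c)) (by fun_prop)
  have huc (c : ℂ) : Continuous fun t => u t c := hu.comp (f := fun t : T => (t, c)) (by fun_prop)
  choose G hGc hGe using fun t => Complex.exists_continuousOn_eqOn_exp_comp (hFs t)
    (hF.preimage (f := fun c : ℂ => (t, c)) (by fun_prop)) (hut t).continuousOn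
    (by rintro ⟨c, hc, h0⟩; exact hne t c hc h0)
  have hexp (t : T) {c : ℂ} (hc : c ∈ F t) : Complex.exp (G t c) = u t c := hGe t hc
  refine ⟨fun t => G t c₁ - G t c₀, continuous_iff_continuousAt.mpr fun t => ?_, fun t => ?_⟩
  · obtain ⟨γ, hγ⟩ := (hFs t).isPathConnected.joinedIn c₀ (h₀ t) c₁ (h₁ t)
    have hγF : range γ ⊆ F t := range_subset_iff.mpr hγ
    have hform : (fun t' => G t' c₁ - G t' c₀) =ᶠ[𝓝 t] fun t' => G t c₁ - G t c₀ +
        (Complex.log (u t' c₁ / u t c₁) - Complex.log (u t' c₀ / u t c₀)) := by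
      filter_upwards [eventually_div_mem_slitPlane hF hu hne (isCompact_range γ.continuous) hγF]
        with t' ht'
      have hdiff (c : ℂ) (hc : c ∈ range γ) : Complex.exp (G t' c - G t c) = u t' c / u t c := by
        rw [Complex.exp_sub, hexp t' (ht' c hc).1, hexp t (hγF hc)]
      have h0γ : c₀ ∈ range γ := ⟨0, γ.source⟩
      have h1γ : c₁ ∈ range γ := ⟨1, γ.target⟩
      have hconst := sub_log_exp_eq_of_isPreconnected (isPreconnected_range γ.continuous)
        (H := fun c => G t' c - G t c) (((hGc t').mono fun c hc => (ht' c hc).1).sub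
          ((hGc t).mono hγF)) (fun c hc => by rw [hdiff c hc]; exact (ht' c hc).2) h1γ h0γ
      rw [hdiff _ h0γ, hdiff _ h1γ] at hconst
      linear_combination hconst
    have hlog (c : ℂ) (hc : c ∈ F t) :
        ContinuousAt (fun t' => Complex.log (u t' c / u t c)) t := by
      refine ((huc c).continuousAt.div_const _).clog ?_
      rw [div_self (hne t c hc)]
      exact Complex.one_mem_slitPlane
    exact (continuousAt_const.add ((hlog c₁ (h₁ t)).sub (hlog c₀ (h₀ t)))).congr hform.symm
  · rw [Complex.exp_sub, hexp t (h₀ t), hexp t (h₁ t), div_mul_cancel₀ _ (hne t c₀ (h₀ t))]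

theorem CConvex.exists_continuous_exp_mul_eq {D : Set E} (hDo : IsOpen D) (hD : CConvex D)
    {x y : T → E} (hx : Continuous x) (hy : Continuous y) (hxD : ∀ t, x t ∈ D) (hyD : ∀ t, y t ∈ D)
    {u : T → ℂ → ℂ} (hu : Continuous fun p : T × ℂ => u p.1 p.2)
    (hne : ∀ t c, x t + c • (y t - x t) ∈ D → u t c ≠ 0) :
    ∃ l : T → ℂ, Continuous l ∧ ∀ t, Complex.exp (l t) * u t 0 = u t 1 := by
  have h₀ (t : T) : x t + (0 : ℂ) • (y t - x t) ∈ D := by simpa using hxD t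
  exact _root_.exists_continuous_exp_mul_eq (F := fun t => {c | x t + c • (y t - x t) ∈ D})
    (hDo.preimage (by fun_prop)) (fun t => hD.isSimplyConnected_slice ⟨0, h₀ t⟩) h₀
    (fun t => by simpa using hyD t) hu hne

end SliceLog

/-! ### A Bloch-type covering theorem -/

section Bloch

variable {G : ℂ → ℂ} {a : ℂ} {r : ℝ}

theorem norm_deriv_sub_deriv_le (hG : DifferentiableOn ℂ G (ball a r))
    (hle : ∀ z ∈ ball a r, ‖deriv G z‖ ≤ 2 * ‖deriv G a‖) {z : ℂ} (hz : z ∈ ball a r) :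
    ‖deriv G z - deriv G a‖ ≤ 3 * ‖deriv G a‖ / r * ‖z - a‖ := by
  have hschwarz := Complex.dist_le_div_mul_dist_of_mapsTo_ball (R₂ := 3 * ‖deriv G a‖)
    (hG.deriv isOpen_ball) (fun w hw => ?_) hz
  · rwa [dist_eq_norm, dist_eq_norm] at hschwarz
  · rw [mem_closedBall_iff_norm]
    linarith [norm_sub_le (deriv G w) (deriv G a), hle w hw]

theorem le_norm_sub_of_mem_sphere (hr : 0 < r) (hG : DifferentiableOn ℂ G (ball a r))
    (hle : ∀ z ∈ ball a r, ‖deriv G z‖ ≤ 2 * ‖deriv G a‖) {z : ℂ} (hz : z ∈ sphere a (r / 8)) :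
    ‖deriv G a‖ * r / 16 ≤ ‖G z - G a‖ := by
  have hsub : closedBall a (r / 8) ⊆ ball a r := closedBall_subset_ball (by linarith)
  have hrem := (convex_closedBall a (r / 8)).norm_image_sub_le_of_norm_hasDerivWithin_le
    (f := fun z => G z - deriv G a * z) (f' := fun z => deriv G z - deriv G a)
    (C := 3 * ‖deriv G a‖ / 8) (fun w hw => ?_) (fun w hw => ?_)
    (mem_closedBall_self (by positivity)) (sphere_subset_closedBall hz)
  · have hlin : deriv G a * (z - a) =
        (G z - G a) - (G z - deriv G a * z - (G a - deriv G a * a)) := by ring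
    have htri := norm_sub_le (G z - G a) (G z - deriv G a * z - (G a - deriv G a * a))
    rw [← hlin, norm_mul] at htri
    rw [mem_sphere_iff_norm.mp hz] at htri hrem
    nlinarith [mul_nonneg (norm_nonneg (deriv G a)) hr.le]
  · have hGw := (hG.differentiableAt (isOpen_ball.mem_nhds (hsub hw))).hasDerivAt
    simpa using (hGw.fun_sub ((hasDerivAt_id w).const_mul (deriv G a))).hasDerivWithinAt
  · refine (norm_deriv_sub_deriv_le hG hle (hsub hw)).trans ?_
    calc 3 * ‖deriv G a‖ / r * ‖w - a‖ ≤ 3 * ‖deriv G a‖ / r * (r / 8) := by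
          gcongr
          exact mem_closedBall_iff_norm.mp hw
      _ = 3 * ‖deriv G a‖ / 8 := by field

theorem ball_subset_image_of_norm_deriv_le (hr : 0 < r) (hG : DifferentiableOn ℂ G (ball a r))
    (hle : ∀ z ∈ ball a r, ‖deriv G z‖ ≤ 2 * ‖deriv G a‖) :
    ball (G a) (‖deriv G a‖ * r / 32) ⊆ G '' ball a r := by
  rcases eq_or_ne (deriv G a) 0 with h0 | h0
  · simp [h0]
  have hsub : closedBall a (r / 8) ⊆ ball a r := closedBall_subset_ball (by linarith)
  have hfreq : ∃ᶠ z in 𝓝 a, G z ≠ G a := fun hconst => by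
    have heq : G =ᶠ[𝓝 a] fun _ => G a := hconst.mono fun _ => not_not.mp
    exact h0 (by rw [heq.deriv_eq, deriv_const])
  have himage := ((hG.mono (closure_ball_subset_closedBall.trans hsub)).diffContOnCl
    ).ball_subset_image_closedBall (by positivity)
      (fun z hz => le_norm_sub_of_mem_sphere hr hG hle hz) hfreq
  rw [show ‖deriv G a‖ * r / 32 = ‖deriv G a‖ * r / 16 / 2 by ring]
  exact himage.trans (image_mono hsub)

theorem exists_ball_norm_deriv_le (hG : DifferentiableOn ℂ G (ball 0 1)) (h0 : deriv G 0 ≠ 0) :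
    ∃ a r, 0 < r ∧ ball a r ⊆ ball 0 1 ∧ (∀ z ∈ ball a r, ‖deriv G z‖ ≤ 2 * ‖deriv G a‖) ∧
      ‖deriv G 0‖ / 4 ≤ ‖deriv G a‖ * r := by
  have hsub : closedBall (0 : ℂ) (1 / 2) ⊆ ball 0 1 := closedBall_subset_ball (by norm_num)
  have hcont : ContinuousOn (fun z => ‖deriv G z‖ * (1 / 2 - ‖z‖)) (closedBall 0 (1 / 2)) :=
    ((hG.deriv isOpen_ball).continuousOn.mono hsub).norm.mul (by fun_prop)
  obtain ⟨a, -, hmax⟩ := (isCompact_closedBall (0 : ℂ) (1 / 2)).exists_isMaxOn ⟨0, by simp⟩ hcont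
  have hmax0 : ‖deriv G 0‖ * (1 / 2 - ‖(0 : ℂ)‖) ≤ ‖deriv G a‖ * (1 / 2 - ‖a‖) :=
    hmax (mem_closedBall_self (by norm_num))
  rw [norm_zero, sub_zero] at hmax0
  obtain ⟨r, hr⟩ : ∃ r, 1 / 2 - ‖a‖ = 2 * r := ⟨(1 / 2 - ‖a‖) / 2, by ring⟩
  rw [hr] at hmax0
  have hrpos : 0 < r := by
    have hpos : 0 < ‖deriv G a‖ * (2 * r) := by
      linarith [norm_pos_iff.mpr h0]
    linarith [pos_of_mul_pos_right hpos (norm_nonneg _)]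
  have hnorm (z : ℂ) (hz : z ∈ ball a r) : ‖z‖ < ‖a‖ + r := by
    linarith [norm_le_norm_sub_add z a, mem_ball_iff_norm.mp hz]
  have hball : ball a r ⊆ closedBall 0 (1 / 2) := fun z hz =>
    mem_closedBall_zero_iff.mpr (by linarith [hnorm z hz])
  refine ⟨a, r, hrpos, hball.trans hsub, fun z hz => ?_, by linarith⟩
  have hmaxz : ‖deriv G z‖ * (1 / 2 - ‖z‖) ≤ ‖deriv G a‖ * (1 / 2 - ‖a‖) := hmax (hball hz)
  rw [hr] at hmaxz
  have hz' : ‖deriv G z‖ * r ≤ ‖deriv G z‖ * (1 / 2 - ‖z‖) := by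
    gcongr
    linarith [hnorm z hz]
  refine le_of_mul_le_mul_right ?_ hrpos
  linarith

theorem exists_ball_subset_image (hG : DifferentiableOn ℂ G (ball 0 1)) :
    ∃ w, ball w (‖deriv G 0‖ / 128) ⊆ G '' ball 0 1 := by
  rcases eq_or_ne (deriv G 0) 0 with h0 | h0
  · exact ⟨0, by simp [h0]⟩
  obtain ⟨a, r, hr, hsub, hle, hder⟩ := exists_ball_norm_deriv_le hG h0
  refine ⟨G a, (ball_subset_ball ?_).trans
    ((ball_subset_image_of_norm_deriv_le hr (hG.mono hsub) hle).trans (image_mono hsub))⟩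
  linarith

theorem norm_deriv_le_of_sub_ne (hG : DifferentiableOn ℂ G (ball 0 1))
    (homit : ∀ z ∈ ball (0 : ℂ) 1, ∀ w ∈ ball (0 : ℂ) 1, G z - G w ≠ 2 * Real.pi * Complex.I) :
    ‖deriv G 0‖ ≤ 128 * Real.pi := by
  by_contra! hbig
  obtain ⟨c, hc⟩ := exists_ball_subset_image hG
  have hnorm : ‖(Real.pi : ℂ) * Complex.I‖ < ‖deriv G 0‖ / 128 := by
    simp only [norm_mul, Complex.norm_real, Real.norm_of_nonneg Real.pi_pos.le, Complex.norm_I]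
    linarith
  obtain ⟨z, hz, hGz⟩ := hc (show c + Real.pi * Complex.I ∈ _ by simpa using hnorm)
  obtain ⟨w, hw, hGw⟩ := hc (show c - Real.pi * Complex.I ∈ _ by simpa using hnorm)
  exact homit z hz w hw (by rw [hGz, hGw]; ring)

end Bloch

theorem hasDerivAt_of_exp_eqOn {G F : ℂ → ℂ} {U : Set ℂ} (hU : IsOpen U) (hG : ContinuousOn G U)
    (hF : DifferentiableOn ℂ F U) (hexp : ∀ z ∈ U, Complex.exp (G z) = F z) {z : ℂ} (hz : z ∈ U) :
    HasDerivAt G (deriv F z / F z) z := by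
  have hstrict := Complex.hasStrictDerivAt_exp (G z)
  have hinv : HasDerivAt (hstrict.localInverse _ _ _ (Complex.exp_ne_zero _))
      (Complex.exp (G z))⁻¹ (F z) := by
    rw [← hexp z hz]
    exact (hstrict.to_localInverse (Complex.exp_ne_zero _)).hasDerivAt
  have hcomp := hinv.comp z (hF.differentiableAt (hU.mem_nhds hz)).hasDerivAt
  rw [← hexp z hz, div_eq_inv_mul]
  refine hcomp.congr_of_eventuallyEq ?_
  have hleft := (hG.continuousAt (hU.mem_nhds hz)).eventually
    (hstrict.hasStrictFDerivAt_equiv (Complex.exp_ne_zero _)).eventually_left_inverse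
  filter_upwards [hleft, hU.mem_nhds hz] with w hw hwU
  rw [Function.comp_apply, ← hexp w hwU]
  exact hw.symm

/-! ### Boundary points with a `C¹` defining function -/

theorem inter_frontier_nonempty_of_isPreconnected {X : Type*} [TopologicalSpace X] {s t : Set X}
    (hs : IsPreconnected s) (hin : (s ∩ t).Nonempty) (hout : (s \ t).Nonempty) :
    (s ∩ frontier t).Nonempty := by
  by_contra! hempty
  have hfront (x : X) (hx : x ∈ s) : x ∉ frontier t := fun hxt =>
    hempty.subset (mem_inter hx hxt)
  obtain ⟨x, hxs, hxt⟩ := hin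
  obtain ⟨y, hys, hyt⟩ := hout
  have hcover : s ⊆ interior t ∪ (closure t)ᶜ := fun z hz => by
    by_contra! hcon
    rw [mem_union, mem_compl_iff, not_or, not_not] at hcon
    exact hfront z hz ⟨hcon.2, hcon.1⟩
  have hx : x ∈ interior t := (hcover hxs).resolve_right (· (subset_closure hxt))
  have hy : y ∈ (closure t)ᶜ := (hcover hys).resolve_left (hyt <| interior_subset ·)
  obtain ⟨z, -, hz, hz'⟩ := hs _ _ isOpen_interior isClosed_closure.isOpen_compl hcover
    ⟨x, hxs, hx⟩ ⟨y, hys, hy⟩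
  exact hz' (subset_closure (interior_subset hz))

theorem mem_frontier_inter {X : Type*} [TopologicalSpace X] {s U : Set X} (hs : IsOpen s)
    (hU : IsOpen U) {x : X} (hx : x ∈ frontier s) (hxU : x ∈ U) : x ∈ frontier (s ∩ U) := by
  rw [hs.frontier_eq] at hx
  rw [(hs.inter hU).frontier_eq]
  exact ⟨hU.closure_inter ⟨hx.1, hxU⟩, fun h => hx.2 h.1⟩

section BoundaryDistance

variable {D : Set E} {x : E}

theorem ball_bdist_subset (hx : x ∈ D) : ball x (bdist D x) ⊆ D := by
  intro y hy
  by_contra hyD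
  have hxball : x ∈ ball x (bdist D x) := mem_ball_self (dist_nonneg.trans_lt hy)
  obtain ⟨w, hw, hwD⟩ := inter_frontier_nonempty_of_isPreconnected
    (convex_ball x (bdist D x)).isPreconnected ⟨x, hxball, hx⟩ ⟨y, hy, hyD⟩
  exact disjoint_ball_infDist.le_bot ⟨hw, hwD⟩

omit [NormedSpace ℂ E] in
theorem le_bdist (hD : IsOpen D) {r : ℝ} (hball : ball x r ⊆ D) (hne : (frontier D).Nonempty) :
    r ≤ bdist D x := by
  refine (le_infDist hne).mpr fun y hy => not_lt.mp fun hyr => ?_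
  rw [hD.frontier_eq] at hy
  exact hy.2 (hball (mem_ball'.mpr hyr))

omit [NormedSpace ℂ E] in
theorem bdist_pos (hD : IsOpen D) (hne : (frontier D).Nonempty) (hx : x ∈ D) : 0 < bdist D x := by
  obtain ⟨r, hr, hball⟩ := isOpen_iff.mp hD x hx
  exact hr.trans_le (le_bdist hD hball hne)

omit [NormedSpace ℂ E] in
theorem bdist_le_dist {p : E} (hp : p ∈ frontier D) : bdist D x ≤ dist x p :=
  infDist_le_dist_of_mem hp

theorem frontier_inter_line_nonempty (hD : Bornology.IsBounded D) (hx : x ∈ D) {v : E}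
    (hv : v ≠ 0) : (frontier D ∩ {w | ∃ c : ℂ, w = x + c • v}).Nonempty := by
  have hline : IsPreconnected {w | ∃ c : ℂ, w = x + c • v} := by
    convert isPreconnected_range (show Continuous fun c : ℂ => x + c • v by fun_prop) using 1
    exact ext fun w => exists_congr fun c => eq_comm
  obtain ⟨R, hR⟩ := hD.subset_ball x
  have hout : x + ((R / ‖v‖ : ℝ) : ℂ) • v ∉ D := fun hmem => by
    have hlt := hR hmem
    rw [mem_ball_iff_norm, add_sub_cancel_left, norm_smul, Complex.norm_real, norm_div, norm_norm,
      div_mul_cancel₀ _ (norm_ne_zero_iff.mpr hv)] at hlt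
    exact (le_abs_self R).not_gt hlt
  rw [inter_comm]
  exact inter_frontier_nonempty_of_isPreconnected hline ⟨x, ⟨0, by simp⟩, hx⟩ ⟨_, ⟨_, rfl⟩, hout⟩

end BoundaryDistance

namespace IsLocalDefiningFn

variable {D W : Set E} {ρ : E → ℝ} {ξ : E}

theorem nonpos_of_mem_closure (h : IsLocalDefiningFn D ξ W ρ) {x : E} (hx : x ∈ closure D)
    (hxW : x ∈ W) : ρ x ≤ 0 := by
  obtain ⟨-, -, -, -, hDW, hfW⟩ := h
  rw [closure_eq_self_union_frontier] at hx
  rcases hx with hx | hx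
  · exact (hDW.subset ⟨hx, hxW⟩).2.le
  · exact (hfW.subset ⟨hx, hxW⟩).2.le

theorem eventually_mem (h : IsLocalDefiningFn D ξ W ρ) {κ : ℝ} (hκ : 0 < κ) :
    ∀ᶠ q : E × E in 𝓝 (ξ, ξ), q.1 ∈ closure D →
      κ * ‖q.2 - q.1‖ < -fderiv ℝ ρ ξ (q.2 - q.1) → q.2 ∈ D := by
  have hstrict : HasStrictFDerivAt ρ (fderiv ℝ ρ ξ) ξ :=
    (h.2.2.1.contDiffAt (h.1.mem_nhds h.2.1)).hasStrictFDerivAt one_ne_zero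
  have hW : ∀ᶠ x in 𝓝 ξ, x ∈ W := h.1.mem_nhds h.2.1
  have hswap := (continuous_swap.tendsto (ξ, ξ)).eventually (hstrict.isLittleO.bound hκ)
  filter_upwards [hswap, hW.prod_nhds hW] with ⟨x, y⟩ hlin hxyW hx hxy
  have hle := (le_abs_self _).trans hlin
  have hρx := h.nonpos_of_mem_closure hx hxyW.1
  simp only [Prod.swap_prod_mk] at hle hxy
  exact (h.2.2.2.2.1.symm.subset ⟨hxyW.2, by linarith⟩ : y ∈ D ∩ W).1

theorem exists_pos_forall_add_smul_mem (h : IsLocalDefiningFn D ξ W ρ) (hξ : ξ ∈ closure D)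
    {a B : ℝ} (ha : 0 < a) (hB : 0 < B) :
    ∃ ε : ℝ, 0 < ε ∧ ∀ v, ‖v‖ ≤ B → fderiv ℝ ρ ξ v ≤ -a → ξ + ε • v ∈ D := by
  obtain ⟨δ, hδ, hmem⟩ := eventually_nhds_iff_ball.mp
    (h.eventually_mem (κ := a / (2 * B)) (by positivity))
  refine ⟨δ / (2 * B), by positivity, fun v hv hav => ?_⟩
  have hnorm : ‖(δ / (2 * B)) • v‖ ≤ δ / (2 * B) * B := by
    rw [norm_smul, Real.norm_of_nonneg (by positivity)]
    gcongr
  refine hmem (ξ, _) ?_ hξ ?_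
  · rw [mem_ball, Prod.dist_eq, max_lt_iff, dist_self, dist_self_add_left]
    refine ⟨hδ, hnorm.trans_lt ?_⟩
    field_simp
    norm_num
  · rw [add_sub_cancel_left, map_smul, smul_eq_mul]
    calc a / (2 * B) * ‖(δ / (2 * B)) • v‖ ≤ a / (2 * B) * (δ / (2 * B) * B) := by gcongr
      _ < δ / (2 * B) * a := by field_simp; norm_num
      _ ≤ -(δ / (2 * B) * fderiv ℝ ρ ξ v) := by
        rw [← mul_neg]
        gcongr
        linarith

theorem exists_forall_ball_subset (h : IsLocalDefiningFn D ξ W ρ) :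
    ∃ (n : E) (c r s₀ : ℝ), 0 < c ∧ 0 < r ∧ 0 < s₀ ∧ ∀ x ∈ D, dist x ξ < r →
      ∀ s, 0 ≤ s → s ≤ s₀ → ball (x + (s : ℂ) • n) (c * s) ⊆ D := by
  set A := fderiv ℝ ρ ξ
  obtain ⟨n, hn⟩ := LinearMap.surjective (f := A.toLinearMap)
    (fun hzero => h.2.2.2.1 ξ h.2.1 (ContinuousLinearMap.coe_injective hzero)) (-1)
  obtain ⟨c, hc, hAc⟩ : ∃ c > 0, ‖A‖ * c ≤ 1 / 2 :=
    ⟨1 / (2 * (‖A‖ + 1)), by positivity, by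
      rw [mul_one_div, div_le_div_iff₀ (by positivity) two_pos]; linarith⟩
  have hB : 0 < ‖n‖ + c := by positivity
  have hmem := h.eventually_mem (κ := 1 / (4 * (‖n‖ + c))) (by positivity)
  obtain ⟨r, hr, hball⟩ := eventually_nhds_iff_ball.mp hmem
  refine ⟨n, c, r / 2, r / 2 / (‖n‖ + c), hc, half_pos hr, by positivity, ?_⟩
  intro x hx hxξ s hs hs₀ y hy
  rw [le_div_iff₀ hB] at hs₀
  obtain ⟨w, rfl⟩ : ∃ w, y = x + (s • n + w) := ⟨y - x - s • n, by abel⟩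
  have hw : ‖w‖ < c * s := by
    rwa [mem_ball_iff_norm, Complex.coe_smul, ← add_assoc, add_sub_cancel_left] at hy
  have hs' : 0 < s := pos_of_mul_pos_right ((norm_nonneg w).trans_lt hw) hc.le
  have hnorm : ‖s • n + w‖ ≤ s * (‖n‖ + c) := by
    have := norm_add_le (s • n) w
    rw [norm_smul, Real.norm_of_nonneg hs] at this
    linarith
  have hAw : A w ≤ s / 2 := by
    have := (le_abs_self _).trans ((A.le_opNorm w).trans
      (mul_le_mul_of_nonneg_left hw.le (norm_nonneg A)))
    nlinarith
  have hAn : A n = -1 := hn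
  refine hball (x, x + (s • n + w)) ?_ (subset_closure hx) ?_
  · rw [mem_ball, Prod.dist_eq, max_lt_iff]
    refine ⟨by linarith, (dist_triangle _ x ξ).trans_lt ?_⟩
    rw [dist_self_add_left]
    linarith
  · simp only [add_sub_cancel_left]
    calc 1 / (4 * (‖n‖ + c)) * ‖s • n + w‖ ≤ 1 / (4 * (‖n‖ + c)) * (s * (‖n‖ + c)) := by gcongr
      _ = s / 4 := by field
      _ < s - A w := by linarith
      _ = -A (s • n + w) := by rw [map_add, map_smul, hAn, smul_eq_mul]; ring

end IsLocalDefiningFn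

/-! ### Lower bounds for the Kobayashi metric of `ℂ`-convex sets -/

theorem not_forall_exp_eq_sphere {R : ℝ} (hR : 0 < R) {l : sphere (0 : ℂ) R → ℂ}
    (hl : Continuous l) : ¬ ∀ t, Complex.exp (l t) = t := by
  intro hexp
  have hmem (θ : ℝ) : circleMap 0 R θ ∈ sphere (0 : ℂ) R := circleMap_mem_sphere 0 hR.le θ
  have hRC : (R : ℂ) ≠ 0 := by exact_mod_cast hR.ne'
  have hcont : Continuous fun θ : ℝ =>
      l ⟨circleMap 0 R θ, hmem θ⟩ - θ * Complex.I - Complex.log R := by fun_prop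
  have hconst := eq_of_isPreconnected_of_exp_eq_one isPreconnected_univ hcont.continuousOn
    (fun θ _ => ?_) (mem_univ 0) (mem_univ (2 * Real.pi))
  · have hperiod : circleMap 0 R (2 * Real.pi) = circleMap 0 R 0 := by
      simpa using periodic_circleMap 0 R 0
    simp only [hperiod, Complex.ofReal_zero, zero_mul, sub_zero, sub_left_inj] at hconst
    simp [Real.pi_ne_zero, sub_eq_add_neg] at hconst
  · rw [Complex.exp_sub, Complex.exp_sub, hexp, Complex.exp_log hRC, Subtype.coe_mk, circleMap_zero,
      mul_div_cancel_right₀ _ (Complex.exp_ne_zero _), div_self hRC]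

namespace CConvex

variable {D : Set E} {p : E}

-- Otherwise `t` would have a continuous logarithm on a circle around `0`.
theorem mem_of_forall_mem_sphere (hDo : IsOpen D) (hD : CConvex D) {R : ℝ} (hR : 0 < R)
    {w : sphere (0 : ℂ) R → E} (hw : Continuous w) (h₀ : ∀ t, p + t.1 • w t ∈ D)
    (h₁ : ∀ t, p + w t ∈ D) : p ∈ D := by
  by_contra hp
  obtain ⟨l, hl, hexp⟩ := hD.exists_continuous_exp_mul_eq hDo
    (x := fun t => p + t.1 • w t) (y := fun t => p + w t) (by fun_prop) (by fun_prop) h₀ h₁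
    (u := fun t c => (1 - c) * t.1 + c) (by fun_prop) fun t c hmem hzero => hp <| by
      have hpoint : p + t.1 • w t + c • (p + w t - (p + t.1 • w t)) =
          p + ((1 - c) * t.1 + c) • w t := by module
      rwa [hpoint, hzero, zero_smul, add_zero] at hmem
  refine not_forall_exp_eq_sphere hR (l := fun t => -l t) hl.neg fun t => ?_
  have ht := hexp t
  rw [sub_zero, one_mul, add_zero, sub_self, zero_mul, zero_add] at ht
  rw [Complex.exp_neg]
  exact inv_eq_of_mul_eq_one_right ht

theorem extendRCLike_fderiv_sub_ne_zero (hDo : IsOpen D) (hD : CConvex D) (hp : p ∈ frontier D)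
    {W : Set E} {ρ : E → ℝ} (hρ : IsLocalDefiningFn D p W ρ) {q : E} (hq : q ∈ D) :
    StrongDual.extendRCLike (𝕜 := ℂ) (fderiv ℝ ρ p) (q - p) ≠ 0 := by
  set h := StrongDual.extendRCLike (𝕜 := ℂ) (fderiv ℝ ρ p) with hh
  have hre (v : E) : fderiv ℝ ρ p v = (h v).re := by simp [hh, StrongDual.extendRCLike_apply]
  intro hzero
  obtain ⟨n, hn⟩ := LinearMap.surjective (f := h.toLinearMap) (fun h0 => hρ.2.2.2.1 p hρ.2.1 <| by
    ext v
    simpa [h0] using (hre v).trans (congrArg (fun L : E →ₗ[ℂ] ℂ => (L v).re) h0)) (-1)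
  have hn' : h n = -1 := hn
  obtain ⟨r, hr, hqr⟩ := isOpen_iff.mp hDo q hq
  set K := (‖n‖ + 1) / r with hK
  have : 0 < K := by positivity
  obtain ⟨ε, hε, hmem⟩ := hρ.exists_pos_forall_add_smul_mem (frontier_subset_closure hp) one_pos
    (B := ‖n‖ + K * ‖q - p‖ + 1) (by positivity)
  have hεC : (ε : ℂ) ≠ 0 := by exact_mod_cast hε.ne'
  have htn (t : sphere (0 : ℂ) (ε * K)) : ‖t.1‖ = ε * K := mem_sphere_zero_iff_norm.mp t.2
  have ht0 (t : sphere (0 : ℂ) (ε * K)) : t.1 ≠ 0 :=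
    norm_ne_zero_iff.mp (by rw [htn]; positivity)
  refine (hDo.frontier_eq.subset hp).2 (hD.mem_of_forall_mem_sphere (R := ε * K) hDo (by positivity)
    (w := fun t => (q - p) + (ε * t.1⁻¹) • n) (by fun_prop (disch := assumption))
    (fun t => ?_) fun t => ?_)
  · have hpoint : p + t.1 • (q - p + (ε * t.1⁻¹) • n) =
        p + ε • (n + ((ε : ℂ)⁻¹ * t) • (q - p)) := by
      rw [← Complex.coe_smul ε, smul_add, smul_add, smul_smul, smul_smul, mul_left_comm,
        mul_inv_cancel₀ (ht0 t), mul_one, mul_inv_cancel_left₀ hεC, add_comm (t.1 • (q - p))]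
    rw [hpoint]
    refine hmem _ ((norm_add_le _ _).trans ?_) ?_
    · rw [norm_smul, norm_mul, norm_inv, htn, Complex.norm_real, Real.norm_of_nonneg hε.le,
        inv_mul_cancel_left₀ hε.ne']
      linarith
    · simp [hre, hzero, hn']
  · refine hqr ?_
    rw [← add_assoc, add_sub_cancel, mem_ball, dist_self_add_left, norm_smul, norm_mul, norm_inv,
      htn, Complex.norm_real, Real.norm_of_nonneg hε.le, hK]
    field_simp
    linarith

end CConvex

namespace CConvex

variable {D : Set E} {p : E} {h : StrongDual ℂ E}

theorem exists_continuousOn_exp_eq (hDo : IsOpen D) (hD : CConvex D)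
    (hh : ∀ x ∈ D, h (x - p) ≠ 0) :
    ∃ l : E → ℂ, ContinuousOn l D ∧ (∀ x ∈ D, Complex.exp (l x) = h (x - p)) ∧
      ∀ x ∈ D, ∀ y ∈ D, h x = h y → l x = l y := by
  classical
  rcases D.eq_empty_or_nonempty with rfl | ⟨z, hz⟩
  · exact ⟨0, by simp⟩
  obtain ⟨l, hl, hexp⟩ := hD.exists_continuous_exp_mul_eq hDo (T := D) (x := fun _ => z)
    (y := Subtype.val) continuous_const continuous_subtype_val (fun _ => hz) Subtype.prop
    (u := fun t c => h (z + c • (t.1 - z) - p)) (by fun_prop) fun t c hmem => hh _ hmem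
  simp only [zero_smul, add_zero, one_smul, add_sub_cancel] at hexp
  let L : E → ℂ := fun x => if hx : x ∈ D then l ⟨x, hx⟩ + Complex.log (h (z - p)) else 0
  have hL (x : D) : L x = l x + Complex.log (h (z - p)) := by simp [L]
  have hLcont : ContinuousOn L D := by
    rw [continuousOn_iff_continuous_domRestrict]
    exact (hl.add continuous_const).congr fun x => (hL x).symm
  have hLexp (x : E) (hx : x ∈ D) : Complex.exp (L x) = h (x - p) := by
    rw [hL ⟨x, hx⟩, Complex.exp_add, Complex.exp_log (hh z hz), hexp]
  refine ⟨L, hLcont, hLexp, fun x hx y hy hxy => ?_⟩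
  rcases eq_or_ne x y with rfl | hne
  · rfl
  have hx' : x ∈ D ∩ {w | ∃ c : ℂ, w = x + c • (y - x)} := ⟨hx, 0, by simp⟩
  have hconst := eq_of_isPreconnected_of_exp_eq_one (H := fun w => L w - L x)
    (hD x (y - x) (sub_ne_zero.mpr hne.symm) ⟨x, hx'⟩).1.isPreconnected
    ((hLcont.mono inter_subset_left).sub continuousOn_const) ?_ hx' ⟨hy, 1, by simp⟩
  · exact (sub_left_inj.mp hconst)
  · rintro w ⟨hw, c, rfl⟩
    have hconst : h (x + c • (y - x) - p) = h (x - p) := by simp [hxy]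
    rw [Complex.exp_sub, hLexp _ hw, hLexp x hx, hconst, div_self (hh x hx)]

-- Along a disc `f`, no two values of a logarithm of `h (f · - p)` differ by `2πi`, so its image
-- contains no disc of radius greater than `π`.
theorem norm_apply_le_mul_kobMetric (hDo : IsOpen D) (hD : CConvex D)
    (hh : ∀ x ∈ D, h (x - p) ≠ 0) {z : E} (hz : z ∈ D) (v : E) :
    ‖h v‖ ≤ 128 * Real.pi * ‖h (z - p)‖ * kobMetric D z v := by
  have hzp : 0 < ‖h (z - p)‖ := norm_pos_iff.mpr (hh z hz)
  obtain ⟨l, hl, hexp, hfiber⟩ := hD.exists_continuousOn_exp_eq hDo hh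
  rw [← div_le_iff₀' (by positivity)]
  refine le_kobMetric hDo hz fun f ξ hf => ?_
  have hfd := hf.differentiableOn
  have hlog (w : ℂ) (hw : w ∈ ball (0 : ℂ) 1) := hasDerivAt_of_exp_eqOn (G := fun w => l (f w))
    (F := fun w => h (f w - p)) isOpen_ball (hl.comp hfd.continuousOn hf.mapsTo) (by fun_prop)
    (fun w hw => hexp _ (hf.mapsTo hw)) hw
  have homit (a : ℂ) (ha : a ∈ ball (0 : ℂ) 1) (b : ℂ) (hb : b ∈ ball (0 : ℂ) 1) :
      l (f a) - l (f b) ≠ 2 * Real.pi * Complex.I := fun hab => by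
    have heq : h (f a - p) = h (f b - p) := by
      rw [← hexp _ (hf.mapsTo ha), ← hexp _ (hf.mapsTo hb), sub_eq_iff_eq_add.mp hab,
        Complex.exp_add, Complex.exp_two_pi_mul_I, one_mul]
    rw [hfiber _ (hf.mapsTo ha) _ (hf.mapsTo hb) (by simpa using heq), sub_self] at hab
    exact Complex.two_pi_I_ne_zero hab.symm
  have hbloch := norm_deriv_le_of_sub_ne
    (fun w hw => (hlog w hw).differentiableAt.differentiableWithinAt) homit
  have hder : HasDerivAt (fun w => h (f w - p)) (h (deriv f 0)) 0 :=
    h.hasFDerivAt.comp_hasDerivAt (0 : ℂ) (hf.hasDerivAt.sub_const p)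
  rw [(hlog 0 (mem_ball_self one_pos)).deriv, hder.deriv, hf.map_zero, norm_div,
    div_le_iff₀ hzp] at hbloch
  rw [div_le_iff₀ (by positivity), ← hf.smul_deriv, map_smul, norm_smul]
  gcongr

end CConvex

/-- Near each of its boundary points, `D` has a `C¹` local defining function. -/
def HasC1Boundary (D : Set E) : Prop :=
  ∀ p ∈ frontier D, ∃ W ρ, IsLocalDefiningFn D p W ρ

theorem HasC1Boundary.of_diniSmoothBoundaryPoint {D : Set E}
    (h : ∀ p ∈ frontier D, DiniSmoothBoundaryPoint D p) : HasC1Boundary D := fun p hp =>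
  have ⟨W, ρ, _, hρ, _⟩ := h p hp
  ⟨W, ρ, hρ⟩

theorem CConvex.norm_le_mul_bdistDir_mul_kobMetric {D : Set E} (hDo : IsOpen D)
    (hb : Bornology.IsBounded D) (hD : CConvex D) (hC1 : HasC1Boundary D) {z : E} (hz : z ∈ D)
    {v : E} (hv : v ≠ 0) : ‖v‖ ≤ 128 * Real.pi * bdistDir D z v * kobMetric D z v := by
  have hne := frontier_inter_line_nonempty hb hz hv
  have hpoint (p : E) (hp : p ∈ frontier D ∩ {w | ∃ c : ℂ, w = z + c • v}) :
      ‖v‖ ≤ 128 * Real.pi * kobMetric D z v * dist z p := by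
    obtain ⟨hpD, c, rfl⟩ := hp
    obtain ⟨W, ρ, hρ⟩ := hC1 _ hpD
    have hh (x : E) (hx : x ∈ D) := hD.extendRCLike_fderiv_sub_ne_zero hDo hpD hρ hx
    have hle := hD.norm_apply_le_mul_kobMetric hDo hh hz v
    have hzp := hh z hz
    rw [sub_add_cancel_left, ← neg_smul, map_smul, smul_eq_mul] at hle hzp
    have hhv := norm_pos_iff.mpr (right_ne_zero_of_mul hzp)
    rw [norm_mul, norm_neg] at hle
    rw [dist_self_add_right, norm_smul]
    have hone : 1 ≤ 128 * Real.pi * ‖c‖ * kobMetric D z v :=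
      le_of_mul_le_mul_right (by linarith) hhv
    linarith [mul_le_mul_of_nonneg_right hone (norm_nonneg v)]
  have hk : 0 < kobMetric D z v := by
    refine (kobMetric_nonneg D z v).lt_of_ne' fun hzero => hv (norm_le_zero_iff.mp ?_)
    obtain ⟨p, hp⟩ := hne
    simpa [hzero] using hpoint p hp
  have hinf : ‖v‖ / (128 * Real.pi * kobMetric D z v) ≤ bdistDir D z v :=
    (le_infDist hne).mpr fun p hp => (div_le_iff₀' (by positivity)).mpr (hpoint p hp)
  rw [div_le_iff₀' (by positivity)] at hinf
  linarith

/-- The lower bound on the Kobayashi metric of `D` which makes `D` visible: vectors of length one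
have Kobayashi length at least `|log bdist|^(1 + ν) / C`. -/
structure LogTypeMetric (D : Set E) (C ν : ℝ) : Prop where
  pos_const : 0 < C
  pos_exponent : 0 < ν
  norm_le : ∀ z ∈ D, ∀ v : E, ‖v‖ ≤ C / |Real.log (bdist D z)| ^ (1 + ν) * kobMetric D z v

theorem CConvex.logTypeMetric {D : Set E} (hDo : IsOpen D) (hb : Bornology.IsBounded D)
    (hD : CConvex D) (hC1 : HasC1Boundary D) {C ν : ℝ} (hC : 0 < C) (hν : 0 < ν)
    (hlog : ∀ z ∈ D, ∀ v : E, v ≠ 0 → bdistDir D z v ≤ C / |Real.log (bdist D z)| ^ (1 + ν)) :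
    LogTypeMetric D (128 * Real.pi * C) ν := by
  refine ⟨by positivity, hν, fun z hz v => ?_⟩
  have hk := kobMetric_nonneg D z v
  rcases eq_or_ne v 0 with rfl | hv
  · rw [norm_zero]
    positivity
  · calc ‖v‖ ≤ 128 * Real.pi * bdistDir D z v * kobMetric D z v :=
          hD.norm_le_mul_bdistDir_mul_kobMetric hDo hb hC1 hz hv
      _ ≤ 128 * Real.pi * (C / |Real.log (bdist D z)| ^ (1 + ν)) * kobMetric D z v := by
        gcongr
        exact hlog z hz v hv
      _ = 128 * Real.pi * C / |Real.log (bdist D z)| ^ (1 + ν) * kobMetric D z v := by ring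

theorem LogTypeCConvex.exists_logTypeMetric {D : Set E} (h : LogTypeCConvex D)
    (hC1 : HasC1Boundary D) : ∃ C ν, LogTypeMetric D C ν :=
  have ⟨hDo, _, hb, hD, _, _, hC, hν, hlog⟩ := h
  ⟨_, _, hD.logTypeMetric hDo hb hC1 hC hν hlog⟩

theorem LogTypeConvex.logTypeCConvex {D : Set E} (h : LogTypeConvex D) : LogTypeCConvex D :=
  have ⟨C, ν, hDo, hne, hb, hD, hC, hν, hlog⟩ := h
  ⟨hDo, hne, hb, cConvex_of_convex hD, C, ν, hC, hν, hlog⟩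

/-! ### A logarithmic upper bound for the Kobayashi distance -/

section FiniteDimensional

variable [FiniteDimensional ℂ E]

theorem kobDist_add_smul_le_sub {D : Set E} (hD : IsOpen D) {x v : E} {s : ℝ} (hs : 0 ≤ s)
    {Φ φ : ℝ → ℝ} (hΦ : ∀ t ∈ Icc 0 s, HasDerivAt Φ (φ t) t) (hφ : ContinuousOn φ (Icc 0 s))
    (hball : ∀ t ∈ Icc 0 s, ∃ r > 0, ball (x + t • v) r ⊆ D ∧ ‖v‖ / r ≤ φ t) :
    kobDist D x (x + s • v) ≤ Φ s - Φ 0 := by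
  have hmem : ∀ t ∈ Icc 0 s, x + t • v ∈ D := fun t ht => by
    obtain ⟨r, hr, hrD, -⟩ := hball t ht
    exact hrD (mem_ball_self hr)
  have hcurve := isACCurveIn_add_smul hs hmem
  have hlength := hcurve.kobLength_le_sub hD hΦ hφ fun t ht => by
    obtain ⟨r, hr, hrD, hle⟩ := hball t ht
    exact (kobMetric_le_norm_div hr hrD v).trans hle
  simpa only [zero_smul, add_zero] using hcurve.kobDist_le.trans hlength

theorem kobDist_le_one_of_ball_subset {D : Set E} (hD : IsOpen D) {x y : E} {r : ℝ} (hr : 0 < r)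
    (hball : ball x (2 * r) ⊆ D) (hxy : dist x y ≤ r) : kobDist D x y ≤ 1 := by
  have hle := kobDist_add_smul_le_sub hD (x := x) (v := y - x) zero_le_one
    (fun t _ => hasDerivAt_id t) continuousOn_const fun t ht =>
      ⟨r, hr, (ball_subset_ball' ?_).trans hball, ?_⟩
  · simpa using hle
  · rw [dist_self_add_left, norm_smul, Real.norm_of_nonneg ht.1, ← dist_eq_norm', two_mul]
    gcongr
    exact (mul_le_of_le_one_left dist_nonneg ht.2).trans hxy
  · rwa [div_le_one hr, ← dist_eq_norm']

theorem kobDist_add_smul_le_log {D : Set E} (hD : IsOpen D) {x v : E} {s δ c : ℝ} (hs : 0 ≤ s)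
    (hδ : 0 < δ) (hc : 0 < c) (hball : ∀ t ∈ Icc 0 s, ball (x + t • v) (c * (δ + t)) ⊆ D) :
    kobDist D x (x + s • v) ≤ ‖v‖ / c * (Real.log (δ + s) - Real.log δ) := by
  have hpos : ∀ t ∈ Icc 0 s, 0 < δ + t := fun t ht => add_pos_of_pos_of_nonneg hδ ht.1
  have hle := kobDist_add_smul_le_sub hD hs
    (fun t ht => (((hasDerivAt_id' t).const_add δ).log (hpos t ht).ne').const_mul (‖v‖ / c))
    (continuousOn_const.mul (continuousOn_const.div (by fun_prop) fun t ht => (hpos t ht).ne'))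
    fun t ht => ⟨c * (δ + t), mul_pos hc (hpos t ht), hball t ht, ?_⟩
  · simpa [mul_sub] using hle
  · rw [← div_div, div_eq_mul_one_div (‖v‖ / c)]

omit [FiniteDimensional ℂ E] in
theorem ball_add_smul_subset_of_cone {D : Set E} {x v : E} {s δ c : ℝ} (hc : 0 < c)
    (hδ : ball x δ ⊆ D) (hcone : ∀ t ∈ Icc 0 s, ball (x + t • v) (c * t) ⊆ D) :
    ∀ t ∈ Icc 0 s, ball (x + t • v) (min (1 / 4) (c / (4 * (‖v‖ + 1))) * (δ + t)) ⊆ D := by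
  intro t ht
  have ht₀ : 0 ≤ t := ht.1
  rcases le_or_gt (δ + t) 0 with hneg | hpos
  · rw [ball_eq_empty.mpr (mul_nonpos_of_nonneg_of_nonpos (by positivity) hneg)]
    exact empty_subset D
  by_cases hnear : t * (‖v‖ + 1) ≤ δ / 2
  · refine (ball_subset_ball' ?_).trans hδ
    rw [dist_self_add_left, norm_smul, Real.norm_of_nonneg ht₀]
    calc min (1 / 4) (c / (4 * (‖v‖ + 1))) * (δ + t) + t * ‖v‖
        ≤ 1 / 4 * (δ + t) + t * ‖v‖ := by gcongr; exact min_le_left _ _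
      _ ≤ δ := by linarith [mul_nonneg ht₀ (norm_nonneg v)]
  · refine (ball_subset_ball ?_).trans (hcone t ht)
    calc min (1 / 4) (c / (4 * (‖v‖ + 1))) * (δ + t)
        ≤ c / (4 * (‖v‖ + 1)) * (δ + t) := by gcongr; exact min_le_right _ _
      _ ≤ c / (4 * (‖v‖ + 1)) * (4 * (‖v‖ + 1) * t) := by
        gcongr
        linarith [mul_nonneg ht₀ (norm_nonneg v)]
      _ = c * t := by field_simp

theorem exists_kobDist_le_sub_log_bdist {Ω U : Set E} (hΩ : IsOpen Ω) (hc : IsPreconnected Ω)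
    (hU : IsOpen U) {ξ o : E} (hξ : ξ ∈ frontier Ω) (hξU : ξ ∈ U) (ho : o ∈ Ω) {W : Set E}
    {ρ : E → ℝ} (hρ : IsLocalDefiningFn (Ω ∩ U) ξ W ρ) :
    ∃ A B r : ℝ, 0 < A ∧ 0 < r ∧ ball ξ r ⊆ U ∧ ∀ x ∈ Ω, dist x ξ < r →
      kobDist Ω x o ≤ B - A * Real.log (bdist (Ω ∩ U) x) := by
  obtain ⟨n, c, r, s, hcpos, hr, hs, hcone⟩ := hρ.exists_forall_ball_subset
  obtain ⟨r', hr', hr'U⟩ := Metric.isOpen_iff.mp hU ξ hξU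
  have hξD : ξ ∈ frontier (Ω ∩ U) := mem_frontier_inter hΩ hU hξ hξU
  obtain ⟨R, hR, hRr, hRr', hRs, hR1⟩ : ∃ R > 0, R ≤ r ∧ R ≤ r' ∧ R ≤ c * s / 4 ∧ R ≤ 1 :=
    ⟨min (min r r') (min (c * s / 4) 1), by positivity, by simp⟩
  obtain ⟨y, hyD, hyξ⟩ := Metric.mem_closure_iff.mp hξD.1 R hR
  rw [dist_comm] at hyξ
  have hcone' : ∀ x ∈ Ω ∩ U, dist x ξ < R → ∀ t ∈ Icc 0 s, ball (x + t • n) (c * t) ⊆ Ω :=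
    fun x hx hxξ t ht => by
      simpa only [Complex.coe_smul] using
        (hcone x hx (hxξ.trans_le hRr) t ht.1 ht.2).trans inter_subset_left
  have hs' : s ∈ Icc 0 s := right_mem_Icc.mpr hs.le
  have hpush : ∀ x ∈ Ω ∩ U, dist x ξ < R → x + s • n ∈ Ω := fun x hx hxξ =>
    hcone' x hx hxξ s hs' (mem_ball_self (by positivity))
  set c₁ := min (1 / 4) (c / (4 * (‖n‖ + 1)))
  have hc₁ : 0 < c₁ := by positivity
  refine ⟨(‖n‖ + 1) / c₁, (‖n‖ + 1) / c₁ * Real.log (1 + s) + 1 + kobDist Ω (y + s • n) o, R,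
    by positivity, hR, (ball_subset_ball hRr').trans hr'U, fun x hxΩ hxξ => ?_⟩
  have hxD : x ∈ Ω ∩ U := ⟨hxΩ, hr'U (hxξ.trans_le hRr')⟩
  set δ := bdist (Ω ∩ U) x
  have hδ : 0 < δ := bdist_pos (hΩ.inter hU) ⟨ξ, hξD⟩ hxD
  have hδ1 : δ ≤ 1 := (bdist_le_dist hξD).trans (hxξ.le.trans hR1)
  have hup : kobDist Ω x (x + s • n) ≤ (‖n‖ + 1) / c₁ * (Real.log (1 + s) - Real.log δ) := by
    refine (kobDist_add_smul_le_log hΩ hs.le hδ hc₁ (ball_add_smul_subset_of_cone hcpos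
      ((ball_bdist_subset hxD).trans inter_subset_left) (hcone' x hxD hxξ))).trans ?_
    gcongr
    · exact sub_nonneg.mpr (Real.log_le_log hδ (by linarith))
    · exact le_add_of_nonneg_right zero_le_one
  have hacross : kobDist Ω (x + s • n) (y + s • n) ≤ 1 := by
    refine kobDist_le_one_of_ball_subset hΩ (r := c * s / 2) (by positivity) ?_ ?_
    · rw [mul_div_cancel₀ _ two_ne_zero]
      exact hcone' x hxD hxξ s hs'
    · rw [dist_add_right]
      linarith [dist_triangle_right x y ξ]
  have htri₁ := kobDist_triangle hΩ hc hxΩ (hpush x hxD hxξ) ho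
  have htri₂ := kobDist_triangle hΩ hc (hpush x hxD hxξ) (hpush y hyD hyξ) ho
  linarith

end FiniteDimensional

/-! ### Visibility -/

theorem exists_forall_le_add_one {ι : Type*} {s : Set ι} (hs : s.Nonempty) {F : ι → ℝ}
    (hF : BddBelow (F '' s)) : ∃ i ∈ s, ∀ j ∈ s, F i ≤ F j + 1 := by
  obtain ⟨_, ⟨i, hi, rfl⟩, hlt⟩ :=
    exists_lt_of_csInf_lt (hs.image F) (lt_add_of_pos_right (sInf (F '' s)) one_pos)
  refine ⟨i, hi, fun j hj => ?_⟩
  linarith [csInf_le hF (mem_image_of_mem F hj)]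

theorem exists_eq_and_forall_le_of_continuousOn {F : ℝ → ℝ} {a b c : ℝ} (hab : a ≤ b)
    (hF : ContinuousOn F (Icc a b)) (ha : F a ≤ c) (hb : c ≤ F b) :
    ∃ t ∈ Icc a b, F t = c ∧ ∀ s ∈ Icc a t, F s ≤ c := by
  have hcompact : IsCompact (Icc a b ∩ F ⁻¹' {c}) :=
    isCompact_Icc.of_isClosed_subset
      (hF.preimage_isClosed_of_isClosed isClosed_Icc isClosed_singleton) inter_subset_left
  obtain ⟨u, hu, huc⟩ := intermediate_value_Icc hab hF ⟨ha, hb⟩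
  obtain ⟨t, ⟨ht, htc⟩, hleast⟩ := hcompact.exists_isLeast ⟨u, hu, huc⟩
  refine ⟨t, ht, htc, fun s hs => ?_⟩
  by_contra! hcs
  have hsb : s ≤ b := hs.2.trans ht.2
  obtain ⟨w, hw, hwc⟩ :=
    intermediate_value_Icc hs.1 (hF.mono (Icc_subset_Icc_right hsb)) ⟨ha, hcs.le⟩
  have hst : s = t := hs.2.antisymm ((hleast ⟨⟨hw.1, hw.2.trans hsb⟩, hwc⟩).trans hw.2)
  exact hcs.ne' (hst ▸ htc)

/-- The two estimates near `ξ` on which visibility rests: in `Ω ∩ ball ξ r` the distance to `o` is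
at most `B - A log (bdist D)` and vectors of length one have Kobayashi length at least
`|log bdist D| ^ (1 + ν) / C`. The set `D` is the piece of `Ω` near `ξ` that is well understood. -/
structure VisibilityEstimates (Ω D : Set E) (ξ o : E) (A B C ν r : ℝ) : Prop where
  isOpen : IsOpen Ω
  isPreconnected : IsPreconnected Ω
  base_mem : o ∈ Ω
  pos_slope : 0 < A
  pos_const : 0 < C
  pos_exponent : 0 < ν
  pos_radius : 0 < r
  mem : ∀ x ∈ Ω, dist x ξ < r → x ∈ D
  bdist_pos : ∀ x ∈ Ω, dist x ξ < r → 0 < bdist D x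
  bdist_lt_one : ∀ x ∈ Ω, dist x ξ < r → bdist D x < 1
  kobDist_le : ∀ x ∈ Ω, dist x ξ < r → kobDist Ω x o ≤ B - A * Real.log (bdist D x)
  norm_le : ∀ x ∈ Ω, dist x ξ < r → ∀ v,
    ‖v‖ ≤ kobMetric Ω x v * (C * (-Real.log (bdist D x)) ^ (-(1 + ν)))

section FiniteDimensional

variable [FiniteDimensional ℂ E]

omit [FiniteDimensional ℂ E] in
theorem exists_kobMetric_inter_le_mul {Ω U : Set E} (hΩ : IsOpen Ω) (hb : Bornology.IsBounded Ω)
    {ξ : E} {r : ℝ} (hr : 0 < r) (hU : ball ξ r ⊆ U) :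
    ∃ Q > 0, ∀ x ∈ Ω, dist x ξ ≤ r / 2 → ∀ v, kobMetric (Ω ∩ U) x v ≤ Q * kobMetric Ω x v := by
  obtain ⟨M, hM⟩ := hb.subset_ball ξ
  obtain ⟨M', hM', hMM'⟩ : ∃ M', r ≤ M' ∧ M + r ≤ M' := ⟨max r (M + r), by simp⟩
  have : 0 < M' := hr.trans_le hM'
  refine ⟨M' / (r / 2), by positivity, fun x hx hxξ v => ?_⟩
  rw [div_mul_eq_mul_div, mul_comm, ← div_div_eq_mul_div]
  refine kobMetric_inter_le_of_ball_subset hΩ (hM.trans (ball_subset_ball' ?_)) (half_pos hr)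
    (by linarith) hx ((ball_subset_ball' ?_).trans hU) v
  · rw [dist_comm]
    linarith
  · linarith

theorem LogTypeMetric.exists_visibilityEstimates {Ω U : Set E} {C ν : ℝ}
    (h : LogTypeMetric (Ω ∩ U) C ν) (hΩ : IsOpen Ω) (hc : IsPreconnected Ω)
    (hb : Bornology.IsBounded Ω) (hU : IsOpen U) {ξ o : E} (hξ : ξ ∈ frontier Ω) (hξU : ξ ∈ U)
    (ho : o ∈ Ω) {W : Set E} {ρ : E → ℝ} (hρ : IsLocalDefiningFn (Ω ∩ U) ξ W ρ) :
    ∃ A B C' r, ball ξ r ⊆ U ∧ VisibilityEstimates Ω (Ω ∩ U) ξ o A B C' ν r := by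
  have hξD : ξ ∈ frontier (Ω ∩ U) := mem_frontier_inter hΩ hU hξ hξU
  obtain ⟨A, B, R, hA, hR, hRU, hup⟩ := exists_kobDist_le_sub_log_bdist hΩ hc hU hξ hξU ho hρ
  obtain ⟨Q, hQ, hloc⟩ := exists_kobMetric_inter_le_mul hΩ hb hR hRU
  obtain ⟨r, hr, hrR, hr1⟩ : ∃ r > 0, r ≤ R / 2 ∧ r ≤ 1 := ⟨min (R / 2) 1, by positivity, by simp⟩
  have hmem : ∀ x ∈ Ω, dist x ξ < r → x ∈ Ω ∩ U := fun x hx hxξ =>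
    ⟨hx, hRU (mem_ball.mpr (by linarith))⟩
  have hpos : ∀ x ∈ Ω, dist x ξ < r → 0 < bdist (Ω ∩ U) x := fun x hx hxξ =>
    bdist_pos (hΩ.inter hU) ⟨ξ, hξD⟩ (hmem x hx hxξ)
  have hlt : ∀ x ∈ Ω, dist x ξ < r → bdist (Ω ∩ U) x < 1 := fun x _ hxξ =>
    (bdist_le_dist hξD).trans_lt (hxξ.trans_le hr1)
  have : 0 < C := h.pos_const
  refine ⟨A, B, C * Q, r, (ball_subset_ball (by linarith)).trans hRU, hΩ, hc, ho, hA,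
    by positivity, h.pos_exponent, hr, hmem, hpos, hlt, fun x hx hxξ => hup x hx (by linarith),
    fun x hx hxξ v => ?_⟩
  have hlog : 0 < -Real.log (bdist (Ω ∩ U) x) :=
    neg_pos.mpr (Real.log_neg (hpos x hx hxξ) (hlt x hx hxξ))
  calc ‖v‖ ≤ C / |Real.log (bdist (Ω ∩ U) x)| ^ (1 + ν) * kobMetric (Ω ∩ U) x v :=
        h.norm_le x (hmem x hx hxξ) v
    _ ≤ C / (-Real.log (bdist (Ω ∩ U) x)) ^ (1 + ν) * (Q * kobMetric Ω x v) := by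
        rw [abs_of_neg (neg_pos.mp hlog)]
        gcongr
        exact hloc x hx (by linarith) v
    _ = kobMetric Ω x v * (C * Q * (-Real.log (bdist (Ω ∩ U) x)) ^ (-(1 + ν))) := by
        rw [Real.rpow_neg hlog.le]
        field_simp

namespace VisibilityEstimates

variable {Ω D : Set E} {ξ o : E} {A B C ν r : ℝ} (h : VisibilityEstimates Ω D ξ o A B C ν r)

include h

omit [FiniteDimensional ℂ E] in
theorem add_le_neg_log_bdist {x : E} (hx : x ∈ Ω) (hxξ : dist x ξ < r) {α Δ : ℝ}
    (hlog : 2 * α + (1 + B) / A ≤ -Real.log (bdist D x)) (hΔ : Δ ≤ 2 * kobDist Ω x o + 2) :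
    α + 1 / (4 * A) * Δ ≤ -Real.log (bdist D x) := by
  have hA := h.pos_slope
  have hle : (Δ / 2 - 1 - B) / A ≤ -Real.log (bdist D x) := by
    rw [div_le_iff₀ hA]
    linarith [h.kobDist_le x hx hxξ]
  have hmean : α + 1 / (4 * A) * Δ = (2 * α + (1 + B) / A + (Δ / 2 - 1 - B) / A) / 2 := by
    field_simp
    ring
  linarith

theorem dist_le_of_forall_kobDist_le {α : ℝ} (hα : 0 < α) {σ g : ℝ → E} {a b : ℝ}
    (hσ : IsAlmostMinimizer Ω 1 σ g a b) (hnear : ∀ t ∈ Icc a b, dist (σ t) ξ < r)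
    (hlog : ∀ t ∈ Icc a b, 2 * α + (1 + B) / A ≤ -Real.log (bdist D (σ t)))
    (hmin : ∀ t ∈ Icc a b, kobDist Ω (σ a) o ≤ kobDist Ω (σ t) o + 1) :
    dist (σ a) (σ b) ≤ C * α ^ (-ν) / (1 / (4 * A) * ν) := by
  have hA := h.pos_slope
  have hC := h.pos_const
  have hν := h.pos_exponent
  set β := 1 / (4 * A)
  have hβpos : 0 < β := by positivity
  set ℓ := fun t => kobLength Ω σ g a t
  have hℓa : ℓ a = 0 := intervalIntegral.integral_same
  have hℓ₀ : ∀ t ∈ Icc a b, 0 ≤ ℓ t := fun t ht => kobLength_nonneg Ω σ g ht.1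
  have hpos : ∀ t ∈ Icc a b, 0 < α + β * ℓ t := fun t ht => by have := hℓ₀ t ht; positivity
  have hgrow : ∀ t ∈ Icc a b, α + β * ℓ t ≤ -Real.log (bdist D (σ t)) := fun t ht => by
    have hlen := (hσ.mono h.isOpen h.isPreconnected le_rfl ht.1 ht.2).length_le
    have htri := kobDist_triangle h.isOpen h.isPreconnected
      (hσ.mapsTo (left_mem_Icc.mpr hσ.le)) h.base_mem (hσ.mapsTo ht)
    rw [kobDist_comm h.isOpen o] at htri
    exact h.add_le_neg_log_bdist (hσ.mapsTo ht) (hnear t ht) (hlog t ht)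
      (by linarith [hmin t ht])
  have hle := hσ.dist_le_sub h.isOpen (ℓ := ℓ) (Ψ := fun x => -(C * (α + β * x) ^ (-ν) / (β * ν)))
    (ψ := fun x => C * (α + β * x) ^ (-(1 + ν))) (fun t _ => by rw [hℓa, zero_add]) (fun t ht => ?_)
    ?_ fun t ht => ?_
  · have := hpos b (right_mem_Icc.mpr hσ.le)
    have : 0 ≤ C * (α + β * ℓ b) ^ (-ν) / (β * ν) := by positivity
    simp only [hℓa, mul_zero, add_zero] at hle
    linarith
  · have hlin : HasDerivAt (fun x => α + β * x) β (ℓ t) := by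
      simpa using ((hasDerivAt_id (ℓ t)).const_mul β).const_add α
    refine (((hlin.rpow_const (p := -ν) (Or.inl (hpos t ht).ne')).const_mul C).div_const
      (β * ν)).fun_neg.congr_deriv ?_
    rw [neg_add_rev, ← sub_eq_add_neg]
    field_simp
  · refine continuousOn_const.mul (ContinuousOn.rpow_const (by fun_prop) ?_)
    rintro _ ⟨t, ht, rfl⟩
    exact Or.inl (hpos t ht).ne'
  · refine (h.norm_le _ (hσ.mapsTo ht) (hnear t ht) (g t)).trans ?_
    gcongr ?_ * (C * ?_)
    · exact kobMetric_nonneg Ω _ _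
    · exact Real.rpow_le_rpow_of_nonpos (hpos t ht) (hgrow t ht) (by linarith)

theorem dist_le_of_forall_le_neg_log {α : ℝ} (hα : 0 < α) {σ g : ℝ → E} {a b : ℝ}
    (hσ : IsAlmostMinimizer Ω 1 σ g a b) (hnear : ∀ t ∈ Icc a b, dist (σ t) ξ < r)
    (hlog : ∀ t ∈ Icc a b, 2 * α + (1 + B) / A ≤ -Real.log (bdist D (σ t))) :
    dist (σ a) (σ b) ≤ 2 * (C * α ^ (-ν) / (1 / (4 * A) * ν)) := by
  obtain ⟨s, hs, hmin⟩ := exists_forall_le_add_one (F := fun t => kobDist Ω (σ t) o)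
    (nonempty_Icc.mpr hσ.le) ⟨0, by rintro _ ⟨t, -, rfl⟩; exact kobDist_nonneg _ _ _⟩
  have hsub : Icc s b ⊆ Icc a b := Icc_subset_Icc_left hs.1
  have hright := h.dist_le_of_forall_kobDist_le hα
    (hσ.mono h.isOpen h.isPreconnected hs.1 hs.2 le_rfl) (fun t ht => hnear t (hsub ht))
    (fun t ht => hlog t (hsub ht)) fun t ht => hmin t (hsub ht)
  have hneg {t : ℝ} (ht : t ∈ Icc (-s) (-a)) : -t ∈ Icc a b :=
    ⟨le_neg_of_le_neg ht.2, (neg_le_of_neg_le ht.1).trans hs.2⟩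
  have hleft := h.dist_le_of_forall_kobDist_le hα
    ((hσ.mono h.isOpen h.isPreconnected le_rfl hs.1 hs.2).comp_neg h.isOpen)
    (fun t ht => hnear _ (hneg ht)) (fun t ht => hlog _ (hneg ht)) fun t ht => by
      simpa only [neg_neg] using hmin _ (hneg ht)
  rw [neg_neg, neg_neg, dist_comm] at hleft
  linarith [dist_triangle (σ a) (σ s) (σ b)]

theorem exists_forall_dist_lt {ε : ℝ} (hε : 0 < ε) :
    ∃ η > 0, ∀ (a b : ℝ) (σ g : ℝ → E), IsAlmostMinimizer Ω 1 σ g a b →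
      (∀ t ∈ Icc a b, dist (σ t) ξ < r) → (∀ t ∈ Icc a b, bdist D (σ t) < η) →
      dist (σ a) (σ b) < ε := by
  have hlim : Tendsto (fun α : ℝ => 2 * (C * α ^ (-ν) / (1 / (4 * A) * ν))) atTop (𝓝 0) := by
    simpa using (((tendsto_rpow_neg_atTop h.pos_exponent).const_mul C).div_const
      (1 / (4 * A) * ν)).const_mul 2
  obtain ⟨α, hαε, hα⟩ := ((hlim.eventually (gt_mem_nhds hε)).and (eventually_gt_atTop 0)).exists
  refine ⟨Real.exp (-(2 * α + (1 + B) / A)), Real.exp_pos _, fun a b σ g hσ hnear hη =>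
    (h.dist_le_of_forall_le_neg_log hα hσ hnear fun t ht => ?_).trans_lt hαε⟩
  rw [le_neg, Real.log_le_iff_le_exp (h.bdist_pos _ (hσ.mapsTo ht) (hnear t ht))]
  exact (hη t ht).le

theorem exists_forall_exists_le_bdist {r₁ r₂ : ℝ} (h₁₂ : r₁ < r₂) (h₂ : r₂ ≤ r) :
    ∃ η > 0, ∀ (a b : ℝ) (σ g : ℝ → E), IsAlmostMinimizer Ω 1 σ g a b →
      dist (σ a) ξ ≤ r₁ → r₂ ≤ dist (σ b) ξ →
      ∃ t ∈ Icc a b, (∀ s ∈ Icc a t, dist (σ s) ξ < r₂) ∧ η ≤ bdist D (σ t) := by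
  obtain ⟨η, hη, hshort⟩ := h.exists_forall_dist_lt (half_pos (sub_pos.mpr h₁₂))
  refine ⟨η, hη, fun a b σ g hσ ha hb => ?_⟩
  obtain ⟨c, hc, hcξ, hle⟩ := exists_eq_and_forall_le_of_continuousOn
    (F := fun t => dist (σ t) ξ) (c := (r₁ + r₂) / 2) hσ.le
    ((continuous_id.dist continuous_const).comp_continuousOn hσ.continuousOn)
    (by linarith) (by linarith)
  have hlt : ∀ t ∈ Icc a c, dist (σ t) ξ < r₂ := fun t ht => by linarith [hle t ht]
  by_contra! hfar
  have hclose := hshort a c σ g (hσ.mono h.isOpen h.isPreconnected le_rfl hc.1 hc.2)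
    (fun t ht => (hlt t ht).trans_le h₂) fun t ht =>
      hfar t ⟨ht.1, ht.2.trans hc.2⟩ fun s hs => hlt s ⟨hs.1, hs.2.trans ht.2⟩
  linarith [dist_triangle_left (σ c) ξ (σ a)]

end VisibilityEstimates

end FiniteDimensional

section FiniteDimensional

variable [FiniteDimensional ℂ E]

namespace VisibilityEstimates

variable {Ω D : Set E} {ξ o : E} {A B C ν r : ℝ}

theorem exists_forall_gromovProd_le (h : VisibilityEstimates Ω D ξ o A B C ν r) {r₁ r₂ : ℝ}
    (h₁₂ : r₁ < r₂) (h₂ : r₂ ≤ r) :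
    ∃ H, ∀ p ∈ Ω, ∀ q ∈ Ω, dist p ξ ≤ r₁ → r₂ ≤ dist q ξ → gromovProd Ω o p q ≤ H := by
  obtain ⟨η, hη, hvis⟩ := h.exists_forall_exists_le_bdist h₁₂ h₂
  refine ⟨B - A * Real.log η + 1 / 2, fun p hp q hq hpξ hqξ => ?_⟩
  obtain ⟨a, b, σ, g, hσ, rfl, rfl⟩ :=
    exists_isAlmostMinimizer h.isOpen h.isPreconnected one_pos hp hq
  obtain ⟨t, ht, hnear, htη⟩ := hvis a b σ g hσ hpξ hqξ
  have ht_mem := hσ.mapsTo ht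
  have hlog : A * Real.log η ≤ A * Real.log (bdist D (σ t)) :=
    mul_le_mul_of_nonneg_left (Real.log_le_log hη htη) h.pos_slope.le
  have hto := h.kobDist_le _ ht_mem ((hnear t (right_mem_Icc.mpr ht.1)).trans_le h₂)
  have hleft := hσ.toIsACCurveIn.mono le_rfl ht.1 ht.2
  have hright := hσ.toIsACCurveIn.mono ht.1 ht.2 le_rfl
  have hsplit := hleft.kobLength_add h.isOpen hright
  have htri₁ := kobDist_triangle h.isOpen h.isPreconnected hp ht_mem h.base_mem
  have htri₂ := kobDist_triangle h.isOpen h.isPreconnected hq ht_mem h.base_mem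
  rw [kobDist_comm h.isOpen _ (σ t)] at htri₂
  rw [gromovProd, kobDist_comm h.isOpen o]
  linarith [hσ.length_le, hleft.kobDist_le, hright.kobDist_le]

end VisibilityEstimates

/-! ### The lower bound `½ log (1 / bdist)` near convex boundary pieces -/

theorem kobMetric_inter_le_one_add_exp_mul {D U : Set E} (hD : IsOpen D) {x : E} (hx : x ∈ D)
    {d Q : ℝ} (hQ : 0 < Q) (h : ∀ y ∈ D \ U, d ≤ kobDist D x y) (v : E)
    (hloc : kobMetric (D ∩ U) x v ≤ Q * kobMetric D x v) :
    kobMetric (D ∩ U) x v ≤ (1 + (2 + Q * Real.exp 1) * Real.exp (-d)) * kobMetric D x v := by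
  have hk := kobMetric_nonneg D x v
  rcases lt_or_ge d 1 with hd | hd
  · refine hloc.trans (mul_le_mul_of_nonneg_right ?_ hk)
    have hexp : 1 ≤ Real.exp 1 * Real.exp (-d) := by
      rw [← Real.exp_add]
      exact Real.one_le_exp (by linarith)
    linarith [le_mul_of_one_le_right hQ.le hexp, Real.exp_pos (-d)]
  · have hhalf : Real.exp (-d) ≤ 1 / 2 :=
      calc Real.exp (-d) ≤ Real.exp (-1) := Real.exp_le_exp.mpr (neg_le_neg hd)
        _ = 1 / Real.exp 1 := by rw [Real.exp_neg, one_div]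
        _ ≤ 1 / 2 := one_div_le_one_div_of_le two_pos (by linarith [Real.add_one_le_exp 1])
    have he := Real.exp_pos (-d)
    refine (kobMetric_inter_le_of_le_kobDist hD (one_pos.trans_le hd) hx h v).trans ?_
    calc kobMetric D x v / (1 - Real.exp (-d)) ≤ (1 + 2 * Real.exp (-d)) * kobMetric D x v := by
          rw [div_le_iff₀ (by linarith), mul_right_comm]
          refine le_mul_of_one_le_left hk ?_
          linarith [mul_nonneg he.le (sub_nonneg.mpr hhalf)]
      _ ≤ (1 + (2 + Q * Real.exp 1) * Real.exp (-d)) * kobMetric D x v := by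
          gcongr
          exact le_add_of_nonneg_right (by positivity)

theorem VisibilityEstimates.exists_kobMetric_inter_le {Ω U : Set E} {ξ o : E} {A B C ν r r₁ : ℝ}
    (h : VisibilityEstimates Ω (Ω ∩ U) ξ o A B C ν r) (hb : Bornology.IsBounded Ω)
    (hU : ball ξ r ⊆ U) (hr₁ : r₁ ≤ r / 2) :
    ∃ K > 0, ∀ x ∈ Ω, dist x ξ ≤ r₁ → ∀ v,
      kobMetric (Ω ∩ U) x v ≤ (1 + K * Real.exp (-kobDist Ω x o)) * kobMetric Ω x v := by
  have hr := h.pos_radius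
  obtain ⟨Q, hQ, hloc⟩ := exists_kobMetric_inter_le_mul h.isOpen hb hr hU
  obtain ⟨H, hH⟩ := h.exists_forall_gromovProd_le (r₁ := r₁) (by linarith) le_rfl
  refine ⟨(2 + Q * Real.exp 1) * Real.exp (2 * H), by positivity, fun x hx hxξ v => ?_⟩
  have hfar : ∀ y ∈ Ω \ U, kobDist Ω x o - 2 * H ≤ kobDist Ω x y := fun y hy => by
    have hgro := hH x hx y hy.1 hxξ (not_lt.mp fun hlt => hy.2 (hU hlt))
    rw [gromovProd] at hgro
    linarith [kobDist_nonneg Ω o y]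
  have hle := kobMetric_inter_le_one_add_exp_mul h.isOpen hx hQ hfar v (hloc x hx (by linarith) v)
  rwa [neg_sub, sub_eq_add_neg, Real.exp_add, ← mul_assoc] at hle

theorem IsAlmostMinimizer.kobLength_le_add {Ω D : Set E} (hΩ : IsOpen Ω) (hc : IsPreconnected Ω)
    (hD : IsOpen D) {κ K : ℝ} (hK : 0 < K) {σ g : ℝ → E} {a b t : ℝ}
    (h : IsAlmostMinimizer Ω κ σ g a b) (ht : t ∈ Icc a b) (hmaps : MapsTo σ (Icc a t) D)
    (hle : ∀ s ∈ Icc a t, kobMetric D (σ s) (g s) ≤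
      (1 + K * Real.exp (-kobDist Ω (σ s) (σ b))) * kobMetric Ω (σ s) (g s)) :
    kobLength D σ g a t ≤ kobLength Ω σ g a t + K * Real.exp κ := by
  have hleft := h.toIsACCurveIn.mono le_rfl ht.1 ht.2
  set ℓ := fun s => -kobLength Ω σ g s b
  have hℓ : ∀ s ∈ Icc a t, ℓ s = ℓ a + kobLength Ω σ g a s := fun s hs => by
    have hsb := hs.2.trans ht.2
    have hadd := (h.toIsACCurveIn.mono le_rfl hs.1 hsb).kobLength_add hΩ
      (h.toIsACCurveIn.mono hs.1 hsb le_rfl)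
    linarith
  set ψ : ℝ → ℝ := fun x => 1 + K * Real.exp κ * Real.exp x
  have hψ : ContinuousOn ψ (ℓ '' Icc a t) := by fun_prop
  have hint := hleft.intervalIntegrable_kobMetric hΩ
  have hpoint : ∀ s ∈ Icc a t, kobMetric D (σ s) (g s) ≤
      kobMetric Ω (σ s) (g s) * (1 + K * Real.exp κ * Real.exp (ℓ s)) := fun s hs => by
    have hlen := (h.mono hΩ hc hs.1 (hs.2.trans ht.2) le_rfl).length_le
    rw [mul_comm, mul_assoc K, ← Real.exp_add]
    refine (hle s hs).trans ?_
    gcongr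
    · exact kobMetric_nonneg Ω _ _
    · linarith
  have hℓt : ℓ t ≤ 0 := neg_nonpos.mpr (kobLength_nonneg Ω σ g ht.2)
  have : 0 ≤ K * Real.exp κ * Real.exp (ℓ a) := by positivity
  calc kobLength D σ g a t
      ≤ ∫ s in a..t, kobMetric Ω (σ s) (g s) * (1 + K * Real.exp κ * Real.exp (ℓ s)) :=
        intervalIntegral.integral_mono_on ht.1
          (IsACCurveIn.intervalIntegrable_kobMetric hD ⟨ht.1, hleft.ac, hmaps⟩)
          (intervalIntegrable_mul_comp (ψ := ψ) ht.1 hint hℓ hψ) hpoint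
    _ = ℓ t + K * Real.exp κ * Real.exp (ℓ t) - (ℓ a + K * Real.exp κ * Real.exp (ℓ a)) :=
        integral_mul_comp_eq_sub (Ψ := fun x => x + K * Real.exp κ * Real.exp x) (ψ := ψ) ht.1 hint
          hℓ (fun s _ => (hasDerivAt_id' _).add ((Real.hasDerivAt_exp _).const_mul _)) hψ
    _ ≤ kobLength Ω σ g a t + K * Real.exp κ := by
        have := mul_le_of_le_one_right (by positivity : 0 ≤ K * Real.exp κ)
          (Real.exp_le_one_iff.mpr hℓt)
        linarith [hℓ t (right_mem_Icc.mpr ht.1)]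

end FiniteDimensional

theorem norm_deriv_zero_le_two_mul_re {F : ℂ → ℂ} (hF : DifferentiableOn ℂ F (ball 0 1))
    (hpos : ∀ w ∈ ball (0 : ℂ) 1, 0 < (F w).re) : ‖deriv F 0‖ ≤ 2 * (F 0).re := by
  have h0 : (0 : ℂ) ∈ ball (0 : ℂ) 1 := mem_ball_self one_pos
  set a := F 0
  have ha : 0 < 2 * a.re := mul_pos two_pos (hpos 0 h0)
  have haconj : a + starRingEnd ℂ a = ((2 * a.re : ℝ) : ℂ) := Complex.add_conj a
  have hne : ∀ w ∈ ball (0 : ℂ) 1, F w + starRingEnd ℂ a ≠ 0 := fun w hw h => by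
    have hre : (F w).re + a.re = 0 := by simpa using congrArg Complex.re h
    linarith [hpos w hw]
  set G : ℂ → ℂ := fun w => (F w - a) / (F w + starRingEnd ℂ a)
  have hG : DifferentiableOn ℂ G (ball 0 1) := (hF.sub_const a).div (hF.add_const _) hne
  have hmaps : MapsTo G (ball 0 1) (closedBall (G 0) 1) := fun w hw => by
    rw [show G 0 = 0 by simp [G, a], mem_closedBall_zero_iff, norm_div,
      div_le_one (norm_pos_iff.mpr (hne w hw)), ← sq_le_sq₀ (norm_nonneg _) (norm_nonneg _),
      ← Complex.normSq_eq_norm_sq, ← Complex.normSq_eq_norm_sq, Complex.normSq_apply,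
      Complex.normSq_apply]
    simp only [Complex.sub_re, Complex.sub_im, Complex.add_re, Complex.add_im, Complex.conj_re,
      Complex.conj_im]
    linarith [mul_pos (hpos w hw) ha]
  have hschwarz := Complex.norm_deriv_le_one_of_mapsTo_ball hG hmaps one_pos
  have hF' := (hF.differentiableAt (isOpen_ball.mem_nhds h0)).hasDerivAt
  have hG' : HasDerivAt G _ 0 := (hF'.sub_const a).div (hF'.add_const _) (hne 0 h0)
  have hderiv : deriv G 0 = deriv F 0 / ((2 * a.re : ℝ) : ℂ) := by
    have : ((2 * a.re : ℝ) : ℂ) ≠ 0 := by exact_mod_cast ha.ne'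
    rw [hG'.deriv, haconj, sub_self, zero_mul, sub_zero]
    field_simp
  rwa [hderiv, norm_div, Complex.norm_real, Real.norm_of_nonneg ha.le, div_le_one ha] at hschwarz

theorem abs_apply_le_mul_kobMetric {D : Set E} (hD : IsOpen D) {f : E →L[ℝ] ℝ} {c : ℝ}
    (hf : ∀ x ∈ D, f x < c) {x : E} (hx : x ∈ D) (v : E) :
    |f v| ≤ 2 * (c - f x) * kobMetric D x v := by
  set h := StrongDual.extendRCLike (𝕜 := ℂ) f with hh
  have hre (y : E) : f y = (h y).re := by simp [hh, StrongDual.extendRCLike_apply]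
  have : 0 < c - f x := sub_pos.mpr (hf x hx)
  rw [← div_le_iff₀' (by positivity)]
  refine le_kobMetric hD hx fun φ τ hφ => ?_
  have hschwarz := norm_deriv_zero_le_two_mul_re (F := fun w => c - h (φ w))
    ((differentiableOn_const _).sub (h.differentiable.comp_differentiableOn hφ.differentiableOn))
    fun w hw => by simpa [hre] using hf _ (hφ.mapsTo hw)
  have hderiv : HasDerivAt (fun w => c - h (φ w)) (-h (deriv φ 0)) 0 :=
    (h.hasFDerivAt.comp_hasDerivAt 0 hφ.hasDerivAt).const_sub (c : ℂ)
  rw [hderiv.deriv, norm_neg, Complex.sub_re, Complex.ofReal_re, hφ.map_zero, ← hre] at hschwarz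
  rw [div_le_iff₀' (by positivity), hre, ← hφ.smul_deriv, map_smul]
  calc |(τ • h (deriv φ 0)).re| ≤ ‖τ‖ * ‖h (deriv φ 0)‖ :=
        (Complex.abs_re_le_norm _).trans_eq (norm_smul _ _)
    _ ≤ ‖τ‖ * (2 * (c - f x)) := by gcongr
    _ = 2 * (c - f x) * ‖τ‖ := mul_comm _ _

theorem norm_mul_bdist_le_sub {D : Set E} {x : E} (hx : x ∈ D) {f : E →L[ℝ] ℝ}
    {c : ℝ} (hf : ∀ y ∈ D, f y ≤ c) : ‖f‖ * bdist D x ≤ c - f x := by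
  rcases infDist_nonneg.eq_or_lt' (a := bdist D x) with h0 | hpos
  · rw [h0, mul_zero]
    exact sub_nonneg.mpr (hf x hx)
  have hclosed : ∀ y ∈ closedBall x (bdist D x), f y ≤ c := by
    rw [← closure_ball x hpos.ne']
    exact closure_minimal (fun y hy => hf y (ball_bdist_subset hx hy))
      (isClosed_le f.continuous continuous_const)
  refine (le_div_iff₀ hpos).mp (f.opNorm_bound_of_ball_bound hpos (c - f x) fun y hy => ?_)
  rw [mem_closedBall_zero_iff] at hy
  have hadd := hclosed (x + y) (by simpa using hy)
  have hsub := hclosed (x - y) (by simpa [dist_eq_norm] using hy)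
  rw [map_add] at hadd
  rw [map_sub] at hsub
  exact abs_le.mpr ⟨by linarith, by linarith⟩

section FiniteDimensional

variable [FiniteDimensional ℂ E]

theorem exists_forall_lt_and_sub_le_norm_mul_bdist {D : Set E} (hD : IsOpen D) (hconv : Convex ℝ D)
    (hne : (frontier D).Nonempty) {x : E} (hx : x ∈ D) :
    ∃ (f : E →L[ℝ] ℝ) (c : ℝ), 0 < ‖f‖ ∧ (∀ y ∈ D, f y < c) ∧ c - f x ≤ ‖f‖ * bdist D x := by
  have : ProperSpace E := FiniteDimensional.proper ℂ E
  obtain ⟨q, hq, hqx⟩ := isClosed_frontier.exists_infDist_eq_dist hne x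
  obtain ⟨f, hf⟩ := geometric_hahn_banach_open_point hconv hD (hD.frontier_eq ▸ hq).2
  refine ⟨f, f q, norm_pos_iff.mpr ?_, hf, ?_⟩
  · rintro rfl
    exact (hf x hx).false
  · rw [bdist, hqx, dist_comm, dist_eq_norm, ← map_sub]
    exact (le_abs_self _).trans (f.le_opNorm _)

theorem IsACCurveIn.bdist_le_mul_exp_kobLength {D : Set E} (hD : IsOpen D) (hconv : Convex ℝ D)
    (hne : (frontier D).Nonempty) {σ g : ℝ → E} {a b : ℝ} (h : IsACCurveIn D σ g a b) :
    bdist D (σ b) ≤ bdist D (σ a) * Real.exp (2 * kobLength D σ g a b) := by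
  have : CompleteSpace E := FiniteDimensional.complete ℂ E
  obtain ⟨f, c, hfpos, hf, hfa⟩ := exists_forall_lt_and_sub_le_norm_mul_bdist hD hconv hne
    (h.mapsTo (left_mem_Icc.mpr h.le))
  have hfb := norm_mul_bdist_le_sub (h.mapsTo (right_mem_Icc.mpr h.le)) fun y hy => (hf y hy).le
  have hgron : c - f (σ b) ≤ (c - f (σ a)) * Real.exp (2 * kobLength D σ g a b) := by
    rw [kobLength, ← intervalIntegral.integral_const_mul]
    refine le_mul_exp_integral_of_eq_add_integral (u := fun t => c - f (σ t))
      (v := fun t => -f (g t)) h.le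
      (IntervalIntegrable.neg ⟨f.integrable_comp h.ac.1.1, f.integrable_comp h.ac.1.2⟩)
      (fun t ht => ?_) (fun t ht => sub_pos.mpr (hf _ (h.mapsTo ht)))
      ((h.intervalIntegrable_kobMetric hD).const_mul 2) fun t ht => ?_
    · rw [h.ac.2 t ht, map_add, intervalIntegral.integral_neg,
        f.intervalIntegral_comp_comm (intervalIntegrable_of_le_of_le h.ac.1 le_rfl ht.1 ht.2)]
      ring
    · refine (neg_le_abs _).trans ?_
      linarith [abs_apply_le_mul_kobMetric hD hf (h.mapsTo ht) (g t)]
  refine le_of_mul_le_mul_left (hfb.trans (hgron.trans ?_)) hfpos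
  rw [← mul_assoc]
  gcongr

theorem VisibilityEstimates.exists_neg_half_log_sub_le_kobDist {Ω U : Set E} {ξ o : E}
    {A B C ν r : ℝ} (h : VisibilityEstimates Ω (Ω ∩ U) ξ o A B C ν r)
    (hb : Bornology.IsBounded Ω) (hU : IsOpen U) (hrU : ball ξ r ⊆ U) (hξ : ξ ∈ frontier Ω)
    (hconv : Convex ℝ (Ω ∩ U)) : ∃ s > 0, ∃ H, ∀ z ∈ Ω, dist z ξ ≤ s →
      -(1 / 2) * Real.log (bdist (Ω ∩ U) z) - H ≤ kobDist Ω z o := by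
  have hr := h.pos_radius
  have hD : IsOpen (Ω ∩ U) := h.isOpen.inter hU
  have hξD := mem_frontier_inter h.isOpen hU hξ (hrU (mem_ball_self hr))
  have hoξ : 0 < dist o ξ := dist_pos.mpr fun ho =>
    (h.isOpen.frontier_eq ▸ hξ).2 (ho ▸ h.base_mem)
  obtain ⟨r₂, hr₂, hr₂r, hr₂o⟩ : ∃ r₂ > 0, r₂ ≤ r / 2 ∧ r₂ ≤ dist o ξ :=
    ⟨min (r / 2) (dist o ξ), by positivity, by simp⟩
  obtain ⟨K, hK, hmetric⟩ := h.exists_kobMetric_inter_le hb hrU hr₂r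
  obtain ⟨η, hη, hvis⟩ :=
    h.exists_forall_exists_le_bdist (half_lt_self hr₂) (hr₂r.trans (half_le_self hr.le))
  refine ⟨r₂ / 2, by positivity, 1 + K * Real.exp 1 - 1 / 2 * Real.log η, fun z hz hzξ => ?_⟩
  obtain ⟨a, b, σ, g, hσ, rfl, rfl⟩ :=
    exists_isAlmostMinimizer h.isOpen h.isPreconnected one_pos hz h.base_mem
  obtain ⟨t, ht, hnear, htη⟩ := hvis a b σ g hσ hzξ hr₂o
  have hmem : ∀ s ∈ Icc a t, σ s ∈ Ω := fun s hs => hσ.mapsTo ⟨hs.1, hs.2.trans ht.2⟩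
  have hleft := hσ.toIsACCurveIn.mono le_rfl ht.1 ht.2
  have hmaps : MapsTo σ (Icc a t) (Ω ∩ U) := fun s hs =>
    h.mem _ (hmem s hs) (by linarith [hnear s hs])
  have hlen := hσ.kobLength_le_add h.isOpen h.isPreconnected hD hK ht hmaps fun s hs =>
    hmetric _ (hmem s hs) (hnear s hs).le (g s)
  have hadd := hleft.kobLength_add h.isOpen (hσ.toIsACCurveIn.mono ht.1 ht.2 le_rfl)
  have hgrow := IsACCurveIn.bdist_le_mul_exp_kobLength hD hconv ⟨ξ, hξD⟩ ⟨ht.1, hleft.ac, hmaps⟩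
  have hlog := Real.log_le_log hη (htη.trans hgrow)
  rw [Real.log_mul (h.bdist_pos _ hz (by linarith)).ne' (Real.exp_pos _).ne', Real.log_exp] at hlog
  linarith [hσ.length_le, kobLength_nonneg Ω σ g ht.2]

end FiniteDimensional

/-! ### Dini moduli of continuity -/

/-- A Dini modulus of continuity: monotone, nonnegative, and integrable against `dt / t`. -/
structure IsDiniModulus (ω : ℝ → ℝ) : Prop where
  nonneg : ∀ t ∈ Icc (0 : ℝ) 1, 0 ≤ ω t
  monotoneOn : MonotoneOn ω (Icc (0 : ℝ) 1)
  integrableOn : IntegrableOn (fun t => ω t / t) (Ioc (0 : ℝ) 1)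

theorem integral_integral_right_eq {h : ℝ → ℝ} {a b : ℝ} (hh : IntervalIntegrable h volume a b) :
    ∫ x in a..b, ∫ s in x..b, h s = ∫ s in a..b, (s - a) * h s := by
  have hprim := hh.absolutelyContinuousOnInterval_intervalIntegral (c := b) right_mem_uIcc
  have hlin : AbsolutelyContinuousOnInterval (fun x : ℝ => x - a) a b :=
    (contDiff_id.sub contDiff_const).contDiffOn.absolutelyContinuousOnInterval
  have hparts := hlin.integral_mul_deriv_eq_deriv_mul hprim
  have hderiv : ∫ x in a..b, (x - a) * deriv (fun x => ∫ s in b..x, h s) x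
      = ∫ s in a..b, (s - a) * h s := by
    refine intervalIntegral.integral_congr_ae ?_
    filter_upwards [hh.ae_hasDerivAt_integral] with x hx hxI
    rw [(hx (uIoc_subset_uIcc hxI) b right_mem_uIcc).deriv]
  simp only [hderiv, intervalIntegral.integral_same, mul_zero, sub_self, zero_mul, deriv_sub_const,
    deriv_id'', one_mul, zero_sub] at hparts
  rw [hparts, ← intervalIntegral.integral_neg]
  exact intervalIntegral.integral_congr fun x _ => intervalIntegral.integral_symm b x

namespace IsDiniModulus

variable {ω : ℝ → ℝ} {X a b x y : ℝ}

theorem div_nonneg (h : IsDiniModulus ω) {t : ℝ} (ht : t ∈ Icc (0 : ℝ) 1) : 0 ≤ ω t / t :=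
  _root_.div_nonneg (h.nonneg t ht) ht.1

theorem intervalIntegrable (h : IsDiniModulus ω) (ha : 0 ≤ a) (hab : a ≤ b) (hb : b ≤ 1) :
    IntervalIntegrable (fun t => ω t / t) volume a b :=
  (intervalIntegrable_iff_integrableOn_Ioc_of_le hab).mpr
    (h.integrableOn.mono_set (Ioc_subset_Ioc ha hb))

theorem integral_le_integral_zero (h : IsDiniModulus ω) (ha : 0 ≤ a) (hab : a ≤ X) (hX : X ≤ 1) :
    ∫ t in a..X, ω t / t ≤ ∫ t in (0 : ℝ)..X, ω t / t := by
  refine intervalIntegral.integral_mono_interval ha hab le_rfl ?_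
    (h.intervalIntegrable le_rfl (ha.trans hab) hX)
  exact ae_restrict_of_forall_mem measurableSet_Ioc fun t ht =>
    h.div_nonneg ⟨ht.1.le, ht.2.trans hX⟩

theorem exists_integral_le (h : IsDiniModulus ω) {ε : ℝ} (hε : 0 < ε) :
    ∃ X ∈ Ioc (0 : ℝ) 1, ∫ t in (0 : ℝ)..X, ω t / t ≤ ε := by
  have hcont := intervalIntegral.continuousOn_primitive_interval'
    (h.intervalIntegrable le_rfl zero_le_one le_rfl) left_mem_uIcc 0 left_mem_uIcc
  rw [uIcc_of_le zero_le_one, ContinuousWithinAt, intervalIntegral.integral_same] at hcont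
  have hsmall := (hcont.mono_left (nhdsWithin_mono 0 Ioc_subset_Icc_self)).eventually
    (eventually_le_nhds hε)
  have : (𝓝[Ioc (0 : ℝ) 1] 0).NeBot := by
    rw [nhdsWithin_Ioc_eq_nhdsGT zero_lt_one]; infer_instance
  obtain ⟨X, hX, hXI⟩ := (hsmall.and self_mem_nhdsWithin).exists
  exact ⟨X, hXI, hX⟩

end IsDiniModulus

/-- The tail integral `V x = ∫ₓ^X 8 ω(s) / s² ds` of a modulus of continuity `ω`. It is antitone in
`x`, dominates `ω (2x) / x`, and is integrable near `0` exactly when `ω` is Dini. -/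
noncomputable def diniTail (ω : ℝ → ℝ) (X x : ℝ) : ℝ :=
  ∫ s in x..X, 8 * ω s / s ^ 2

namespace IsDiniModulus

variable {ω : ℝ → ℝ} {X a b x y : ℝ}

theorem intervalIntegrable_tail (h : IsDiniModulus ω) (ha : 0 < a) (hab : a ≤ b) (hb : b ≤ 1) :
    IntervalIntegrable (fun s => 8 * ω s / s ^ 2) volume a b := by
  have hcont : ContinuousOn (fun s : ℝ => 8 / s) (uIcc a b) := by
    rw [uIcc_of_le hab]
    exact continuousOn_const.div continuousOn_id fun s hs => (ha.trans_le hs.1).ne'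
  convert (h.intervalIntegrable ha.le hab hb).mul_continuousOn hcont using 2 with s
  rw [div_mul_div_comm, ← sq, mul_comm]

theorem diniTail_add (h : IsDiniModulus ω) (hX : X ≤ 1) (ha : 0 < a) (hab : a ≤ b)
    (hb : b ≤ X) : (∫ s in a..b, 8 * ω s / s ^ 2) + diniTail ω X b = diniTail ω X a :=
  intervalIntegral.integral_add_adjacent_intervals
    (h.intervalIntegrable_tail ha hab (hb.trans hX))
    (h.intervalIntegrable_tail (ha.trans_le hab) hb hX)

theorem integral_tail_nonneg (h : IsDiniModulus ω) (ha : 0 < a) (hab : a ≤ b) (hb : b ≤ 1) :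
    0 ≤ ∫ s in a..b, 8 * ω s / s ^ 2 :=
  intervalIntegral.integral_nonneg hab fun s hs => by
    have := h.nonneg s ⟨ha.le.trans hs.1, hs.2.trans hb⟩
    positivity

theorem diniTail_nonneg (h : IsDiniModulus ω) (hX : X ≤ 1) (hx : x ∈ Ioc 0 X) :
    0 ≤ diniTail ω X x :=
  h.integral_tail_nonneg hx.1 hx.2 hX

theorem antitoneOn_diniTail (h : IsDiniModulus ω) (hX : X ≤ 1) :
    AntitoneOn (diniTail ω X) (Ioc 0 X) := fun x hx y hy hxy => by
  rw [← h.diniTail_add hX hx.1 hxy hy.2]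
  exact le_add_of_nonneg_left (h.integral_tail_nonneg hx.1 hxy (hy.2.trans hX))

theorem continuousOn_diniTail (h : IsDiniModulus ω) (hX : X ≤ 1) :
    ContinuousOn (diniTail ω X) (Ioc 0 X) := by
  intro x hx
  have hprim := (intervalIntegral.continuousOn_primitive_interval'
    (h.intervalIntegrable_tail (half_pos hx.1) ((half_le_self hx.1.le).trans hx.2) hX)
    right_mem_uIcc).neg
  rw [uIcc_of_le ((half_le_self hx.1.le).trans hx.2)] at hprim
  have hcont : ContinuousOn (diniTail ω X) (Icc (x / 2) X) :=
    hprim.congr fun y _ => intervalIntegral.integral_symm X y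
  refine (hcont x ⟨half_le_self hx.1.le, hx.2⟩).mono_of_mem_nhdsWithin ?_
  filter_upwards [self_mem_nhdsWithin,
    mem_nhdsWithin_of_mem_nhds (Ici_mem_nhds (half_lt_self hx.1))] with y hy hxy
  exact ⟨hxy, hy.2⟩

theorem mul_diniTail_le (h : IsDiniModulus ω) (hX : X ≤ 1) (hx : x ∈ Ioc 0 X) :
    x * diniTail ω X x ≤ 8 * ∫ t in (0 : ℝ)..X, ω t / t := by
  calc x * diniTail ω X x
      = ∫ s in x..X, x * (8 * ω s / s ^ 2) := (intervalIntegral.integral_const_mul _ _).symm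
    _ ≤ ∫ s in x..X, 8 * (ω s / s) := by
        refine intervalIntegral.integral_mono_on hx.2
          ((h.intervalIntegrable_tail hx.1 hx.2 hX).const_mul _)
          ((h.intervalIntegrable hx.1.le hx.2 hX).const_mul 8) fun s hs => ?_
        have : 0 < s := hx.1.trans_le hs.1
        have := h.nonneg s ⟨this.le, hs.2.trans hX⟩
        calc x * (8 * ω s / s ^ 2) ≤ s * (8 * ω s / s ^ 2) := by gcongr; exact hs.1
          _ = 8 * (ω s / s) := by field_simp
    _ = 8 * ∫ t in x..X, ω t / t := intervalIntegral.integral_const_mul _ _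
    _ ≤ 8 * ∫ t in (0 : ℝ)..X, ω t / t := by
        gcongr; exact h.integral_le_integral_zero hx.1.le hx.2 hX

theorem integral_diniTail_le (h : IsDiniModulus ω) (hX : X ≤ 1) (ha : 0 < a) (hab : a ≤ b)
    (hb : b ≤ X) : ∫ x in a..b, diniTail ω X x ≤ 8 * ∫ t in (0 : ℝ)..X, ω t / t := by
  have haX := hab.trans hb
  have hint : IntervalIntegrable (diniTail ω X) volume a X := by
    refine ((h.continuousOn_diniTail hX).mono fun x hx => ?_).intervalIntegrable
    rw [uIcc_of_le haX] at hx
    exact ⟨ha.trans_le hx.1, hx.2⟩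
  calc ∫ x in a..b, diniTail ω X x
      ≤ ∫ x in a..X, diniTail ω X x := by
        refine intervalIntegral.integral_mono_interval le_rfl hab hb ?_ hint
        exact ae_restrict_of_forall_mem measurableSet_Ioc fun x hx =>
          h.diniTail_nonneg hX ⟨ha.trans hx.1, hx.2⟩
    _ = ∫ s in a..X, (s - a) * (8 * ω s / s ^ 2) :=
        integral_integral_right_eq (h.intervalIntegrable_tail ha haX hX)
    _ ≤ ∫ s in a..X, 8 * (ω s / s) := by
        refine intervalIntegral.integral_mono_on haX
          ((h.intervalIntegrable_tail ha haX hX).continuousOn_mul (by fun_prop))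
          ((h.intervalIntegrable ha.le haX hX).const_mul 8) fun s hs => ?_
        have : 0 < s := ha.trans_le hs.1
        have := h.nonneg s ⟨this.le, hs.2.trans hX⟩
        calc (s - a) * (8 * ω s / s ^ 2) ≤ s * (8 * ω s / s ^ 2) := by gcongr; linarith
          _ = 8 * (ω s / s) := by field_simp
    _ = 8 * ∫ t in a..X, ω t / t := intervalIntegral.integral_const_mul _ _
    _ ≤ 8 * ∫ t in (0 : ℝ)..X, ω t / t := by
        gcongr; exact h.integral_le_integral_zero ha.le haX hX

theorem apply_two_mul_le (h : IsDiniModulus ω) (hX : X ≤ 1) (hx : 0 < x) (hxX : 4 * x ≤ X) :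
    ω (2 * x) ≤ x * diniTail ω X x := by
  have hlower : ω (2 * x) / x ≤ ∫ s in (2 * x)..(4 * x), 8 * ω s / s ^ 2 := by
    calc ω (2 * x) / x = ∫ _ in (2 * x)..(4 * x), 8 * ω (2 * x) / (4 * x) ^ 2 := by
          rw [intervalIntegral.integral_const, smul_eq_mul]; field_simp; ring
      _ ≤ ∫ s in (2 * x)..(4 * x), 8 * ω s / s ^ 2 := by
          refine intervalIntegral.integral_mono_on (by linarith) intervalIntegrable_const
            (h.intervalIntegrable_tail (by linarith) (by linarith) (by linarith)) fun s hs => ?_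
          have : 0 < s := by linarith [hs.1]
          have hs1 : s ∈ Icc (0 : ℝ) 1 := ⟨this.le, by linarith [hs.2]⟩
          have := h.nonneg s hs1
          gcongr
          · exact h.monotoneOn ⟨by linarith, by linarith⟩ hs1 hs.1
          · exact hs.2
  have hle : ∫ s in (2 * x)..(4 * x), 8 * ω s / s ^ 2 ≤ diniTail ω X x :=
    calc ∫ s in (2 * x)..(4 * x), 8 * ω s / s ^ 2
        ≤ diniTail ω X (2 * x) := by
          rw [← h.diniTail_add hX (by linarith : 0 < 2 * x) (by linarith : 2 * x ≤ 4 * x) hxX]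
          exact le_add_of_nonneg_right (h.diniTail_nonneg hX ⟨by linarith, hxX⟩)
      _ ≤ diniTail ω X x :=
          h.antitoneOn_diniTail hX ⟨hx, by linarith⟩ ⟨by linarith, by linarith⟩ (by linarith)
  rw [← div_le_iff₀' hx]
  exact hlower.trans hle

end IsDiniModulus

/-- `W` dominates the Dini modulus `ω` at scale `r`. At depth `x` below a boundary point, a domain
whose unit normal has modulus `ω` contains a ball of radius comparable to `1 / W x` whose boundary
passes within `2 x² W x` of that point; the integral bound makes the resulting error in the
Kobayashi distance bounded. -/
structure IsDiniWeight (ω W : ℝ → ℝ) (r : ℝ) : Prop where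
  pos_radius : 0 < r
  continuousOn : ContinuousOn W (Ioc 0 (r / 16))
  inv_le : ∀ x ∈ Ioc 0 (r / 16), r⁻¹ ≤ W x
  mul_le : ∀ x ∈ Ioc 0 (r / 16), x * W x ≤ 1 / 8
  integral_le : ∀ a b, 0 < a → a ≤ b → b ≤ r / 16 → ∫ x in a..b, W x ≤ 1 / 8
  apply_two_mul_le : ∀ x ∈ Ioc 0 (r / 16), ∀ y ∈ Ico 0 r, ω (2 * y) ≤ max y x * W x

theorem IsDiniModulus.apply_two_mul_le_max_mul {ω : ℝ → ℝ} {X x y : ℝ} (h : IsDiniModulus ω)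
    (hX : X ≤ 1) (hx : x ∈ Ioc 0 (X / 4)) (hy : y ∈ Icc 0 (X / 4)) :
    ω (2 * y) ≤ max y x * diniTail ω X x := by
  have hx0 := hx.1
  have hx4 := hx.2
  have hy0 := hy.1
  have hy4 := hy.2
  rcases le_total x y with hxy | hyx
  · rw [max_eq_left hxy]
    refine (h.apply_two_mul_le hX (hx0.trans_le hxy) (by linarith)).trans ?_
    gcongr
    exact h.antitoneOn_diniTail hX ⟨hx0, by linarith⟩ ⟨hx0.trans_le hxy, by linarith⟩ hxy
  · rw [max_eq_right hyx]
    refine le_trans ?_ (h.apply_two_mul_le hX hx0 (by linarith))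
    exact h.monotoneOn ⟨by linarith, by linarith⟩ ⟨by linarith, by linarith⟩ (by linarith)

theorem IsDiniModulus.exists_isDiniWeight {ω : ℝ → ℝ} (h : IsDiniModulus ω) {r₀ : ℝ}
    (hr₀ : 0 < r₀) : ∃ r ∈ Ioc 0 r₀, ∃ W, IsDiniWeight ω W r := by
  obtain ⟨X, ⟨hX0, hX1⟩, hX⟩ := h.exists_integral_le (ε := 1 / 128) (by norm_num)
  obtain ⟨r, hr, hrr₀, hrX⟩ : ∃ r > 0, r ≤ r₀ ∧ r ≤ X / 4 :=
    ⟨min r₀ (X / 4), by positivity, min_le_left _ _, min_le_right _ _⟩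
  have hsub : Ioc 0 (r / 16) ⊆ Ioc 0 X := Ioc_subset_Ioc_right (by linarith)
  have hcont : ContinuousOn (diniTail ω X) (Ioc 0 (r / 16)) :=
    (h.continuousOn_diniTail hX1).mono hsub
  refine ⟨r, ⟨hr, hrr₀⟩, fun x => diniTail ω X x + r⁻¹, hr, hcont.add continuousOn_const,
    fun x hx => ?_, fun x hx => ?_, fun a b ha hab hb => ?_, fun x hx y hy => ?_⟩
  · exact le_add_of_nonneg_left (h.diniTail_nonneg hX1 (hsub hx))
  · have hx16 : x * r⁻¹ ≤ 1 / 16 := by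
      rw [← div_eq_mul_inv, div_le_iff₀ hr]; linarith [hx.2]
    rw [mul_add]
    linarith [h.mul_diniTail_le hX1 (hsub hx)]
  · have hint : IntervalIntegrable (diniTail ω X) volume a b := by
      refine (hcont.mono fun x hx => ?_).intervalIntegrable
      rw [uIcc_of_le hab] at hx
      exact ⟨ha.trans_le hx.1, hx.2.trans hb⟩
    have hb16 : (b - a) * r⁻¹ ≤ 1 / 16 := by
      rw [← div_eq_mul_inv, div_le_iff₀ hr]; linarith
    rw [intervalIntegral.integral_add hint intervalIntegrable_const,
      intervalIntegral.integral_const, smul_eq_mul]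
    linarith [h.integral_diniTail_le hX1 ha hab (b := b) (by linarith)]
  · refine (h.apply_two_mul_le_max_mul hX1 ⟨hx.1, by linarith [hx.2]⟩
      ⟨hy.1, by linarith [hy.2]⟩).trans ?_
    have : 0 ≤ max y x := hx.1.le.trans (le_max_right _ _)
    gcongr
    exact le_add_of_nonneg_right (by positivity)

/-! ### Inner normals at Dini-smooth points of convex domains -/

/-- `F` is a unit real functional supporting `D` at `q` from inside: the real inner product with the
inner unit normal of a convex domain `D` at its boundary point `q`. -/
structure IsInnerNormal (D : Set E) (q : E) (F : E →L[ℝ] ℝ) : Prop where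
  norm_eq_one : ‖F‖ = 1
  nonneg : ∀ y ∈ D, 0 ≤ F (y - q)

theorem closedBall_bdist_subset_compl {D : Set E} (hD : IsOpen D) {p : E} (hp : p ∉ D) :
    closedBall p (bdist D p) ⊆ Dᶜ := by
  rcases infDist_nonneg.eq_or_lt' (a := bdist D p) with h0 | hpos
  · rw [h0, closedBall_zero]
    exact singleton_subset_iff.mpr hp
  · rw [← closure_ball p hpos.ne']
    refine closure_minimal ?_ hD.isClosed_compl
    rw [show bdist D p = bdist Dᶜ p by rw [bdist, bdist, frontier_compl]]
    exact ball_bdist_subset (mem_compl hp)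

theorem apply_smul_eq_re {F : E →L[ℝ] ℝ} (hF : ‖F‖ ≤ 1) {n : E} (hn : ‖n‖ ≤ 1) (hFn : F n = 1)
    (c : ℂ) : F (c • n) = c.re := by
  have hlin (a b : ℝ) : F (((a : ℂ) + b * Complex.I) • n) = a + b * F (Complex.I • n) := by
    rw [add_smul, mul_smul, Complex.coe_smul, Complex.coe_smul, map_add, map_smul, map_smul, hFn,
      smul_eq_mul, smul_eq_mul, mul_one]
  have hzero : F (Complex.I • n) = 0 := by
    set b := F (Complex.I • n)
    have hle : 1 + b * b ≤ √(1 + b ^ 2) := by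
      calc 1 + b * b = F (((1 : ℝ) + b * Complex.I) • n) := (hlin 1 b).symm
        _ ≤ 1 * ‖(((1 : ℝ) + b * Complex.I) • n)‖ :=
            (le_abs_self _).trans (F.le_of_opNorm_le hF _)
        _ ≤ ‖((1 : ℝ) + b * Complex.I : ℂ)‖ := by
            rw [one_mul, norm_smul]; exact mul_le_of_le_one_right (norm_nonneg _) hn
        _ = √(1 + b ^ 2) := by rw [Complex.norm_add_mul_I, one_pow]
    have hsq : (1 + b * b) ^ 2 ≤ 1 + b ^ 2 :=
      (Real.le_sqrt' (by linarith [mul_self_nonneg b])).mp hle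
    exact (pow_eq_zero_iff two_ne_zero).mp (by nlinarith [sq_nonneg b, sq_nonneg (b ^ 2)])
  have h := hlin c.re c.im
  rwa [Complex.re_add_im, hzero, mul_zero, add_zero] at h

namespace IsInnerNormal

variable {D : Set E} {q : E} {F : E →L[ℝ] ℝ}

theorem apply_sub_le_norm_sub_mul_dist (h : IsInnerNormal D q F) {F' : E →L[ℝ] ℝ} {p q' : E}
    (hq' : q' ∈ frontier D) (hp : F (p - q) ≤ 0) :
    F' (p - q') ≤ ‖F' - F‖ * dist p q' := by
  have habove : 0 ≤ F (q' - q) :=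
    closure_minimal (t := {y | 0 ≤ F (y - q)}) h.nonneg
      (isClosed_le continuous_const (by fun_prop)) (frontier_subset_closure hq')
  calc F' (p - q') = (F' - F) (p - q') + F (p - q) - F (q' - q) := by
        simp only [sub_apply, map_sub]; ring
    _ ≤ (F' - F) (p - q') := by linarith
    _ ≤ ‖F' - F‖ * dist p q' := by
        rw [dist_eq_norm]
        exact (le_abs_self _).trans ((F' - F).le_opNorm _)

theorem apply_sub_eq_dist (h : IsInnerNormal D q F) {z : E} (hz : z ∈ D)
    (hzq : dist z q = bdist D z) : F (z - q) = dist z q := by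
  refine le_antisymm ?_ ?_
  · have := (le_abs_self _).trans (F.le_opNorm (z - q))
    rwa [h.norm_eq_one, one_mul, ← dist_eq_norm] at this
  · have := norm_mul_bdist_le_sub hz (f := -F) (c := -F q) fun y hy => by
      simpa only [neg_apply, neg_le_neg_iff, map_sub, sub_nonneg]
        using h.nonneg y hy
    rw [norm_neg, h.norm_eq_one, one_mul, ← hzq] at this
    rw [map_sub]
    simp only [neg_apply] at this
    linarith

theorem exists_eq_add_smul (h : IsInnerNormal D q F) {z : E} (hz : z ∈ D)
    (hzq : dist z q = bdist D z) (hpos : 0 < bdist D z) :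
    ∃ n : E, ‖n‖ = 1 ∧ (∀ c : ℂ, F (c • n) = c.re) ∧ z = q + bdist D z • n := by
  have hnorm : ‖(bdist D z)⁻¹ • (z - q)‖ = 1 := by
    rw [norm_smul, ← dist_eq_norm, hzq, Real.norm_of_nonneg (by positivity),
      inv_mul_cancel₀ hpos.ne']
  refine ⟨(bdist D z)⁻¹ • (z - q), hnorm, apply_smul_eq_re h.norm_eq_one.le hnorm.le ?_, ?_⟩
  · rw [map_smul, h.apply_sub_eq_dist hz hzq, hzq, smul_eq_mul, inv_mul_cancel₀ hpos.ne']
  · rw [smul_inv_smul₀ hpos.ne', add_sub_cancel]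

end IsInnerNormal

/-- The unit functional along which the defining function `ρ` decreases fastest at `q`. -/
noncomputable def innerNormal (ρ : E → ℝ) (q : E) : E →L[ℝ] ℝ :=
  -((‖fderiv ℝ ρ q‖)⁻¹ • fderiv ℝ ρ q)

namespace IsLocalDefiningFn

variable {D W : Set E} {ρ : E → ℝ} {ξ q : E}

theorem hasFDerivWithinAt (h : IsLocalDefiningFn D ξ W ρ) (hqW : q ∈ W) (s : Set E) :
    HasFDerivWithinAt ρ (fderiv ℝ ρ q) s q :=
  ((h.2.2.1.contDiffAt (h.1.mem_nhds hqW)).differentiableAt one_ne_zero).hasFDerivAt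
    |>.hasFDerivWithinAt

theorem fderiv_sub_nonpos (h : IsLocalDefiningFn D ξ W ρ) (hconv : Convex ℝ D)
    (hq : q ∈ frontier D ∩ W) {y : E} (hy : y ∈ D) : fderiv ℝ ρ q (y - q) ≤ 0 := by
  have hmax : IsLocalMaxOn ρ (closure D) q := by
    filter_upwards [self_mem_nhdsWithin, mem_nhdsWithin_of_mem_nhds (h.1.mem_nhds hq.2)]
      with x hx hxW
    rw [(h.2.2.2.2.2.subset hq).2]
    exact h.nonpos_of_mem_closure hx hxW
  exact hmax.hasFDerivWithinAt_nonpos (h.hasFDerivWithinAt hq.2 _)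
    (sub_mem_posTangentConeAt_of_segment_subset
      (hconv.closure.segment_subset (frontier_subset_closure hq.1) (subset_closure hy)))

theorem fderiv_sub_nonneg (h : IsLocalDefiningFn D ξ W ρ) (hD : IsOpen D)
    (hq : q ∈ frontier D ∩ W) {p : E} (hp : p ∉ D) (hpq : dist p q = bdist D p) :
    0 ≤ fderiv ℝ ρ q (p - q) := by
  have hmin : IsLocalMinOn ρ Dᶜ q := by
    filter_upwards [self_mem_nhdsWithin, mem_nhdsWithin_of_mem_nhds (h.1.mem_nhds hq.2)]
      with x hx hxW
    rw [(h.2.2.2.2.2.subset hq).2]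
    by_contra! hneg
    exact hx (h.2.2.2.2.1.symm.subset ⟨hxW, hneg⟩).1
  refine hmin.hasFDerivWithinAt_nonneg (h.hasFDerivWithinAt hq.2 _)
    (sub_mem_posTangentConeAt_of_segment_subset (Subset.trans ?_
      (closedBall_bdist_subset_compl hD hp)))
  exact (convex_closedBall p (bdist D p)).segment_subset (mem_closedBall'.mpr hpq.le)
    (mem_closedBall_self infDist_nonneg)

theorem isInnerNormal (h : IsLocalDefiningFn D ξ W ρ) (hconv : Convex ℝ D)
    (hq : q ∈ frontier D ∩ W) :
    IsInnerNormal D q (innerNormal ρ q) where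
  norm_eq_one := by
    rw [innerNormal, norm_neg, norm_smul, norm_inv, norm_norm,
      inv_mul_cancel₀ (norm_ne_zero_iff.mpr (h.2.2.2.1 q hq.2))]
  nonneg y hy := by
    rw [innerNormal, neg_apply, smul_apply, smul_eq_mul]
    exact neg_nonneg.mpr
      (mul_nonpos_of_nonneg_of_nonpos (by positivity) (h.fderiv_sub_nonpos hconv hq hy))

theorem innerNormal_sub_nonpos (h : IsLocalDefiningFn D ξ W ρ) (hD : IsOpen D)
    (hq : q ∈ frontier D ∩ W) {p : E} (hp : p ∉ D) (hpq : dist p q = bdist D p) :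
    innerNormal ρ q (p - q) ≤ 0 := by
  rw [innerNormal, neg_apply, smul_apply, smul_eq_mul]
  exact neg_nonpos.mpr (mul_nonneg (by positivity) (h.fderiv_sub_nonneg hD hq hp hpq))

end IsLocalDefiningFn

/-- At the boundary point `q` the functional `F` and the unit vector `n` are dual inner normals of
`D`, and the complement of `D` rises above the tangent hyperplane by no more than the Dini weight
`W` allows. -/
structure IsDiniNormal (D : Set E) (W : ℝ → ℝ) (r : ℝ) (q : E) (F : E →L[ℝ] ℝ) (n : E) :
    Prop where
  norm_le_one : ‖F‖ ≤ 1
  norm_eq_one : ‖n‖ = 1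
  apply_smul : ∀ c : ℂ, F (c • n) = c.re
  apply_sub_le : ∀ p ∉ D, dist p q < r → ∀ x ∈ Ioc 0 (r / 16),
    F (p - q) ≤ max (dist p q) x * W x * dist p q

section FiniteDimensional

variable [FiniteDimensional ℂ E] {D : Set E} {ξ : E}

theorem DiniSmoothBoundaryPoint.exists_isInnerNormal (h : DiniSmoothBoundaryPoint D ξ)
    (hD : IsOpen D) (hconv : Convex ℝ D) :
    ∃ ω, IsDiniModulus ω ∧ ∃ r > 0, ∀ q ∈ frontier D, dist q ξ < r →
      ∃ F, IsInnerNormal D q F ∧ ∀ p ∉ D, dist p q < r →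
        F (p - q) ≤ ω (2 * dist p q) * dist p q := by
  have : ProperSpace E := FiniteDimensional.proper ℂ E
  obtain ⟨W, ρ, ω, hρ, hω0, hωmono, hωint, hmod⟩ := h
  obtain ⟨r, hr, hrW⟩ := isOpen_iff.mp hρ.1 ξ hρ.2.1
  refine ⟨ω, ⟨hω0, hωmono, hωint⟩, min (r / 3) (1 / 2), by positivity, fun q hq hqξ => ?_⟩
  have hqr := hqξ.trans_le (min_le_left _ _)
  have hqW : q ∈ W := hrW (mem_ball.mpr (hqr.trans (by linarith)))
  refine ⟨_, hρ.isInnerNormal hconv ⟨hq, hqW⟩, fun p hp hpq => ?_⟩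
  have hpr := hpq.trans_le (min_le_left _ _)
  have hp1 := hpq.trans_le (min_le_right _ _)
  obtain ⟨q', hq', hpq'⟩ := isClosed_frontier.exists_infDist_eq_dist ⟨q, hq⟩ p
  have hle : dist p q' ≤ dist p q := hpq'.symm.trans_le (bdist_le_dist hq)
  have hqq' : dist q q' ≤ 2 * dist p q := by linarith [dist_triangle_left q q' p]
  have hq'W : q' ∈ W := hrW (mem_ball.mpr (by linarith [dist_triangle_left q' ξ q]))
  have hvar : ‖innerNormal ρ q - innerNormal ρ q'‖ ≤ ω (2 * dist p q) := by
    have hqq'1 : dist q q' ≤ 1 := by linarith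
    rw [innerNormal, innerNormal, neg_sub_neg, norm_sub_rev]
    refine (hmod q ⟨hq, hqW⟩ q' ⟨hq', hq'W⟩ (by rwa [← dist_eq_norm])).trans ?_
    rw [← dist_eq_norm]
    exact hωmono ⟨dist_nonneg, hqq'1⟩ ⟨by positivity, by linarith⟩ hqq'
  refine ((hρ.isInnerNormal hconv ⟨hq', hq'W⟩).apply_sub_le_norm_sub_mul_dist hq
    (hρ.innerNormal_sub_nonpos hD ⟨hq', hq'W⟩ hp hpq'.symm)).trans ?_
  gcongr

theorem DiniSmoothBoundaryPoint.exists_isDiniNormal (h : DiniSmoothBoundaryPoint D ξ)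
    (hD : IsOpen D) (hconv : Convex ℝ D) :
    ∃ ω W r, IsDiniWeight ω W r ∧ ∀ z ∈ D, ∀ q ∈ frontier D, dist q ξ < r → dist z q = bdist D z →
      ∃ F n, IsDiniNormal D W r q F n ∧ z = q + bdist D z • n := by
  obtain ⟨ω, hω, r₀, hr₀, hnormal⟩ := h.exists_isInnerNormal hD hconv
  obtain ⟨r, ⟨-, hrr₀⟩, W, hW⟩ := hω.exists_isDiniWeight hr₀
  refine ⟨ω, W, r, hW, fun z hz q hq hqξ hzq => ?_⟩
  obtain ⟨F, hF, hFout⟩ := hnormal q hq (hqξ.trans_le hrr₀)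
  obtain ⟨n, hn, hFn, hzn⟩ := hF.exists_eq_add_smul hz hzq (bdist_pos hD ⟨q, hq⟩ hz)
  refine ⟨F, n, ⟨hF.norm_eq_one.le, hn, hFn, fun p hp hpq x hx => ?_⟩, hzn⟩
  refine (hFout p hp (hpq.trans_le hrr₀)).trans ?_
  gcongr
  exact hW.apply_two_mul_le x hx _ ⟨dist_nonneg, hpq⟩

end FiniteDimensional

/-! ### Discs tangent to the boundary at a Dini-smooth point -/

theorem kobMetric_add_smul_le {D : Set E} {p n : E} {R x : ℝ} (hx : 0 < x) (hxR : x < 2 * R)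
    (hmem : ∀ c ∈ ball (R : ℂ) R, p + c • n ∈ D) :
    kobMetric D (p + x • n) n ≤ R / (x * (2 * R - x)) := by
  have hR : 0 < R := by linarith
  set f : ℂ → E := fun z => p + (R + R * z) • n
  set a : ℝ := x / R - 1
  have ha : |a| < 1 := abs_lt.mpr
    ⟨by simp only [a]; linarith [div_pos hx hR],
      by simp only [a]; linarith [(div_lt_iff₀ hR).mpr hxR]⟩
  have hderiv (z : ℂ) : HasDerivAt f ((R : ℂ) • n) z := by
    have := (((hasDerivAt_id z).const_mul (R : ℂ)).const_add (R : ℂ)).smul_const n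
    rw [mul_one] at this
    exact this.const_add p
  have hmaps : MapsTo f (ball 0 1) D := fun z hz => hmem _ <| by
    rw [mem_ball_zero_iff] at hz
    rw [mem_ball_iff_norm, add_sub_cancel_left, norm_mul, Complex.norm_real,
      Real.norm_of_nonneg hR.le]
    exact mul_lt_of_lt_one_right hR hz
  have h := kobMetric_le_div_one_sub_sq (a := a) (by rwa [Complex.norm_real])
    (fun z _ => (hderiv z).differentiableAt.differentiableWithinAt) hmaps ((R⁻¹ : ℝ) : ℂ)
  have hfa : f a = p + x • n := by
    have : (R : ℂ) + R * a = x := by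
      rw [← Complex.ofReal_mul, ← Complex.ofReal_add]
      congr 1
      simp only [a]
      field
    simp only [f, this, Complex.coe_smul]
  rw [(hderiv _).deriv, hfa, smul_smul, ← Complex.ofReal_mul, inv_mul_cancel₀ hR.ne',
    Complex.ofReal_one, one_smul, Complex.norm_real, Complex.norm_real, Real.norm_eq_abs,
    Real.norm_eq_abs, sq_abs, abs_of_pos (inv_pos.mpr hR)] at h
  refine h.trans_eq ?_
  have : 1 - a ^ 2 = x * (2 * R - x) / R ^ 2 := by simp only [a]; field
  rw [this]
  have : 0 < 2 * R - x := by linarith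
  field

theorem norm_sq_lt_of_mem_ball {c : ℂ} {R : ℝ} (hc : c ∈ ball (R : ℂ) R) :
    ‖c‖ ^ 2 < 2 * R * c.re := by
  rw [mem_ball_iff_norm] at hc
  have hsq := pow_lt_pow_left₀ hc (norm_nonneg _) two_ne_zero
  rw [Complex.sq_norm, Complex.normSq_apply] at hsq ⊢
  simp only [Complex.sub_re, Complex.sub_im, Complex.ofReal_re, Complex.ofReal_im] at hsq
  linarith

theorem max_norm_mul_lt_re {w x : ℝ} (hw : 0 < w) (hx : 0 < x) (hxw : x * w ≤ 1 / 8) {c : ℂ}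
    (hc : 2 * w * ‖c‖ ^ 2 < c.re) :
    max ‖((2 * x ^ 2 * w : ℝ) : ℂ) + c‖ x * w * ‖((2 * x ^ 2 * w : ℝ) : ℂ) + c‖
      < 2 * x ^ 2 * w + c.re := by
  set a := 2 * x ^ 2 * w with ha
  have ha0 : 0 < a := by positivity
  have hre : 0 < c.re := lt_of_le_of_lt (by positivity) hc
  rcases le_total x ‖(a : ℂ) + c‖ with hle | hle
  · have hnorm : ‖(a : ℂ) + c‖ ^ 2 ≤ 2 * (a ^ 2 + ‖c‖ ^ 2) := by
      have := norm_add_le (a : ℂ) c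
      rw [Complex.norm_real, Real.norm_of_nonneg ha0.le] at this
      exact (pow_le_pow_left₀ (norm_nonneg _) this 2).trans add_sq_le
    have hwa : 2 * w * a ≤ 1 := by
      calc 2 * w * a = 4 * (x * w) ^ 2 := by rw [ha]; ring
        _ ≤ 4 * (1 / 8) ^ 2 := by gcongr
        _ ≤ 1 := by norm_num
    calc max ‖(a : ℂ) + c‖ x * w * ‖(a : ℂ) + c‖ = w * ‖(a : ℂ) + c‖ ^ 2 := by
          rw [max_eq_left hle]; ring
      _ ≤ w * (2 * (a ^ 2 + ‖c‖ ^ 2)) := by gcongr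
      _ = 2 * w * a * a + 2 * w * ‖c‖ ^ 2 := by ring
      _ < 1 * a + c.re := add_lt_add_of_le_of_lt (by gcongr) hc
      _ = a + c.re := by rw [one_mul]
  · calc max ‖(a : ℂ) + c‖ x * w * ‖(a : ℂ) + c‖ ≤ x * w * x := by rw [max_eq_right hle]; gcongr
      _ = a / 2 := by rw [ha]; ring
      _ < a + c.re := by linarith

theorem div_mul_sub_le_inv_add {w x : ℝ} (hw : 0 < w) (hx : 0 < x) (hxw : x * w ≤ 1 / 8) :
    1 / (4 * w) / ((x - 2 * x ^ 2 * w) * (2 * (1 / (4 * w)) - (x - 2 * x ^ 2 * w)))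
      ≤ 1 / (2 * x) + 4 * w := by
  obtain ⟨u, rfl⟩ : ∃ u, w = u / x := ⟨x * w, by field⟩
  have hu : 0 < u := (div_pos_iff_of_pos_right hx).mp hw
  rw [mul_div_cancel₀ u hx.ne'] at hxw
  have hpos : 0 < 1 - 4 * u := by linarith
  calc 1 / (4 * (u / x))
        / ((x - 2 * x ^ 2 * (u / x)) * (2 * (1 / (4 * (u / x))) - (x - 2 * x ^ 2 * (u / x))))
      = 1 / (2 * x * ((1 - 2 * u) * (1 - 2 * u + 4 * u ^ 2))) := by
        have : 1 - 2 * u ≠ 0 := by linarith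
        have : 1 - 2 * u + 4 * u ^ 2 ≠ 0 := by nlinarith
        have hsub : x - 2 * x ^ 2 * (u / x) = x * (1 - 2 * u) := by field
        have hdiff : 2 * (1 / (4 * (u / x))) - x * (1 - 2 * u)
            = x * (1 - 2 * u + 4 * u ^ 2) / (2 * u) := by field
        rw [hsub, hdiff]
        field
    _ ≤ 1 / (2 * x * (1 - 4 * u)) := by
        gcongr
        nlinarith
    _ ≤ (1 + 8 * u) / (2 * x) := by
        rw [div_le_div_iff₀ (by positivity) (by positivity)]
        nlinarith [mul_pos hx hu, mul_nonneg (mul_pos hx hu).le (sub_nonneg.mpr hxw)]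
    _ = 1 / (2 * x) + 4 * (u / x) := by field

namespace IsDiniNormal

variable {D : Set E} {ω W : ℝ → ℝ} {r x : ℝ} {q n : E} {F : E →L[ℝ] ℝ}

theorem add_smul_mem (h : IsDiniNormal D W r q F n) (hW : IsDiniWeight ω W r)
    (hx : x ∈ Ioc 0 (r / 16)) {c : ℂ}
    (hc : c ∈ ball ((1 / (4 * W x) : ℝ) : ℂ) (1 / (4 * W x))) :
    q + (((2 * x ^ 2 * W x : ℝ) : ℂ) + c) • n ∈ D := by
  have hr := hW.pos_radius
  have hx0 := hx.1
  have hWx : 0 < W x := (inv_pos.mpr hr).trans_le (hW.inv_le x hx)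
  have hc2 : 2 * W x * ‖c‖ ^ 2 < c.re := by
    calc 2 * W x * ‖c‖ ^ 2 < 2 * W x * (2 * (1 / (4 * W x)) * c.re) := by
          gcongr; exact norm_sq_lt_of_mem_ball hc
      _ = c.re := by field
  have hlt := max_norm_mul_lt_re hWx hx0 (hW.mul_le x hx) hc2
  set c' := ((2 * x ^ 2 * W x : ℝ) : ℂ) + c with hc'
  have hdist : dist (q + c' • n) q = ‖c'‖ := by
    rw [dist_self_add_left, norm_smul, h.norm_eq_one, mul_one]
  have hnorm : ‖c'‖ < r := by
    have hcle : ‖c‖ ≤ r / 2 := by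
      have hinv : 1 / (4 * W x) ≤ r / 4 := by
        rw [div_le_div_iff₀ (by positivity) (by norm_num)]
        linarith [(inv_le_iff_one_le_mul₀' hr).mp (hW.inv_le x hx)]
      rw [mem_ball_iff_norm] at hc
      have := norm_le_norm_add_norm_sub' c ((1 / (4 * W x) : ℝ) : ℂ)
      rw [Complex.norm_real, Real.norm_of_nonneg (by positivity)] at this
      linarith
    have hale : 2 * x ^ 2 * W x ≤ r / 4 := by nlinarith [hW.mul_le x hx, hx.2]
    have := norm_add_le ((2 * x ^ 2 * W x : ℝ) : ℂ) c
    rw [Complex.norm_real, Real.norm_of_nonneg (by positivity)] at this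
    linarith
  by_contra hmem
  have hle := h.apply_sub_le _ hmem (by rwa [hdist]) x hx
  rw [hdist, add_sub_cancel_left, h.apply_smul, hc', Complex.add_re, Complex.ofReal_re] at hle
  exact hle.not_gt hlt

theorem kobMetric_le (h : IsDiniNormal D W r q F n) (hW : IsDiniWeight ω W r)
    (hx : x ∈ Ioc 0 (r / 16)) : kobMetric D (q + x • n) n ≤ 1 / (2 * x) + 4 * W x := by
  have hx0 := hx.1
  have hWx : 0 < W x := (inv_pos.mpr hW.pos_radius).trans_le (hW.inv_le x hx)
  have hxW := hW.mul_le x hx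
  set a := 2 * x ^ 2 * W x
  have ha0 : 0 < a := by positivity
  have hax : a < x := by nlinarith
  have hx2R : x < 2 * (1 / (4 * W x)) := by
    rw [mul_one_div, lt_div_iff₀ (by positivity)]; linarith
  have hk := kobMetric_add_smul_le (D := D) (p := q + a • n) (n := n) (sub_pos.mpr hax)
    (by linarith : x - a < 2 * (1 / (4 * W x))) fun c hc => by
      rw [add_assoc, ← Complex.coe_smul, ← add_smul]; exact h.add_smul_mem hW hx hc
  rw [add_assoc, ← add_smul, add_sub_cancel] at hk
  exact hk.trans (div_mul_sub_le_inv_add hWx hx0 hxW)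

theorem ball_subset (h : IsDiniNormal D W r q F n) (hW : IsDiniWeight ω W r)
    (hx : x ∈ Ioc 0 (r / 16)) : ball (q + x • n) (x / 4) ⊆ D := by
  intro p hp
  by_contra hpD
  have hx0 := hx.1
  have hsplit : p - q = (p - (q + x • n)) + x • n := by abel
  rw [mem_ball_iff_norm] at hp
  have hdist : dist p q ≤ 5 / 4 * x := by
    rw [dist_eq_norm, hsplit]
    refine (norm_add_le _ _).trans ?_
    rw [norm_smul, h.norm_eq_one, mul_one, Real.norm_of_nonneg hx0.le]
    linarith
  have hlower : 3 / 4 * x < F (p - q) := by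
    have hxn : F (x • n) = x := by simpa using h.apply_smul x
    have := (neg_le_abs _).trans (F.le_of_opNorm_le h.norm_le_one (p - (q + x • n)))
    rw [hsplit, map_add, hxn]
    linarith
  have hupper : F (p - q) ≤ 5 / 4 * x * W x * (5 / 4 * x) := by
    have hWx : 0 < W x := (inv_pos.mpr hW.pos_radius).trans_le (hW.inv_le x hx)
    refine (h.apply_sub_le p hpD (by linarith [hx.2]) x hx).trans ?_
    gcongr
    exact max_le hdist (by linarith)
  nlinarith [hW.mul_le x hx]

end IsDiniNormal

theorem IsDiniNormal.kobDist_le [FiniteDimensional ℂ E] {Ω D : Set E} {ω W : ℝ → ℝ} {r : ℝ}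
    {q n : E} {F : E →L[ℝ] ℝ} (h : IsDiniNormal D W r q F n) (hW : IsDiniWeight ω W r)
    (hΩ : IsOpen Ω) (hD : IsOpen D) (hDΩ : D ⊆ Ω) {a b : ℝ} (ha : 0 < a) (hab : a ≤ b)
    (hb : b ≤ r / 16) :
    kobDist Ω (q + a • n) (q + b • n) ≤ 1 / 2 * Real.log (b / a) + 1 / 2 := by
  have : CompleteSpace E := FiniteDimensional.complete ℂ E
  have hmem (t : ℝ) (ht : t ∈ Icc a b) : t ∈ Ioc 0 (r / 16) := ⟨ha.trans_le ht.1, ht.2.trans hb⟩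
  have hmemD (t : ℝ) (ht : t ∈ Icc a b) : q + t • n ∈ D :=
    h.ball_subset hW (hmem t ht) (mem_ball_self (by linarith [(hmem t ht).1]))
  have hcurve := isACCurveIn_add_smul hab fun t ht => hDΩ (hmemD t ht)
  have hinv : IntervalIntegrable (fun t : ℝ => 1 / 2 * t⁻¹) volume a b :=
    (intervalIntegral.intervalIntegrable_inv (fun t ht => by
      rw [uIcc_of_le hab] at ht; exact (hmem t ht).1.ne') continuousOn_id).const_mul _
  have hWint : IntervalIntegrable (fun t : ℝ => 4 * W t) volume a b := by
    refine (ContinuousOn.intervalIntegrable ?_).const_mul _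
    rw [uIcc_of_le hab]
    exact hW.continuousOn.mono hmem
  calc kobDist Ω (q + a • n) (q + b • n)
      ≤ kobLength Ω (fun t => q + t • n) (fun _ => n) a b := hcurve.kobDist_le
    _ ≤ ∫ t in a..b, (1 / 2 * t⁻¹ + 4 * W t) := by
        refine intervalIntegral.integral_mono_on hab (hcurve.intervalIntegrable_kobMetric hΩ)
          (hinv.add hWint) fun t ht => ?_
        refine (kobMetric_anti hD hDΩ (hmemD t ht) n).trans
          ((h.kobMetric_le hW (hmem t ht)).trans_eq ?_)
        rw [one_div, mul_inv, one_div]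
    _ = 1 / 2 * Real.log (b / a) + 4 * ∫ t in a..b, W t := by
        rw [intervalIntegral.integral_add hinv hWint, intervalIntegral.integral_const_mul,
          intervalIntegral.integral_const_mul, integral_inv_of_pos ha (ha.trans_le hab)]
    _ ≤ 1 / 2 * Real.log (b / a) + 1 / 2 := by linarith [hW.integral_le a b ha hab hb]

/-! ### The upper bound near a Dini-smooth convex boundary point -/

theorem ball_add_smul_sub_subset_of_convex {D : Set E} (hconv : Convex ℝ D) {z w : E} {r : ℝ}
    (hz : ball z r ⊆ D) (hw : ball w r ⊆ D) {t : ℝ} (ht : t ∈ Icc 0 1) :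
    ball (z + t • (w - z)) r ⊆ D := by
  intro p hp
  set e := p - (z + t • (w - z)) with he
  rw [mem_ball_iff_norm] at hp
  have hze : z + e ∈ D := hz (by rwa [mem_ball_iff_norm, add_sub_cancel_left])
  have hwe : w + e ∈ D := hw (by rwa [mem_ball_iff_norm, add_sub_cancel_left])
  have hp' : z + e + t • (w + e - (z + e)) = p := by rw [he]; module
  exact hp' ▸ hconv.add_smul_sub_mem hze hwe ht

section FiniteDimensional

variable [FiniteDimensional ℂ E]

theorem kobDist_le_dist_div_of_convex {Ω D : Set E} (hΩ : IsOpen Ω) (hDΩ : D ⊆ Ω)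
    (hconv : Convex ℝ D) {z w : E} {r : ℝ} (hr : 0 < r) (hz : ball z r ⊆ D) (hw : ball w r ⊆ D) :
    kobDist Ω z w ≤ dist z w / r := by
  have h := kobDist_add_smul_le_sub (x := z) (v := w - z) (Φ := fun t => dist z w / r * t) hΩ
    zero_le_one (fun t _ => (hasDerivAt_id t).const_mul (dist z w / r)) continuousOn_const
    fun t ht => ⟨r, hr, (ball_add_smul_sub_subset_of_convex hconv hz hw ht).trans hDΩ, by
      rw [mul_one, dist_eq_norm_sub']⟩
  simpa using h

theorem IsDiniNormal.exists_ball_subset_kobDist_le {Ω D : Set E} {ω W : ℝ → ℝ} {r : ℝ}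
    {q n : E} {F : E →L[ℝ] ℝ} (h : IsDiniNormal D W r q F n) (hW : IsDiniWeight ω W r)
    (hΩ : IsOpen Ω) (hD : IsOpen D) (hDΩ : D ⊆ Ω) {δ s : ℝ} (hδ : 0 < δ) (hδs : δ ≤ s)
    (hsr : s ≤ r / 32) :
    ∃ z', ball z' (s / 4) ⊆ D ∧ dist (q + δ • n) z' = s ∧
      kobDist Ω (q + δ • n) z'
        ≤ 1 / 2 * (Real.log 2 + Real.log s - Real.log δ) + 1 / 2 := by
  have hs : 0 < s := hδ.trans_le hδs
  refine ⟨q + (δ + s) • n, ?_, ?_, ?_⟩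
  · exact (ball_subset_ball (by linarith)).trans (h.ball_subset hW ⟨by linarith, by linarith⟩)
  · rw [dist_add_left, add_smul, dist_self_add_right, norm_smul, h.norm_eq_one, mul_one,
      Real.norm_of_nonneg hs.le]
  · have hlog : Real.log ((δ + s) / δ) ≤ Real.log 2 + Real.log s - Real.log δ := by
      rw [← Real.log_mul two_ne_zero hs.ne', ← Real.log_div (by positivity) hδ.ne']
      exact Real.log_le_log (by positivity) (by gcongr; linarith)
    have := h.kobDist_le hW hΩ hD hDΩ hδ (by linarith : δ ≤ δ + s) (by linarith)
    linarith

theorem DiniSmoothBoundaryPoint.exists_kobDist_le {Ω U : Set E} {ξ : E}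
    (hdini : DiniSmoothBoundaryPoint (Ω ∩ U) ξ) (hΩ : IsOpen Ω) (hc : IsPreconnected Ω)
    (hU : IsOpen U) (hξ : ξ ∈ frontier Ω) (hξU : ξ ∈ U) (hconv : Convex ℝ (Ω ∩ U)) :
    ∃ s₀ > 0, ∀ s, 0 < s → s ≤ s₀ → ∀ z ∈ Ω, ∀ w ∈ Ω, dist z ξ < s → dist w ξ < s →
      kobDist Ω z w ≤ Real.log s - 1 / 2 * Real.log (bdist (Ω ∩ U) z)
        - 1 / 2 * Real.log (bdist (Ω ∩ U) w) + (Real.log 2 + 17) := by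
  have : ProperSpace E := FiniteDimensional.proper ℂ E
  set D := Ω ∩ U
  have hD : IsOpen D := hΩ.inter hU
  have hDΩ : D ⊆ Ω := inter_subset_left
  have hξD : ξ ∈ frontier D := mem_frontier_inter hΩ hU hξ hξU
  obtain ⟨ω, W, r, hW, hnormal⟩ := hdini.exists_isDiniNormal hD hconv
  obtain ⟨r₀, hr₀, hrU⟩ := isOpen_iff.mp hU ξ hξU
  have hr := hW.pos_radius
  refine ⟨min r₀ (r / 32), by positivity, fun s hs hss₀ => ?_⟩
  obtain ⟨hsr₀, hsr⟩ := le_min_iff.mp hss₀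
  have hinward (z : E) (hz : z ∈ Ω) (hzs : dist z ξ < s) : ∃ z', ball z' (s / 4) ⊆ D ∧
      dist z z' = s ∧
      kobDist Ω z z' ≤ 1 / 2 * (Real.log 2 + Real.log s - Real.log (bdist D z)) + 1 / 2 := by
    have hzD : z ∈ D := ⟨hz, hrU (hzs.trans_le hsr₀)⟩
    have hδs : bdist D z < s := (bdist_le_dist hξD).trans_lt hzs
    obtain ⟨q, hq, hqz⟩ := isClosed_frontier.exists_infDist_eq_dist ⟨ξ, hξD⟩ z
    change bdist D z = dist z q at hqz
    have hqξ : dist q ξ < r := by linarith [dist_triangle_left q ξ z]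
    obtain ⟨F, n, hn, hzq⟩ := hnormal z hzD q hq hqξ hqz.symm
    have h := hn.exists_ball_subset_kobDist_le hW hΩ hD hDΩ (bdist_pos hD ⟨ξ, hξD⟩ hzD) hδs.le hsr
    rwa [← hzq] at h
  intro z hz w hw hzs hws
  obtain ⟨z', hz'D, hzz', hKz⟩ := hinward z hz hzs
  obtain ⟨w', hw'D, hww', hKw⟩ := hinward w hw hws
  have hdist : dist z' w' ≤ 4 * s := by
    linarith [dist_triangle4 z' z w w', dist_triangle_right z w ξ, dist_comm z' z]
  have hK : kobDist Ω z' w' ≤ 16 := by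
    refine (kobDist_le_dist_div_of_convex hΩ hDΩ hconv (by positivity) hz'D hw'D).trans ?_
    rw [div_le_iff₀ (by positivity)]
    linarith
  have hz' : z' ∈ Ω := hDΩ (hz'D (mem_ball_self (by positivity)))
  have hw' : w' ∈ Ω := hDΩ (hw'D (mem_ball_self (by positivity)))
  have hzw := kobDist_triangle hΩ hc hz hz' hw
  have hz'w := kobDist_triangle hΩ hc hz' hw' hw
  rw [kobDist_comm hΩ w' w] at hz'w
  linarith

/-! ### Boundary behaviour of rough isometric embeddings -/

theorem tendsto_gromovProd_atTop {Ω U : Set E} {ξ o : E} (hΩ : IsOpen Ω) (hc : IsPreconnected Ω)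
    (hb : Bornology.IsBounded Ω) (hU : IsOpen U) (hlog : LogTypeConvex (Ω ∩ U))
    (hC1 : HasC1Boundary (Ω ∩ U)) (hξ : ξ ∈ frontier Ω) (hξU : ξ ∈ U)
    (hdini : DiniSmoothBoundaryPoint (Ω ∩ U) ξ) (ho : o ∈ Ω) :
    Tendsto (fun p : E × E => gromovProd Ω o p.1 p.2) (𝓝[Ω] ξ ×ˢ 𝓝[Ω] ξ) atTop := by
  have hconv : Convex ℝ (Ω ∩ U) := by
    obtain ⟨_, _, _, _, _, h, _⟩ := hlog
    exact h
  obtain ⟨_, _, hmetric⟩ := hlog.logTypeCConvex.exists_logTypeMetric hC1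
  obtain ⟨_, _, hρ⟩ := hC1 ξ (mem_frontier_inter hΩ hU hξ hξU)
  obtain ⟨_, _, _, r, hrU, hvis⟩ := hmetric.exists_visibilityEstimates hΩ hc hb hU hξ hξU ho hρ
  obtain ⟨s₁, hs₁, H, hlower⟩ := hvis.exists_neg_half_log_sub_le_kobDist hb hU hrU hξ hconv
  obtain ⟨s₀, hs₀, hupper⟩ := hdini.exists_kobDist_le hΩ hc hU hξ hξU hconv
  refine tendsto_atTop.mpr fun M => ?_
  have hlogM : ∀ᶠ s in 𝓝[>] (0 : ℝ), Real.log s ≤ -(2 * M + 2 * H + (Real.log 2 + 17)) :=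
    Real.tendsto_log_nhdsGT_zero.eventually_le_atBot _
  obtain ⟨s, hlogs, hs, hss⟩ :=
    (hlogM.and (Ioc_mem_nhdsGT (lt_min hs₀ hs₁))).exists
  obtain ⟨hss₀, hss₁⟩ := le_min_iff.mp hss
  have hnear : ∀ᶠ x in 𝓝[Ω] ξ, x ∈ Ω ∧ dist x ξ < s :=
    inter_mem_nhdsWithin Ω (ball_mem_nhds ξ hs)
  filter_upwards [hnear.prod_mk hnear] with ⟨z, w⟩ ⟨⟨hz, hzs⟩, hw, hws⟩
  have hz_lower := hlower z hz (hzs.le.trans hss₁)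
  have hw_lower := hlower w hw (hws.le.trans hss₁)
  have hzw_upper := hupper s hs hss₀ z hz w hw hzs hws
  simp only [gromovProd, kobDist_comm hΩ o w]
  linarith

omit [FiniteDimensional ℂ E] in
theorem gromovProd_le_gromovProd_add {F : Type*} [NormedAddCommGroup F] [NormedSpace ℂ F]
    {Ω₁ : Set E} {Ω₂ : Set F} {f : E → F} {C : ℝ}
    (hiso : ∀ x ∈ Ω₁, ∀ y ∈ Ω₁, kobDist Ω₁ x y - C ≤ kobDist Ω₂ (f x) (f y) ∧
      kobDist Ω₂ (f x) (f y) ≤ kobDist Ω₁ x y + C) {o x y : E} (ho : o ∈ Ω₁) (hx : x ∈ Ω₁)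
    (hy : y ∈ Ω₁) :
    gromovProd Ω₁ o x y ≤ gromovProd Ω₂ (f o) (f x) (f y) + 3 / 2 * C := by
  simp only [gromovProd]
  linarith [(hiso x hx o ho).1, (hiso o ho y hy).1, (hiso x hx y hy).2]

theorem statement_1_general {F : Type*} [NormedAddCommGroup F] [NormedSpace ℂ F]
    [FiniteDimensional ℂ F] {Ω₁ U₁ : Set E} {Ω₂ U₂ : Set F}
    (hΩ₁ : IsOpen Ω₁) (hc₁ : IsPreconnected Ω₁) (hb₁ : Bornology.IsBounded Ω₁)
    (hΩ₂ : IsOpen Ω₂) (hc₂ : IsPreconnected Ω₂) (hb₂ : Bornology.IsBounded Ω₂)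
    (hU₁ : IsOpen U₁) (hU₂ : IsOpen U₂)
    (hlog₁ : LogTypeConvex (Ω₁ ∩ U₁)) (hC1₁ : HasC1Boundary (Ω₁ ∩ U₁))
    (hlog₂ : LogTypeCConvex (Ω₂ ∩ U₂)) (hC1₂ : HasC1Boundary (Ω₂ ∩ U₂))
    {f : E → F} (hmap : MapsTo f Ω₁ Ω₂) {C : ℝ}
    (hiso : ∀ x ∈ Ω₁, ∀ y ∈ Ω₁, kobDist Ω₁ x y - C ≤ kobDist Ω₂ (f x) (f y) ∧
      kobDist Ω₂ (f x) (f y) ≤ kobDist Ω₁ x y + C)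
    {ξ : E} {ζ : F} (hξ : ξ ∈ frontier Ω₁ ∩ U₁) (hdini : DiniSmoothBoundaryPoint (Ω₁ ∩ U₁) ξ)
    (hζ : ζ ∈ frontier Ω₂ ∩ U₂) (hcluster : MapClusterPt ζ (𝓝[Ω₁] ξ) f) :
    Tendsto f (𝓝[Ω₁] ξ) (𝓝 ζ) := by
  obtain ⟨o, hoU⟩ := hlog₁.choose_spec.choose_spec.2.1
  have ho : o ∈ Ω₁ := hoU.1
  obtain ⟨_, _, hmetric⟩ := hlog₂.exists_logTypeMetric hC1₂
  obtain ⟨_, _, hρ⟩ := hC1₂ ζ (mem_frontier_inter hΩ₂ hU₂ hζ.1 hζ.2)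
  obtain ⟨_, _, _, r, -, hvis⟩ :=
    hmetric.exists_visibilityEstimates hΩ₂ hc₂ hb₂ hU₂ hζ.1 hζ.2 (hmap ho) hρ
  have hr := hvis.pos_radius
  refine Metric.tendsto_nhds.mpr fun ε hε => ?_
  obtain ⟨ε', hε', hε'ε, hε'r⟩ : ∃ ε' > 0, ε' ≤ ε ∧ ε' ≤ r := ⟨min ε r, by positivity, by simp⟩
  obtain ⟨H, hH⟩ := hvis.exists_forall_gromovProd_le (half_lt_self hε') hε'r
  have hlarge : ∀ᶠ p in 𝓝[Ω₁] ξ ×ˢ 𝓝[Ω₁] ξ, H + 3 / 2 * C < gromovProd Ω₁ o p.1 p.2 :=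
    (tendsto_gromovProd_atTop hΩ₁ hc₁ hb₁ hU₁ hlog₁ hC1₁ hξ.1 hξ.2 hdini ho).eventually_gt_atTop _
  have hnear : ∃ᶠ z in 𝓝[Ω₁] ξ, f z ∈ ball ζ (ε' / 2) :=
    hcluster.frequently (ball_mem_nhds ζ (half_pos hε'))
  obtain ⟨z, hfz, hz, hzlarge⟩ :=
    (hnear.and_eventually (eventually_mem_nhdsWithin.and hlarge.curry)).exists
  filter_upwards [hzlarge, self_mem_nhdsWithin] with w hzw hw
  by_contra! hfw
  have hbound := hH (f z) (hmap hz) (f w) (hmap hw) (mem_ball.mp hfz).le (hε'ε.trans hfw)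
  linarith [gromovProd_le_gromovProd_add hiso ho hz hw]

end FiniteDimensional

end NormedSpace

theorem statement_1 {n : ℕ} (hn : 2 ≤ n)
    (Ω₁ Ω₂ U₁ U₂ : Set (EuclideanSpace ℂ (Fin n)))
    (hΩ₁o : IsOpen Ω₁) (hΩ₁c : IsConnected Ω₁) (hΩ₁b : Bornology.IsBounded Ω₁)
    (hΩ₂o : IsOpen Ω₂) (hΩ₂c : IsConnected Ω₂) (hΩ₂b : Bornology.IsBounded Ω₂)
    (hU₁ : IsOpen U₁) (hU₂ : IsOpen U₂)
    (hfr₁ : (U₁ ∩ frontier Ω₁).Nonempty) (hfr₂ : (U₂ ∩ frontier Ω₂).Nonempty)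
    (hlog₁ : LogTypeConvex (Ω₁ ∩ U₁))
    (hdini₁ : ∀ x ∈ frontier (Ω₁ ∩ U₁), DiniSmoothBoundaryPoint (Ω₁ ∩ U₁) x)
    (hlog₂ : LogTypeCConvex (Ω₂ ∩ U₂))
    (hdini₂ : ∀ x ∈ frontier (Ω₂ ∩ U₂), DiniSmoothBoundaryPoint (Ω₂ ∩ U₂) x)
    (f : EuclideanSpace ℂ (Fin n) → EuclideanSpace ℂ (Fin n)) (hmap : MapsTo f Ω₁ Ω₂)
    (hiso : ∃ C : ℝ, 0 < C ∧ ∀ x ∈ Ω₁, ∀ y ∈ Ω₁,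
      kobDist Ω₁ x y - C ≤ kobDist Ω₂ (f x) (f y) ∧
      kobDist Ω₂ (f x) (f y) ≤ kobDist Ω₁ x y + C)
    (ξ ζ : EuclideanSpace ℂ (Fin n)) (hξ : ξ ∈ frontier Ω₁ ∩ U₁) (hζ : ζ ∈ frontier Ω₂ ∩ U₂)
    (hcluster : ∃ z : ℕ → EuclideanSpace ℂ (Fin n), (∀ k, z k ∈ Ω₁) ∧
      Tendsto z atTop (𝓝 ξ) ∧ Tendsto (fun k => f (z k)) atTop (𝓝 ζ)) :
    Tendsto f (𝓝[Ω₁] ξ) (𝓝 ζ) := by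
  obtain ⟨_, _, hiso⟩ := hiso
  obtain ⟨z, hz, hzξ, hfz⟩ := hcluster
  have hcluster : MapClusterPt ζ (𝓝[Ω₁] ξ) f :=
    hfz.mapClusterPt.of_comp
      (tendsto_nhdsWithin_iff.mpr ⟨hzξ, .of_forall hz⟩)
  exact statement_1_general hΩ₁o hΩ₁c.isPreconnected hΩ₁b hΩ₂o hΩ₂c.isPreconnected hΩ₂b hU₁ hU₂
    hlog₁ (.of_diniSmoothBoundaryPoint hdini₁) hlog₂ (.of_diniSmoothBoundaryPoint hdini₂) hmap hiso
    hξ (hdini₁ ξ (mem_frontier_inter hΩ₁o hU₁ hξ.1 hξ.2)) hζ hcluster
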